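/- arXiv:2512.00584 — 2 statements merged into one kernel-verified Lean document; each statement's English description precedes it below -/
import Mathlib

section
/- If a graph (1-dimensional simplicial complex) Γ on vertex set {0,…,n} is Gröbner smoothable over some field K, then Γ is a tree. -/
open MvPolynomial

/-- The leading exponent (multidegree) of a multivariate polynomial with respect to a
monomial order: the maximum of its support. (It is `0` for the zero polynomial.) -/
noncomputable def MonomialOrder.mdeg {σ : Type*} (m : MonomialOrder σ) {R : Type*}
    [CommSemiring R] (f : MvPolynomial σ R) : σ →₀ ℕ :=
  m.toSyn.symm (f.support.sup fun e => m.toSyn e)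

/-- The initial ideal of an ideal `I` with respect to a monomial order. -/
noncomputable def initialIdeal {σ : Type*} {K : Type*} [Field K] (m : MonomialOrder σ)
    (I : Ideal (MvPolynomial σ K)) : Ideal (MvPolynomial σ K) :=
  Ideal.span {g | ∃ f ∈ I, f ≠ 0 ∧ g = monomial (m.mdeg f) (1 : K)}

/-- An ideal is homogeneous (w.r.t. the standard grading) iff it contains all homogeneous
components of its elements. -/
def IsHomog {σ : Type*} {K : Type*} [Field K] (I : Ideal (MvPolynomial σ K)) : Prop :=
  ∀ f ∈ I, ∀ d : ℕ, homogeneousComponent d f ∈ I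

/-- An abstract simplicial complex on the vertex set `{0, …, n}`. -/
structure SComplex (n : ℕ) where
  faces : Set (Finset (Fin (n + 1)))
  down_closed : ∀ {s t : Finset (Fin (n + 1))}, s ∈ faces → t ⊆ s → t ∈ faces

/-- A simplicial complex is 1-dimensional (a graph) if all faces have at most 2 vertices and
some face has exactly 2 vertices. -/
def SComplex.IsGraph {n : ℕ} (Δ : SComplex n) : Prop :=
  (∀ s ∈ Δ.faces, s.card ≤ 2) ∧ ∃ s ∈ Δ.faces, s.card = 2

/-- The Stanley–Reisner ideal of a simplicial complex. -/
noncomputable def SComplex.srIdeal {n : ℕ} (K : Type*) [Field K] (Δ : SComplex n) :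
    Ideal (MvPolynomial (Fin (n + 1)) K) :=
  Ideal.span {g | ∃ s : Finset (Fin (n + 1)), s ∉ Δ.faces ∧ g = ∏ i ∈ s, X i}

/-- The simple graph underlying a 1-dimensional simplicial complex. -/
def SComplex.graph {n : ℕ} (Δ : SComplex n) : SimpleGraph (Fin (n + 1)) :=
  SimpleGraph.fromRel fun i j => ({i, j} : Finset (Fin (n + 1))) ∈ Δ.faces

/-- The (vector representatives of the) points of the projective variety `V(I) ⊆ ℙⁿ`. -/
def projZeros {n : ℕ} {K : Type*} [Field K] (I : Ideal (MvPolynomial (Fin (n + 1)) K)) :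
    Set (Fin (n + 1) → K) :=
  {x | x ≠ 0 ∧ ∀ f ∈ I, eval x f = 0}

/-- The rank at the point `x` of the Jacobian matrix of the ideal `I`. -/
noncomputable def jacobianRank {n : ℕ} {K : Type*} [Field K]
    (I : Ideal (MvPolynomial (Fin (n + 1)) K)) (x : Fin (n + 1) → K) : ℕ :=
  Module.finrank K
    (Submodule.span K {v : Fin (n + 1) → K | ∃ f ∈ I, v = fun i => eval x (pderiv i f)})

/-- The projective variety `V(I)` is connected. -/
def IsConnectedProjVariety {n : ℕ} {K : Type*} [Field K]
    (I : Ideal (MvPolynomial (Fin (n + 1)) K)) : Prop :=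
  (projZeros I).Nonempty ∧
    ∀ J₁ J₂ : Ideal (MvPolynomial (Fin (n + 1)) K), IsHomog J₁ → IsHomog J₂ →
      projZeros I ⊆ projZeros J₁ ∪ projZeros J₂ →
      projZeros I ∩ (projZeros J₁ ∩ projZeros J₂) = ∅ →
      projZeros I ⊆ projZeros J₁ ∨ projZeros I ⊆ projZeros J₂

/-- A graph `Γ` on `{0, …, n}` is Gröbner smoothable over `K` if there are a homogeneous ideal
`J ⊆ K[X_0,…,X_n]` and a monomial order `<` with `in_<(J) = I_Γ` such that `V(J) ⊆ ℙⁿ` is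
connected and smooth over `K` (every point of `V(J)` over the algebraic closure of `K` is a
nonsingular point, via the Jacobian criterion for a curve). -/
def GroebnerSmoothable (K : Type*) [Field K] {n : ℕ} (Γ : SComplex n) : Prop :=
  ∃ J : Ideal (MvPolynomial (Fin (n + 1)) K), IsHomog J ∧
    ∃ m : MonomialOrder.{0, 0} (Fin (n + 1)), initialIdeal m J = Γ.srIdeal K ∧
      IsConnectedProjVariety (J.map (MvPolynomial.map (algebraMap K (AlgebraicClosure K)))) ∧
      ∀ x ∈ projZeros (J.map (MvPolynomial.map (algebraMap K (AlgebraicClosure K)))),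
        jacobianRank (J.map (MvPolynomial.map (algebraMap K (AlgebraicClosure K)))) x = n - 1



theorem gordan_aux {ι : Type*} (s : Finset ι) :
    ∀ {W : Type} [AddCommGroup W] [Module ℚ W] (d : ι → W)
      (_ : ∀ c : ι → ℚ, (∀ i ∈ s, 0 ≤ c i) → ∑ i ∈ s, c i • d i = 0 → ∀ i ∈ s, c i = 0),
      ∃ φ : W →ₗ[ℚ] ℚ, ∀ i ∈ s, 0 < φ (d i) := by
  classical
  induction s using Finset.induction_on with
  | empty => intro W _ _ d h; exact ⟨0, by simp⟩
  | insert a s ha ih =>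
    intro W _ _ d h
    by_cases hq : ∀ c : ι → ℚ, (∀ i ∈ s, 0 ≤ c i) →
        ∑ i ∈ s, c i • (Submodule.mkQ (Submodule.span ℚ {d a}) (d i)) = 0 → ∀ i ∈ s, c i = 0
    · obtain ⟨φ, hφ⟩ := ih (fun i => Submodule.mkQ (Submodule.span ℚ {d a}) (d i)) hq
      have hda : d a ≠ 0 := by
        intro h0
        have := h (fun i => if i = a then 1 else 0) (by intro i _; split_ifs <;> norm_num)
          (by
            rw [Finset.sum_insert ha]
            rw [Finset.sum_eq_zero]
            · simp [h0]
            · intro i hi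
              have : i ≠ a := by rintro rfl; exact ha hi
              simp [this]) a (Finset.mem_insert_self _ _)
        simp at this
      obtain ⟨ψ, hψ⟩ : ∃ ψ : W →ₗ[ℚ] ℚ, ψ (d a) ≠ 0 := by
        by_contra hcon
        push Not at hcon
        exact hda ((Module.forall_dual_apply_eq_zero_iff ℚ (d a)).1 hcon)
      obtain ⟨ψ, hψ⟩ : ∃ ψ : W →ₗ[ℚ] ℚ, 0 < ψ (d a) := by
        rcases lt_or_gt_of_ne hψ with h1 | h1
        · exact ⟨-ψ, by simpa using h1⟩
        · exact ⟨ψ, h1⟩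
      -- choose N large
      obtain ⟨N, hN⟩ : ∃ N : ℚ, ∀ i ∈ s, - ψ (d i) < N * φ (Submodule.mkQ _ (d i)) := by
        refine ⟨∑ i ∈ s, (|ψ (d i)| + 1) / φ (Submodule.mkQ _ (d i)), fun i hi => ?_⟩
        have h1 : (|ψ (d i)| + 1) / φ (Submodule.mkQ _ (d i)) ≤
            ∑ i ∈ s, (|ψ (d i)| + 1) / φ (Submodule.mkQ _ (d i)) :=
          Finset.single_le_sum (f := fun i => (|ψ (d i)| + 1) / φ (Submodule.mkQ _ (d i)))
            (fun j hj => by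
              have := hφ j hj
              positivity) hi
        have h2 := hφ i hi
        rw [div_le_iff₀ h2] at h1
        have := neg_abs_le (ψ (d i))
        linarith
      refine ⟨ψ + N • (φ ∘ₗ Submodule.mkQ _), fun i hi => ?_⟩
      rcases Finset.mem_insert.1 hi with rfl | hi
      · have : (Submodule.span ℚ {d i}).mkQ (d i) = 0 := by
          rw [Submodule.mkQ_apply, Submodule.Quotient.mk_eq_zero]
          exact Submodule.mem_span_singleton_self _
        simp only [LinearMap.add_apply, LinearMap.smul_apply, LinearMap.comp_apply, this]
        simpa using hψ
      · simp only [LinearMap.add_apply, LinearMap.smul_apply, LinearMap.comp_apply, smul_eq_mul]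
        linarith [hN i hi]
    · push Not at hq
      obtain ⟨c, hc0, hc, i0, hi0, hne⟩ := hq
      have hsp : ∑ i ∈ s, c i • d i ∈ Submodule.span ℚ {d a} := by
        rw [← Submodule.Quotient.mk_eq_zero, ← Submodule.mkQ_apply]
        simpa using hc
      obtain ⟨t, ht⟩ := Submodule.mem_span_singleton.1 hsp
      have ht0 : 0 < t := by
        by_contra hcon
        have := h (fun i => if i = a then -t else c i)
          (by
            intro i hi
            split_ifs with h1
            · linarith
            · exact hc0 i ((Finset.mem_insert.1 hi).resolve_left h1))
          (by
            rw [Finset.sum_insert ha]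
            rw [Finset.sum_congr rfl (g := fun i => c i • d i)]
            · rw [← ht]; simp
            · intro i hi
              have : i ≠ a := by rintro rfl; exact ha hi
              simp [this]) i0 (Finset.mem_insert_of_mem hi0)
        have h2 : i0 ≠ a := by rintro rfl; exact ha hi0
        simp [h2] at this
        exact hne this
      obtain ⟨φ, hφ⟩ := ih d (fun c' hc' hs => by
        intro i hi
        have := h (fun i => if i = a then 0 else c' i)
          (by
            intro i hi
            split_ifs with h1
            · exact le_rfl
            · exact hc' i ((Finset.mem_insert.1 hi).resolve_left h1))
          (by
            rw [Finset.sum_insert ha]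
            rw [Finset.sum_congr rfl (g := fun i => c' i • d i)]
            · rw [hs]; simp
            · intro i hi
              have : i ≠ a := by rintro rfl; exact ha hi
              simp [this]) i (Finset.mem_insert_of_mem hi)
        have h2 : i ≠ a := by rintro rfl; exact ha hi
        simpa [h2] using this)
      refine ⟨φ, fun i hi => ?_⟩
      rcases Finset.mem_insert.1 hi with rfl | hi
      · have h1 : φ (t • d i) = ∑ x ∈ s, c x * φ (d x) := by rw [ht]; simp
        rw [map_smul, smul_eq_mul] at h1
        have h2 : 0 < ∑ x ∈ s, c x * φ (d x) :=
          Finset.sum_pos' (fun x hx => mul_nonneg (hc0 x hx) (hφ x hx).le)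
            ⟨i0, hi0, mul_pos (lt_of_le_of_ne (hc0 i0 hi0) (Ne.symm hne)) (hφ i0 hi0)⟩
        rw [← h1] at h2
        exact pos_of_mul_pos_right h2 ht0.le |> fun h => h
      · exact hφ i hi

/-- A finite set of strict inequalities of a monomial order is realised by a weight. -/
theorem exists_weight {N : ℕ} (m : MonomialOrder.{0, 0} (Fin N))
    (D : Finset ((Fin N →₀ ℕ) × (Fin N →₀ ℕ)))
    (hD : ∀ p ∈ D, m.toSyn p.1 < m.toSyn p.2) :
    ∃ w : Fin N → ℕ, ∀ p ∈ D, Finsupp.weight w p.1 < Finsupp.weight w p.2 := by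
  classical
  let D' := D ∪ Finset.univ.image (fun i : Fin N => ((0 : Fin N →₀ ℕ), Finsupp.single i 1))
  have hD' : ∀ p ∈ D', m.toSyn p.1 < m.toSyn p.2 := by
    intro p hp
    rcases Finset.mem_union.1 hp with hp | hp
    · exact hD p hp
    · obtain ⟨i, -, rfl⟩ := Finset.mem_image.1 hp
      change m.toSyn 0 < m.toSyn (Finsupp.single i 1)
      rw [map_zero, m.toSyn_lt_iff_ne_zero]
      simp
  let cast : (Fin N →₀ ℕ) → (Fin N → ℚ) := fun b i => (b i : ℚ)
  obtain ⟨φ, hφ⟩ := gordan_aux D' (fun p => cast p.2 - cast p.1) (by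
    intro c hc0 hc
    by_contra hcon
    push Not at hcon
    obtain ⟨p0, hp0, hne⟩ := hcon
    -- clear denominators
    let M : ℕ := ∏ p ∈ D', (c p).den
    have hM : M ≠ 0 := Finset.prod_ne_zero_iff.2 fun p _ => (c p).den_nz
    have hk : ∀ p ∈ D', ∃ k : ℕ, (k : ℚ) = M * c p := by
      intro p hp
      obtain ⟨q, hq⟩ : (c p).den ∣ M := Finset.dvd_prod_of_mem (fun p => (c p).den) hp
      refine ⟨q * (c p).num.toNat, ?_⟩
      have h1 : (((c p).num.toNat : ℤ) : ℚ) = (c p).num := by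
        rw [Int.toNat_of_nonneg (Rat.num_nonneg.2 (hc0 p hp))]
      rw [hq]
      push_cast
      push_cast at h1
      rw [h1]
      have h2 : c p * (c p).den = (c p).num := Rat.mul_den_eq_num (c p)
      rw [← h2]; ring
    choose! k hk using hk
    have hsum : ∑ p ∈ D', k p • p.2 = ∑ p ∈ D', k p • p.1 := by
      ext i
      have h1 := congrFun hc i
      simp only [Finset.sum_apply, Pi.smul_apply, Pi.sub_apply, cast, smul_eq_mul,
        Pi.zero_apply] at h1
      have h2 : ∑ p ∈ D', (k p : ℚ) * ((p.2 i : ℚ) - p.1 i) = 0 := by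
        rw [Finset.sum_congr rfl (g := fun p => (M : ℚ) * (c p * ((p.2 i : ℚ) - p.1 i)))]
        · rw [← Finset.mul_sum, h1, mul_zero]
        · intro p hp; rw [hk p hp]; ring
      simp only [mul_sub, Finset.sum_sub_distrib, sub_eq_zero] at h2
      simp only [Finsupp.coe_finsetSum, Finset.sum_apply, Finsupp.coe_smul, Pi.smul_apply,
        smul_eq_mul]
      exact_mod_cast h2
    have hlt : m.toSyn (∑ p ∈ D', k p • p.1) < m.toSyn (∑ p ∈ D', k p • p.2) := by
      rw [map_sum, map_sum]
      apply Finset.sum_lt_sum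
      · intro p hp
        rw [map_nsmul, map_nsmul]
        exact nsmul_le_nsmul_right (hD' p hp).le _
      · refine ⟨p0, hp0, ?_⟩
        rw [map_nsmul, map_nsmul]
        have : k p0 ≠ 0 := by
          intro h0
          have := hk p0 hp0
          rw [h0] at this
          have hM' : (M : ℚ) ≠ 0 := by exact_mod_cast hM
          simp [hM'] at this
          exact hne this
        exact nsmul_lt_nsmul_right this (hD' p0 hp0)
    rw [hsum] at hlt
    exact lt_irrefl _ hlt)
  have hpos : ∀ i, 0 < φ (Pi.single i 1) := by
    intro i
    have := hφ (0, Finsupp.single i 1) (Finset.mem_union_right _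
      (Finset.mem_image_of_mem _ (Finset.mem_univ i)))
    have h2 : cast (Finsupp.single i 1) - cast 0 = Pi.single i 1 := by
      ext l
      by_cases h : l = i
      · subst h; simp [cast]
      · simp [cast, h, Finsupp.single_apply, Ne.symm h]
    rwa [h2] at this
  let M : ℕ := ∏ i : Fin N, (φ (Pi.single i 1)).den
  have hM : M ≠ 0 := Finset.prod_ne_zero_iff.2 fun p _ => (φ (Pi.single p 1)).den_nz
  have hk : ∀ i, ∃ k : ℕ, (k : ℚ) = M * φ (Pi.single i 1) := by
    intro i
    obtain ⟨q, hq⟩ : (φ (Pi.single i 1)).den ∣ M :=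
      Finset.dvd_prod_of_mem (fun i => (φ (Pi.single i 1)).den) (Finset.mem_univ i)
    refine ⟨q * (φ (Pi.single i 1)).num.toNat, ?_⟩
    have h1 : (((φ (Pi.single i 1)).num.toNat : ℤ) : ℚ) = (φ (Pi.single i 1)).num := by
      rw [Int.toNat_of_nonneg (Rat.num_nonneg.2 (hpos i).le)]
    rw [hq]
    push_cast
    push_cast at h1
    rw [h1]
    have h2 := Rat.mul_den_eq_num (φ (Pi.single i 1))
    rw [← h2]; ring
  choose w hw using hk
  have hcast : ∀ b : Fin N →₀ ℕ, ((Finsupp.weight w b : ℕ) : ℚ) = M * φ (cast b) := by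
    intro b
    have h1 : cast b = ∑ i, (b i : ℚ) • Pi.single (M := fun _ => ℚ) i 1 := by
      ext l
      simp [cast, Finset.sum_apply, Pi.single_apply]
    rw [h1, map_sum, Finset.mul_sum, Finsupp.weight_apply, Finsupp.sum_fintype _ _ (by simp)]
    push_cast
    refine Finset.sum_congr rfl fun i _ => ?_
    rw [smul_eq_mul, Nat.cast_mul, hw i, map_smul, smul_eq_mul]; ring
  refine ⟨w, fun p hp => ?_⟩
  have h1 := hφ p (Finset.mem_union_left _ hp)
  rw [map_sub, sub_pos] at h1
  have hM' : (0 : ℚ) < M := by exact_mod_cast Nat.pos_of_ne_zero hM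
  have h2 : ((Finsupp.weight w p.1 : ℕ) : ℚ) < (Finsupp.weight w p.2 : ℕ) := by
    rw [hcast, hcast]
    exact mul_lt_mul_of_pos_left h1 hM'
  exact_mod_cast h2


noncomputable def indF {n : ℕ} (s : Finset (Fin (n+1))) : Fin (n+1) →₀ ℕ :=
  ∑ i ∈ s, Finsupp.single i 1

theorem indF_apply {n : ℕ} (s : Finset (Fin (n+1))) (i : Fin (n+1)) :
    indF s i = if i ∈ s then 1 else 0 := by
  classical
  simp [indF, Finsupp.finsetSum_apply, Finsupp.single_apply]

theorem prod_X_eq {n : ℕ} {K : Type*} [Field K] (s : Finset (Fin (n+1))) :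
    (∏ i ∈ s, X i : MvPolynomial (Fin (n+1)) K) = monomial (indF s) 1 := by
  classical
  simp only [indF]
  induction s using Finset.induction_on with
  | empty => simp
  | insert a s ha ih =>
    rw [Finset.prod_insert ha, Finset.sum_insert ha, ih, X, monomial_mul, mul_one]

theorem indF_le_iff {n : ℕ} (s : Finset (Fin (n+1))) (b : Fin (n+1) →₀ ℕ) :
    indF s ≤ b ↔ s ⊆ b.support := by
  constructor
  · intro h i hi
    have := h i
    rw [indF_apply, if_pos hi] at this
    rw [Finsupp.mem_support_iff]; omega
  · intro h i
    rw [indF_apply]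
    split_ifs with hi
    · have := Finsupp.mem_support_iff.1 (h hi); omega
    · exact Nat.zero_le _

theorem indF_support {n : ℕ} (s : Finset (Fin (n+1))) : (indF s).support = s := by
  ext i
  rw [Finsupp.mem_support_iff, indF_apply]
  split_ifs with h <;> simp [h]

theorem indF_degree {n : ℕ} (s : Finset (Fin (n+1))) : (indF s).degree = s.card := by
  simp [indF, map_sum]

section grob
variable {n : ℕ} {K : Type*} [Field K] {Γ : SComplex n} {m : MonomialOrder.{0, 0} (Fin (n+1))}
  {J : Ideal (MvPolynomial (Fin (n+1)) K)}

theorem srIdeal_eq : Γ.srIdeal K =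
    Ideal.span ((fun b => monomial b (1:K)) '' (indF '' {s | s ∉ Γ.faces})) := by
  unfold SComplex.srIdeal
  congr 1
  ext g
  constructor
  · rintro ⟨s, hs, rfl⟩
    exact ⟨_, ⟨s, hs, rfl⟩, (prod_X_eq s).symm⟩
  · rintro ⟨_, ⟨s, hs, rfl⟩, rfl⟩
    exact ⟨s, hs, (prod_X_eq s).symm⟩

theorem initialIdeal_eq : initialIdeal m J =
    Ideal.span ((fun b => monomial b (1:K)) '' (m.degree '' {f | f ∈ J ∧ f ≠ 0})) := by
  unfold initialIdeal
  congr 1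
  ext g
  constructor
  · rintro ⟨f, hf, hf0, rfl⟩
    exact ⟨_, ⟨f, ⟨hf, hf0⟩, rfl⟩, rfl⟩
  · rintro ⟨_, ⟨f, ⟨hf, hf0⟩, rfl⟩, rfl⟩
    exact ⟨f, hf, hf0, rfl⟩

theorem lead_nonstd (hin : initialIdeal m J = Γ.srIdeal K) {f : MvPolynomial (Fin (n+1)) K}
    (hf : f ∈ J) (hf0 : f ≠ 0) : (m.degree f).support ∉ Γ.faces := by
  have h1 : monomial (m.degree f) (1:K) ∈ Γ.srIdeal K := by
    rw [← hin, initialIdeal_eq]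
    exact Ideal.subset_span ⟨_, ⟨f, ⟨hf, hf0⟩, rfl⟩, rfl⟩
  rw [srIdeal_eq, mem_ideal_span_monomial_image] at h1
  obtain ⟨_, ⟨s, hs, rfl⟩, hle⟩ := h1 (m.degree f) (by simp [MvPolynomial.mem_support_iff])
  rw [indF_le_iff] at hle
  exact fun h => hs (Γ.down_closed h hle)

theorem exists_gb (hin : initialIdeal m J = Γ.srIdeal K) (hhom : IsHomog J)
    (s : Finset (Fin (n+1))) (hs : s ∉ Γ.faces) :
    ∃ f ∈ J, f.IsHomogeneous s.card ∧ coeff (indF s) f = 1 ∧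
      ∀ e ∈ f.support, e ≠ indF s → m.toSyn e < m.toSyn (indF s) := by
  have h1 : monomial (indF s) (1:K) ∈ initialIdeal m J := by
    rw [hin, srIdeal_eq]
    exact Ideal.subset_span ⟨_, ⟨s, hs, rfl⟩, rfl⟩
  rw [initialIdeal_eq, mem_ideal_span_monomial_image] at h1
  obtain ⟨_, ⟨f, ⟨hf, hf0⟩, rfl⟩, hle⟩ := h1 (indF s) (by simp [MvPolynomial.mem_support_iff])
  have hlc : m.leadingCoeff f ≠ 0 := m.leadingCoeff_ne_zero_iff.2 hf0
  set F := monomial (indF s - m.degree f) (m.leadingCoeff f)⁻¹ * f with hF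
  have hc1 : coeff (indF s) F = 1 := by
    rw [hF, coeff_monomial_mul', if_pos tsub_le_self, tsub_tsub_cancel_of_le hle]
    exact inv_mul_cancel₀ hlc
  have hlow : ∀ e ∈ F.support, e ≠ indF s → m.toSyn e < m.toSyn (indF s) := by
    intro e he hne
    rw [MvPolynomial.mem_support_iff, hF, coeff_monomial_mul'] at he
    split_ifs at he with h
    · have h2 : e - (indF s - m.degree f) ∈ f.support := by
        rw [MvPolynomial.mem_support_iff]; exact right_ne_zero_of_mul he
      have h3 := m.le_degree h2
      have h4 : m.toSyn e ≤ m.toSyn (indF s) := by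
        have e1 : e = (indF s - m.degree f) + (e - (indF s - m.degree f)) :=
          (add_tsub_cancel_of_le h).symm
        have e2 : indF s = (indF s - m.degree f) + m.degree f := (tsub_add_cancel_of_le hle).symm
        calc m.toSyn e = m.toSyn (indF s - m.degree f) + m.toSyn (e - (indF s - m.degree f)) := by
              rw [← map_add, ← e1]
          _ ≤ m.toSyn (indF s - m.degree f) + m.toSyn (m.degree f) := by gcongr
          _ = m.toSyn (indF s) := by rw [← map_add, ← e2]
      exact lt_of_le_of_ne h4 fun h => hne (m.toSyn.injective h)
    · exact absurd rfl he
  refine ⟨homogeneousComponent s.card F, hhom _ (Ideal.mul_mem_left _ _ hf) _,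
    homogeneousComponent_isHomogeneous _ _, ?_, ?_⟩
  · rw [coeff_homogeneousComponent, if_pos (indF_degree s), hc1]
  · intro e he hne
    refine hlow e ?_ hne
    rw [MvPolynomial.mem_support_iff, coeff_homogeneousComponent] at he
    split_ifs at he with h
    · rwa [MvPolynomial.mem_support_iff]
    · exact absurd rfl he

variable {k : Type*} [Field k] [Algebra K k]

theorem coeffwise (F : MvPolynomial (Fin (n+1)) k) (hF : F ∈ J.map (MvPolynomial.map (algebraMap K k))) :
    ∀ φ : k →ₗ[K] K, ∃ G ∈ J, ∀ b, coeff b G = φ (coeff b F) := by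
  classical
  refine Submodule.span_induction (p := fun F _ => ∀ φ : k →ₗ[K] K, ∃ G ∈ J, ∀ b, coeff b G = φ (coeff b F))
    ?_ ?_ ?_ ?_ hF
  · rintro _ ⟨f, hf, rfl⟩ φ
    refine ⟨C (φ 1) * f, Ideal.mul_mem_left _ _ hf, fun b => ?_⟩
    simp only [coeff_C_mul]
    erw [coeff_map]
    rw [Algebra.algebraMap_eq_smul_one, map_smul, smul_eq_mul, mul_comm]
  · intro φ; exact ⟨0, J.zero_mem, fun b => by simp⟩
  · intro x y _ _ hx hy φ
    obtain ⟨G, hG, h1⟩ := hx φ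
    obtain ⟨G', hG', h2⟩ := hy φ
    exact ⟨G + G', J.add_mem hG hG', fun b => by simp [h1, h2]⟩
  · intro a x _ hx
    induction a using MvPolynomial.induction_on'' with
    | C c =>
      intro φ
      obtain ⟨G, hG, h1⟩ := hx (φ ∘ₗ LinearMap.mulLeft K c)
      refine ⟨G, hG, fun b => ?_⟩
      rw [h1]; simp
    | monomial_add e c f _ _ ih1 ih2 =>
      intro φ
      obtain ⟨G, hG, h1⟩ := ih1 φ
      obtain ⟨G', hG', h2⟩ := ih2 φ
      refine ⟨G' + G, J.add_mem hG' hG, fun b => ?_⟩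
      simp only [smul_eq_mul] at h1 h2
      simp [h1, h2, add_mul]
    | mul_X p i ih =>
      intro φ
      obtain ⟨G, hG, h1⟩ := ih φ
      refine ⟨X i * G, Ideal.mul_mem_left _ _ hG, fun b => ?_⟩
      have e1 : (p * X i) • x = X i * (p • x) := by simp only [smul_eq_mul]; ring
      rw [e1, coeff_X_mul', coeff_X_mul']
      split_ifs
      · exact h1 _
      · simp

theorem lead_nonstd_ext (hin : initialIdeal m J = Γ.srIdeal K) {F : MvPolynomial (Fin (n+1)) k}
    (hF : F ∈ J.map (MvPolynomial.map (algebraMap K k))) (hF0 : F ≠ 0) :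
    (m.degree F).support ∉ Γ.faces := by
  have hlc : m.leadingCoeff F ≠ 0 := m.leadingCoeff_ne_zero_iff.2 hF0
  obtain ⟨φ, hφ⟩ : ∃ φ : k →ₗ[K] K, φ (m.leadingCoeff F) ≠ 0 := by
    by_contra hcon
    push Not at hcon
    exact hlc ((Module.forall_dual_apply_eq_zero_iff K _).1 hcon)
  obtain ⟨G, hG, h⟩ := coeffwise F hF φ
  have h1 : coeff (m.degree F) G ≠ 0 := by rw [h]; exact hφ
  have h2 : m.degree G = m.degree F := by
    apply m.toSyn.injective
    apply le_antisymm
    · rw [m.degree_le_iff]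
      intro c hc
      apply m.le_degree
      rw [MvPolynomial.mem_support_iff] at hc ⊢
      rw [h] at hc
      intro h0
      rw [h0] at hc; simp at hc
    · exact m.le_degree (by rwa [MvPolynomial.mem_support_iff])
  rw [← h2]
  exact lead_nonstd hin hG (by rintro rfl; simp at h1)
end grob

/-- The combinatorial data extracted from the Groebner degeneration. -/
structure GData {k : Type*} [Field k] {n : ℕ} (Γ : SComplex n)
    (J : Ideal (MvPolynomial (Fin (n+1)) k)) (w : Fin (n+1) → ℕ) : Prop where
  hom : IsHomog J
  rad : J.IsRadical
  winj : Function.Injective w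
  std0 : ∀ F ∈ J, (∀ b ∈ F.support, b.support ∈ Γ.faces) → F = 0
  nf : ∀ (d T : ℕ) (F : MvPolynomial (Fin (n+1)) k), F.IsHomogeneous d →
    (∀ b ∈ F.support, Finsupp.weight w b ≤ T) →
    ∃ G : MvPolynomial (Fin (n+1)) k, G.IsHomogeneous d ∧ F - G ∈ J ∧
      (∀ b ∈ G.support, b.support ∈ Γ.faces) ∧ (∀ b ∈ G.support, Finsupp.weight w b ≤ T) ∧
      ∀ b, b.support ∈ Γ.faces → Finsupp.weight w b = T → coeff b G = coeff b F

theorem GData.top0 {k : Type*} [Field k] {n : ℕ} {Γ : SComplex n}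
    {J : Ideal (MvPolynomial (Fin (n+1)) k)} {w : Fin (n+1) → ℕ} (g : GData Γ J w)
    {d T : ℕ} {F : MvPolynomial (Fin (n+1)) k} (hF : F ∈ J) (hd : F.IsHomogeneous d)
    (hT : ∀ b ∈ F.support, Finsupp.weight w b ≤ T) {b : Fin (n+1) →₀ ℕ}
    (hb : b.support ∈ Γ.faces) (hbT : Finsupp.weight w b = T) : coeff b F = 0 := by
  obtain ⟨G, -, h2, h3, -, h5⟩ := g.nf d T F hd hT
  have : G ∈ J := by
    have := J.sub_mem hF h2
    simpa using this
  have := g.std0 G this h3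
  rw [← h5 b hb hbT, this]; simp

section mk
variable {k : Type*} [Field k] {n : ℕ} {Γ : SComplex n}
    {J : Ideal (MvPolynomial (Fin (n+1)) k)} {w : Fin (n+1) → ℕ}

theorem nf_mono (hgb : ∀ s : Finset (Fin (n+1)), s ∉ Γ.faces → ∃ f ∈ J, f.IsHomogeneous s.card ∧
      coeff (indF s) f = 1 ∧
      ∀ e ∈ f.support, e ≠ indF s → Finsupp.weight w e < Finsupp.weight w (indF s)) :
    ∀ (T : ℕ) (b : Fin (n+1) →₀ ℕ), Finsupp.weight w b = T →
      ∃ G : MvPolynomial (Fin (n+1)) k, G.IsHomogeneous b.degree ∧ monomial b 1 - G ∈ J ∧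
      (∀ c ∈ G.support, c.support ∈ Γ.faces) ∧ (b.support ∈ Γ.faces → G = monomial b 1) ∧
      (b.support ∉ Γ.faces → ∀ c ∈ G.support, Finsupp.weight w c < T) := by
  classical
  intro T
  induction T using Nat.strong_induction_on with
  | _ T ih =>
  intro b hbT
  by_cases hb : b.support ∈ Γ.faces
  · refine ⟨monomial b 1, isHomogeneous_monomial _ rfl, by simp, ?_, fun _ => rfl, fun h => absurd hb h⟩
    intro c hc
    have := support_monomial_subset hc
    rw [Finset.mem_singleton.1 this]; exact hb
  · obtain ⟨f, hfJ, hfh, hf1, hflow⟩ := hgb b.support hb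
    have hle : indF b.support ≤ b := (indF_le_iff _ _).2 le_rfl
    set u := b - indF b.support with hu
    have hub : u + indF b.support = b := tsub_add_cancel_of_le hle
    have key : ∀ e ∈ f.support, e ≠ indF b.support → ∃ G : MvPolynomial (Fin (n+1)) k,
        G.IsHomogeneous b.degree ∧ monomial (u + e) 1 - G ∈ J ∧
        (∀ c ∈ G.support, c.support ∈ Γ.faces) ∧ (∀ c ∈ G.support, Finsupp.weight w c < T) := by
      intro e he hne
      have hlt : Finsupp.weight w (u + e) < T := by
        rw [← hbT, ← hub, map_add, map_add]
        have := hflow e he hne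
        omega
      obtain ⟨G, h1, h2, h3, h4, h5⟩ := ih _ hlt (u + e) rfl
      have hdeg : (u + e).degree = b.degree := by
        have e1 : e.degree = (b.support).card := by
          have := hfh (MvPolynomial.mem_support_iff.1 he)
          rw [← this, Finsupp.degree_eq_weight_one]; rfl
        conv_rhs => rw [← hub]
        rw [map_add, map_add, e1, indF_degree]
      refine ⟨G, hdeg ▸ h1, h2, h3, fun c hc => ?_⟩
      by_cases h : (u + e).support ∈ Γ.faces
      · rw [h4 h] at hc
        rw [Finset.mem_singleton.1 (support_monomial_subset hc)]; exact hlt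
      · exact (h5 h c hc).trans hlt
    choose! G hG1 hG2 hG3 hG4 using key
    set R := - ∑ e ∈ f.support.erase (indF b.support), C (coeff e f) * G e with hR
    have hsupp : ∀ c ∈ R.support, ∃ e ∈ f.support.erase (indF b.support), c ∈ (G e).support := by
      intro c hc
      by_contra hcon
      push Not at hcon
      rw [MvPolynomial.mem_support_iff] at hc
      apply hc
      rw [hR, coeff_neg, coeff_sum, Finset.sum_eq_zero, neg_zero]
      intro e he
      rw [coeff_C_mul, MvPolynomial.notMem_support_iff.1 (hcon e he), mul_zero]
    refine ⟨R, ?_, ?_, ?_, fun h => absurd h hb, fun _ => ?_⟩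
    · apply IsHomogeneous.neg
      apply IsHomogeneous.sum
      intro e he
      have := (isHomogeneous_C (Fin (n+1)) (coeff e f)).mul
        (hG1 e (Finset.mem_of_mem_erase he) (Finset.ne_of_mem_erase he))
      rwa [zero_add] at this
    · have e1 : monomial u 1 * f = monomial b 1 +
          ∑ e ∈ f.support.erase (indF b.support), C (coeff e f) * monomial (u + e) 1 := by
        conv_lhs => rw [f.as_sum, Finset.mul_sum]
        rw [← Finset.add_sum_erase _ _ (a := indF b.support)
          (by rw [MvPolynomial.mem_support_iff, hf1]; exact one_ne_zero)]
        congr 1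
        · rw [monomial_mul, hf1, hub, mul_one]
        · apply Finset.sum_congr rfl
          intro e _
          rw [monomial_mul, C_mul_monomial, mul_comm]
      have e2 : monomial b 1 - R = monomial u 1 * f -
          ∑ e ∈ f.support.erase (indF b.support), C (coeff e f) * (monomial (u + e) 1 - G e) := by
        rw [e1, hR]
        simp only [mul_sub, Finset.sum_sub_distrib]
        ring
      rw [e2]
      apply J.sub_mem (Ideal.mul_mem_left _ _ hfJ)
      apply Ideal.sum_mem
      intro e he
      exact Ideal.mul_mem_left _ _ (hG2 e (Finset.mem_of_mem_erase he) (Finset.ne_of_mem_erase he))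
    · intro c hc
      obtain ⟨e, he, hce⟩ := hsupp c hc
      exact hG3 e (Finset.mem_of_mem_erase he) (Finset.ne_of_mem_erase he) c hce
    · intro c hc
      obtain ⟨e, he, hce⟩ := hsupp c hc
      exact hG4 e (Finset.mem_of_mem_erase he) (Finset.ne_of_mem_erase he) c hce

theorem nf_any (hgb : ∀ s : Finset (Fin (n+1)), s ∉ Γ.faces → ∃ f ∈ J, f.IsHomogeneous s.card ∧
      coeff (indF s) f = 1 ∧
      ∀ e ∈ f.support, e ≠ indF s → Finsupp.weight w e < Finsupp.weight w (indF s))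
    (F : MvPolynomial (Fin (n+1)) k) :
    ∃ G : MvPolynomial (Fin (n+1)) k, (∀ d, F.IsHomogeneous d → G.IsHomogeneous d) ∧ F - G ∈ J ∧
      (∀ b ∈ G.support, b.support ∈ Γ.faces) ∧ 
      ∀ T, (∀ b ∈ F.support, Finsupp.weight w b ≤ T) →
      (∀ b ∈ G.support, Finsupp.weight w b ≤ T) ∧
      ∀ b, b.support ∈ Γ.faces → Finsupp.weight w b = T → coeff b G = coeff b F := by
  classical
  have key := fun b => nf_mono hgb _ b rfl
  choose G hG1 hG2 hG3 hG4 hG5 using key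
  set R := ∑ e ∈ F.support, C (coeff e F) * G e with hR
  have hsupp : ∀ c ∈ R.support, ∃ e ∈ F.support, c ∈ (G e).support := by
    intro c hc
    by_contra hcon
    push Not at hcon
    rw [MvPolynomial.mem_support_iff] at hc
    apply hc
    rw [hR, coeff_sum, Finset.sum_eq_zero]
    intro e he
    rw [coeff_C_mul, MvPolynomial.notMem_support_iff.1 (hcon e he), mul_zero]
  have hle : ∀ e, ∀ c ∈ (G e).support, Finsupp.weight w c ≤ Finsupp.weight w e := by
    intro e c hc
    by_cases h : e.support ∈ Γ.faces
    · rw [hG4 e h] at hc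
      rw [Finset.mem_singleton.1 (support_monomial_subset hc)]
    · exact (hG5 e h c hc).le
  refine ⟨R, ?_, ?_, ?_, fun T hT => ⟨?_, ?_⟩⟩
  · intro d hd
    apply IsHomogeneous.sum
    intro e he
    have h1 := (isHomogeneous_C (Fin (n+1)) (coeff e F)).mul (hG1 e)
    rw [zero_add] at h1
    have : e.degree = d := by
      have := hd (MvPolynomial.mem_support_iff.1 he)
      rw [← this, Finsupp.degree_eq_weight_one]; rfl
    rwa [this] at h1
  · have e2 : F - R = ∑ e ∈ F.support, C (coeff e F) * (monomial e 1 - G e) := by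
      simp only [mul_sub, Finset.sum_sub_distrib, C_mul_monomial, mul_one, hR]
      rw [← F.as_sum]
    rw [e2]
    exact Ideal.sum_mem _ fun e he => Ideal.mul_mem_left _ _ (hG2 e)
  · intro c hc
    obtain ⟨e, he, hce⟩ := hsupp c hc
    exact hG3 e c hce
  · intro c hc
    obtain ⟨e, he, hce⟩ := hsupp c hc
    exact (hle e c hce).trans (hT e he)
  · intro c hc hcT
    rw [hR, coeff_sum]
    have h1 : ∀ e ∈ F.support, e ≠ c → coeff c (C (coeff e F) * G e) = 0 := by
      intro e he hne
      rw [coeff_C_mul]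
      by_cases h : e.support ∈ Γ.faces
      · rw [hG4 e h, coeff_monomial, if_neg hne, mul_zero]
      · have : c ∉ (G e).support := by
          intro hc'
          have := hG5 e h c hc'
          have := hT e he
          omega
        rw [MvPolynomial.notMem_support_iff.1 this, mul_zero]
    by_cases hcF : c ∈ F.support
    · rw [Finset.sum_eq_single_of_mem c hcF h1, coeff_C_mul, hG4 c hc, coeff_monomial, if_pos rfl, mul_one]
    · rw [MvPolynomial.notMem_support_iff.1 hcF]
      apply Finset.sum_eq_zero
      intro e he
      exact h1 e he (by rintro rfl; exact hcF he)
end mk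

theorem exists_gdata {K k : Type*} [Field K] [Field k] [Algebra K k] {n : ℕ} {Γ : SComplex n}
    {J : Ideal (MvPolynomial (Fin (n+1)) K)} (hhom : IsHomog J)
    (hvert : ∀ i : Fin (n + 1), ({i} : Finset (Fin (n + 1))) ∈ Γ.faces)
    (m : MonomialOrder.{0, 0} (Fin (n+1))) (hin : initialIdeal m J = Γ.srIdeal K) :
    ∃ w, GData Γ (J.map (MvPolynomial.map (algebraMap K k))) w := by
  classical
  set J' := J.map (MvPolynomial.map (algebraMap K k)) with hJ'
  choose! f hf1 hf2 hf3 hf4 using exists_gb hin hhom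
  obtain ⟨w, hw⟩ := exists_weight m
    ((Finset.univ.filter fun s => s ∉ Γ.faces).biUnion
      (fun s => ((f s).support.erase (indF s)).image fun e => (e, indF s)) ∪
     (((Finset.univ : Finset (Fin (n+1) × Fin (n+1))).image fun p =>
      (Finsupp.single p.1 1, Finsupp.single p.2 1)).filter fun q => m.toSyn q.1 < m.toSyn q.2)) (by
    intro p hp
    rcases Finset.mem_union.1 hp with hp | hp
    · obtain ⟨s, hs, hp⟩ := Finset.mem_biUnion.1 hp
      obtain ⟨e, he, rfl⟩ := Finset.mem_image.1 hp
      exact hf4 s (Finset.mem_filter.1 hs).2 e (Finset.mem_of_mem_erase he)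
        (Finset.ne_of_mem_erase he)
    · exact (Finset.mem_filter.1 hp).2)
  have hwinj : Function.Injective w := by
    intro i l hil
    by_contra hne
    have key : ∀ i l, m.toSyn (Finsupp.single i 1) < m.toSyn (Finsupp.single l 1) → w i < w l := by
      intro i l h
      have := hw (Finsupp.single i 1, Finsupp.single l 1) (Finset.mem_union_right _
        (Finset.mem_filter.2 ⟨Finset.mem_image.2 ⟨(i, l), Finset.mem_univ _, rfl⟩, h⟩))
      simpa [Finsupp.weight_single] using this
    rcases lt_trichotomy (m.toSyn (Finsupp.single i 1)) (m.toSyn (Finsupp.single l 1)) with h | h | h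
    · have := key _ _ h; omega
    · have := m.toSyn.injective h
      exact hne (Finsupp.single_left_injective one_ne_zero this)
    · have := key _ _ h; omega
  have hgb : ∀ s : Finset (Fin (n+1)), s ∉ Γ.faces → ∃ f ∈ J', f.IsHomogeneous s.card ∧
      coeff (indF s) f = 1 ∧
      ∀ e ∈ f.support, e ≠ indF s → Finsupp.weight w e < Finsupp.weight w (indF s) := by
    intro s hs
    refine ⟨MvPolynomial.map (algebraMap K k) (f s), Ideal.mem_map_of_mem _ (hf1 s hs),
      (hf2 s hs).map _, by rw [coeff_map, hf3 s hs, map_one], fun e he hne => ?_⟩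
    have he' : e ∈ (f s).support := support_map_subset _ _ he
    exact hw (e, indF s) (Finset.mem_union_left _ (Finset.mem_biUnion.2 ⟨s,
      Finset.mem_filter.2 ⟨Finset.mem_univ _, hs⟩, Finset.mem_image.2
        ⟨e, Finset.mem_erase.2 ⟨hne, he'⟩, rfl⟩⟩))
  have std0 : ∀ F ∈ J', (∀ b ∈ F.support, b.support ∈ Γ.faces) → F = 0 := by
    intro F hF hs
    by_contra h0
    exact lead_nonstd_ext hin hF h0 (hs _ (m.degree_mem_support h0))
  refine ⟨w, ?_, ?_, hwinj, std0, ?_⟩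
  · intro F hF d
    refine Submodule.span_induction (p := fun F _ => ∀ d, homogeneousComponent d F ∈ J')
      ?_ ?_ ?_ ?_ hF d
    · rintro _ ⟨f, hf, rfl⟩ d
      have : homogeneousComponent d (MvPolynomial.map (algebraMap K k) f) =
          MvPolynomial.map (algebraMap K k) (homogeneousComponent d f) := by
        ext b
        rw [coeff_map, coeff_homogeneousComponent, coeff_homogeneousComponent, coeff_map]
        split_ifs <;> simp
      change homogeneousComponent d (MvPolynomial.map (algebraMap K k) f) ∈ J'
      rw [this]
      exact Ideal.mem_map_of_mem _ (hhom f hf d)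
    · intro d; simp
    · intro x y _ _ hx hy d
      rw [map_add]; exact J'.add_mem (hx d) (hy d)
    · intro a x _ hx
      induction a using MvPolynomial.induction_on with
      | C c => intro d; rw [smul_eq_mul, homogeneousComponent_C_mul]; exact Ideal.mul_mem_left _ _ (hx d)
      | add p q hp hq => intro d; rw [add_smul, map_add]; exact J'.add_mem (hp d) (hq d)
      | mul_X p i hp =>
        intro d
        have e1 : (p * X i) • x = (p • x) * X i := by simp only [smul_eq_mul]; ring
        rw [e1]
        cases d with
        | zero =>
          have : homogeneousComponent 0 (p • x * X i) = 0 := by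
            rw [homogeneousComponent_zero, coeff_mul_X', if_neg (by simp), map_zero]
          rw [this]; exact J'.zero_mem
        | succ d =>
          have : homogeneousComponent (d+1) (p • x * X i) = homogeneousComponent d (p • x) * X i := by
            ext b
            rw [coeff_homogeneousComponent, coeff_mul_X', coeff_mul_X', coeff_homogeneousComponent]
            by_cases hi : i ∈ b.support
            · rw [if_pos hi, if_pos hi]
              have hb : b = (b - Finsupp.single i 1) + Finsupp.single i 1 := by
                refine (tsub_add_cancel_of_le ?_).symm
                rw [Finsupp.single_le_iff]
                have := Finsupp.mem_support_iff.1 hi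
                omega
              have : b.degree = (b - Finsupp.single i 1).degree + 1 := by
                conv_lhs => rw [hb]
                rw [map_add, Finsupp.degree_single]
              rw [this]
              simp
            · simp [hi]
          rw [this]; exact Ideal.mul_mem_right _ _ (hp d)
  · rintro F ⟨N, hN⟩
    obtain ⟨G, -, h2, h3, -⟩ := nf_any hgb F
    have hGN : G ^ N ∈ J' := by
      have : F ^ N - G ^ N ∈ J' := J'.mem_of_dvd (sub_dvd_pow_sub_pow F G N) h2
      have := J'.sub_mem hN this
      simpa using this
    by_cases hG0 : G = 0
    · simpa [hG0] using h2
    · exfalso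
      have := lead_nonstd_ext hin hGN (pow_ne_zero _ hG0)
      rw [m.degree_pow] at this
      exact this (Γ.down_closed (h3 _ (m.degree_mem_support hG0)) Finsupp.support_smul)
  · intro d T F hd hT
    obtain ⟨G, h1, h2, h3, h4⟩ := nf_any hgb F
    exact ⟨G, h1 d hd, h2, h3, (h4 T hT).1, (h4 T hT).2⟩


theorem loc_unif {A : Type*} [CommRing A] [IsNoetherianRing A] (nn : Ideal A) [nn.IsMaximal]
    (z : A) (hz : nn ≤ Ideal.span {z} ⊔ nn ^ 2) (hzn : z ∈ nn) (a : A) :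
    (∃ d, d ∉ nn ∧ d * a = 0) ∨ ∃ (e : ℕ) (c d : A), c ∉ nn ∧ d ∉ nn ∧ d * a = c * z ^ e := by
  have hp : nn.IsPrime := inferInstance
  let R := Localization.AtPrime nn
  have hN : IsNoetherianRing R := IsLocalization.isNoetherianRing nn.primeCompl R inferInstance
  set M := IsLocalRing.maximalIdeal R
  have hM : nn.map (algebraMap A R) = M := Localization.AtPrime.map_eq_maximalIdeal
  set z' := algebraMap A R z
  have h1 : M ≤ Ideal.span {z'} := by
    apply Submodule.le_of_le_smul_of_le_jacobson_bot (I := M) (IsNoetherian.noetherian _)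
      (IsLocalRing.jacobson_eq_maximalIdeal _ bot_ne_top).ge
    have := Ideal.map_mono (f := algebraMap A R) hz
    rw [Ideal.map_sup, Ideal.map_pow, hM, Ideal.map_span, Set.image_singleton] at this
    rwa [smul_eq_mul, ← pow_two]
  have h1 : M = Ideal.span {z'} := by
    apply le_antisymm h1
    rw [Ideal.span_singleton_le_iff_mem, ← hM]
    exact Ideal.mem_map_of_mem _ hzn
  by_cases ha : algebraMap A R a = 0
  · left
    rw [IsLocalization.map_eq_zero_iff nn.primeCompl] at ha
    obtain ⟨m, hm⟩ := ha
    exact ⟨m, m.2, hm⟩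
  · right
    have hk : ∃ e, algebraMap A R a ∉ M ^ e := by
      by_contra hcon
      push Not at hcon
      apply ha
      have : algebraMap A R a ∈ ⨅ e, M ^ e := by simpa [Ideal.mem_iInf] using hcon
      rwa [Ideal.iInf_pow_eq_bot_of_isLocalRing M Ideal.IsPrime.ne_top', Ideal.mem_bot] at this
    classical
    obtain ⟨e, he⟩ : ∃ e, Nat.find hk = e + 1 := by
      apply Nat.exists_eq_succ_of_ne_zero
      intro h0
      have := Nat.find_spec hk
      rw [h0] at this; simp at this
    have h2 : algebraMap A R a ∉ M ^ (e+1) := he ▸ Nat.find_spec hk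
    have h3 : algebraMap A R a ∈ M ^ e := by
      by_contra h
      have := Nat.find_min' hk h
      omega
    rw [h1, Ideal.span_singleton_pow, Ideal.mem_span_singleton'] at h3
    obtain ⟨β, hβ⟩ := h3
    have hβM : β ∉ M := by
      intro h
      rw [h1, Ideal.mem_span_singleton'] at h
      obtain ⟨γ, rfl⟩ := h
      apply h2
      rw [h1, Ideal.span_singleton_pow, Ideal.mem_span_singleton']
      exact ⟨γ, by rw [← hβ]; ring⟩
    obtain ⟨⟨c, d⟩, hcd⟩ := IsLocalization.surj nn.primeCompl β
    have hc : c ∉ nn := by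
      intro hc
      have h4 : algebraMap A R c ∈ M := by rw [← hM]; exact Ideal.mem_map_of_mem _ hc
      simp only at hcd
      rw [← hcd] at h4
      rcases (IsLocalRing.maximalIdeal.isMaximal R).isPrime.mem_or_mem h4 with h | h
      · exact hβM h
      · have := IsLocalization.map_units R d
        exact (IsLocalRing.mem_maximalIdeal _).1 h this
    have h5 : algebraMap A R (d * a) = algebraMap A R (c * z ^ e) := by
      simp only at hcd
      rw [map_mul, map_mul, ← hcd, ← hβ, map_pow]; ring
    rw [IsLocalization.eq_iff_exists nn.primeCompl] at h5
    obtain ⟨t, ht⟩ := h5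
    exact ⟨e, t * c, t * d, fun h => (hp.mem_or_mem h).elim t.2 hc,
      fun h => (hp.mem_or_mem h).elim t.2 d.2, by rw [mul_assoc, ht, mul_assoc]⟩

theorem loc_dom {A : Type*} [CommRing A] [IsNoetherianRing A] [IsReduced A] (nn : Ideal A) [nn.IsMaximal]
    (z : A) (hz : nn ≤ Ideal.span {z} ⊔ nn ^ 2) (hzn : z ∈ nn) (a b : A) (hab : a * b = 0) :
    (∃ d, d ∉ nn ∧ d * a = 0) ∨ (∃ d, d ∉ nn ∧ d * b = 0) := by
  have hp : nn.IsPrime := inferInstance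
  have hmul : ∀ {x y : A}, x ∉ nn → y ∉ nn → x * y ∉ nn := fun hx hy h => (hp.mem_or_mem h).elim hx hy
  rcases loc_unif nn z hz hzn a with h | ⟨e, c, d, hc, hd, h1⟩
  · exact Or.inl h
  rcases loc_unif nn z hz hzn b with h | ⟨e', c', d', hc', hd', h2⟩
  · exact Or.inr h
  have h3 : c * c' * z ^ (e + e') = 0 := by
    have : (d * a) * (d' * b) = 0 := by
      rw [show (d * a) * (d' * b) = d * d' * (a * b) by ring, hab, mul_zero]
    rw [h1, h2] at this
    rw [← this]; ring
  by_cases hN : e + e' = 0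
  · rw [hN, pow_zero, mul_one] at h3
    exact absurd (h3 ▸ nn.zero_mem) (hmul hc hc')
  · have h4 : c * c' * z = 0 := by
      have : (c * c' * z) ^ (e + e') = 0 := by
        obtain ⟨t, ht⟩ := Nat.exists_eq_succ_of_ne_zero hN
        rw [mul_pow, ht, pow_succ (c * c'), ← ht, mul_assoc, h3, mul_zero]
      exact pow_eq_zero_iff hN |>.1 this
    rcases Nat.eq_zero_or_pos e with he | he
    · right
      refine ⟨c * c' * d', hmul (hmul hc hc') hd', ?_⟩
      obtain ⟨t, ht⟩ := Nat.exists_eq_succ_of_ne_zero (show e' ≠ 0 by omega)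
      rw [mul_assoc, h2, ht, pow_succ,
        show c * c' * (c' * (z ^ t * z)) = c' * z ^ t * (c * c' * z) by ring, h4, mul_zero]
    · left
      refine ⟨c * c' * d, hmul (hmul hc hc') hd, ?_⟩
      obtain ⟨t, ht⟩ := Nat.exists_eq_succ_of_ne_zero he.ne'
      rw [mul_assoc, h1, ht, pow_succ,
        show c * c' * (c * (z ^ t * z)) = c * z ^ t * (c * c' * z) by ring, h4, mul_zero]

section poly
variable {k : Type*} [Field k] {n : ℕ}

theorem hom_scale {R : Type*} [CommRing R] [Algebra k R] {F : MvPolynomial (Fin (n+1)) k} {d : ℕ}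
    (hF : F.IsHomogeneous d) (c : R) (y : Fin (n+1) → R) :
    aeval (fun l => c * y l) F = c ^ d * aeval y F := by
  rw [aeval_def, aeval_def, eval₂_eq', eval₂_eq', Finset.mul_sum]
  refine Finset.sum_congr rfl fun b hb => ?_
  have : d = ∑ i, b i := by
    have := hF.degree_eq_sum_deg_support hb
    rw [this]
    exact Finsupp.sum_fintype b (fun _ a => a) (fun _ => rfl)
  simp only [mul_pow, Finset.prod_mul_distrib]
  rw [Finset.prod_pow_eq_pow_sum, ← this]; ring

theorem hc_mul {F : MvPolynomial (Fin (n+1)) k} {d : ℕ} (hF : F.IsHomogeneous d)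
    (a : MvPolynomial (Fin (n+1)) k) (t : ℕ) :
    homogeneousComponent (t + d) (a * F) = homogeneousComponent t a * F := by
  classical
  conv_lhs => rw [← sum_homogeneousComponent a, Finset.sum_mul, map_sum]
  have h1 : ∀ u, homogeneousComponent (t + d) (homogeneousComponent u a * F) =
      if u = t then homogeneousComponent u a * F else 0 := by
    intro u
    rw [homogeneousComponent_of_mem (m := t + d) (n := u + d)
      ((homogeneousComponent_isHomogeneous u a).mul hF)]
    simp [eq_comm]
  rw [Finset.sum_congr rfl (fun u _ => h1 u), Finset.sum_ite_eq']
  split_ifs with h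
  · rfl
  · rw [homogeneousComponent_eq_zero, zero_mul]
    rw [Finset.mem_range] at h; omega

theorem taylor (x : Fin (n+1) → k) (M : Ideal (MvPolynomial (Fin (n+1)) k))
    (hM : ∀ l, X l - C (x l) ∈ M) (f : MvPolynomial (Fin (n+1)) k) :
    f - C (eval x f) - ∑ l, C (eval x (pderiv l f)) * (X l - C (x l)) ∈ M ^ 2 := by
  classical
  induction f using MvPolynomial.induction_on with
  | C c => simp
  | add p q hp hq =>
    have := (M^2).add_mem hp hq
    convert this using 1
    simp only [map_add, add_mul, Finset.sum_add_distrib]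
    ring
  | mul_X p i hp =>
    have h1 : (∑ l, C (eval x (pderiv l p)) * (X l - C (x l))) * (X i - C (x i)) ∈ M ^ 2 := by
      rw [pow_two]
      exact Ideal.mul_mem_mul (Ideal.sum_mem _ fun l _ => Ideal.mul_mem_left _ _ (hM l)) (hM i)
    have := (M^2).add_mem ((M^2).mul_mem_right (X i) hp) h1
    convert this using 1
    have h2 : ∀ l, C (eval x (pderiv l (p * X i))) * (X l - C (x l)) =
        C (eval x (pderiv l p)) * (X l - C (x l)) * C (x i) +
        (if l = i then C (eval x p) * (X i - C (x i)) else 0) := by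
      intro l
      rw [Derivation.leibniz, pderiv_X]
      by_cases h : l = i
      · subst h; simp; ring
      · rw [if_neg h, Pi.single_eq_of_ne (Ne.symm h)]; simp; ring
    rw [Finset.sum_congr rfl fun l _ => h2 l, Finset.sum_add_distrib, ← Finset.sum_mul]
    simp
    ring

theorem euler_grad {J : Ideal (MvPolynomial (Fin (n+1)) k)} (hhom : IsHomog J)
    {x : Fin (n+1) → k} (hx : ∀ f ∈ J, eval x f = 0) {f : MvPolynomial (Fin (n+1)) k} (hf : f ∈ J) :
    ∑ l, eval x (pderiv l f) * x l = 0 := by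
  have h1 : ∀ d, ∑ l, eval x (pderiv l (homogeneousComponent d f)) * x l = 0 := by
    intro d
    have := (homogeneousComponent_isHomogeneous d f).sum_X_mul_pderiv
    have := congrArg (eval x) this
    rw [map_sum] at this
    simp only [map_mul, eval_X, map_nsmul, hx _ (hhom f hf d), smul_zero] at this
    rw [← this]
    exact Finset.sum_congr rfl fun l _ => mul_comm _ _
  conv_lhs => rw [← sum_homogeneousComponent f]
  simp only [map_sum, Finset.sum_mul]
  rw [Finset.sum_comm]
  exact Finset.sum_eq_zero fun d _ => h1 d

theorem sm0 [IsAlgClosed k] {J : Ideal (MvPolynomial (Fin (n+1)) k)} (hn : 1 ≤ n) (hhom : IsHomog J)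
    (hJac : ∀ x ∈ projZeros J, jacobianRank J x = n - 1)
    {A : Type*} [CommRing A] (π : MvPolynomial (Fin (n+1)) k →+* A) (hπ : Function.Surjective π)
    (hJ : ∀ f ∈ J, π f = 0) (i : Fin (n+1)) (hi : π (X i) = 1) (nn : Ideal A) [hmax : nn.IsMaximal] :
    ∃ z ∈ nn, nn ≤ Ideal.span {z} ⊔ nn ^ 2 := by
  classical
  have hcm : (nn.comap π).IsMaximal := Ideal.comap_isMaximal_of_surjective π hπ
  obtain ⟨x, hx⟩ := isMaximal_iff_eq_vanishingIdeal_singleton.1 hcm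
  have hx' : ∀ f, π f ∈ nn ↔ eval x f = 0 := by
    intro f
    rw [← Ideal.mem_comap, hx, mem_vanishingIdeal_singleton_iff, aeval_eq_eval]
  have hxJ : ∀ f ∈ J, eval x f = 0 := fun f hf => (hx' f).1 (by rw [hJ f hf]; exact nn.zero_mem)
  have hxi : x i = 1 := by
    have := (hx' (X i - 1)).1 (by rw [map_sub, hi, map_one, sub_self]; exact nn.zero_mem)
    simpa [sub_eq_zero] using this
  have hxm : ∀ l, X l - C (x l) ∈ nn.comap π := by
    intro l; rw [Ideal.mem_comap, hx']; simp
  have hrank := hJac x ⟨by intro h; rw [h] at hxi; simp at hxi, hxJ⟩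
  unfold jacobianRank at hrank
  set Wx := Submodule.span k {v : Fin (n + 1) → k | ∃ f ∈ J, v = fun i => eval x (pderiv i f)}
  have hi1 : (Pi.single i 1 : Fin (n+1) → k) ∉ Wx := by
    intro h
    have h0 : ∀ v ∈ Wx, ∑ l, v l * x l = 0 := by
      intro v hv
      refine Submodule.span_induction (p := fun v _ => ∑ l, v l * x l = 0) ?_ ?_ ?_ ?_ hv
      · rintro _ ⟨f, hf, rfl⟩; exact euler_grad hhom hxJ hf
      · simp
      · intro u v _ _ hu hv; simp [add_mul, Finset.sum_add_distrib, hu, hv]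
      · intro a u _ hu; simp [mul_assoc, ← Finset.mul_sum, hu]
    have := h0 _ h
    simp [Pi.single_apply, hxi] at this
  have hr1 := Submodule.finrank_sup_span_singleton hi1
  obtain ⟨u, hu⟩ : ∃ u, (Pi.single u 1 : Fin (n+1) → k) ∉ Wx ⊔ Submodule.span k {Pi.single i 1} := by
    by_contra hcon
    push Not at hcon
    have : Wx ⊔ Submodule.span k {Pi.single i 1} = ⊤ := by
      rw [eq_top_iff, ← (Pi.basisFun k (Fin (n+1))).span_eq, Submodule.span_le]
      rintro _ ⟨l, rfl⟩
      rw [Pi.basisFun_apply]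
      exact hcon l
    rw [this, finrank_top, Module.finrank_fin_fun, hrank] at hr1
    omega
  have hr2 := Submodule.finrank_sup_span_singleton hu
  have htop : Wx ⊔ Submodule.span k {Pi.single i 1} ⊔ Submodule.span k {Pi.single u 1} = ⊤ := by
    apply Submodule.eq_top_of_finrank_eq
    rw [Module.finrank_fin_fun, hr2, hr1, hrank]; omega
  set z := π (X u - C (x u)) with hz
  refine ⟨z, hxm u, ?_⟩
  let Q : Submodule k (Fin (n+1) → k) :=
    { carrier := {v | π (∑ l, C (v l) * (X l - C (x l))) ∈ Ideal.span {z} ⊔ nn ^ 2}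
      add_mem' := by
        intro a b ha hb
        have := (Ideal.span {z} ⊔ nn ^ 2).add_mem ha hb
        rw [← map_add, ← Finset.sum_add_distrib] at this
        simpa [add_mul] using this
      zero_mem' := by simp
      smul_mem' := by
        intro c v hv
        have := (Ideal.span {z} ⊔ nn ^ 2).mul_mem_left (π (C c)) hv
        rw [← map_mul, Finset.mul_sum] at this
        simpa [mul_assoc] using this }
  have hsq : ∀ f ∈ (nn.comap π) ^ 2, π f ∈ Ideal.span {z} ⊔ nn ^ 2 := by
    intro f hf
    apply Ideal.mem_sup_right
    have : (nn.comap π) ^ 2 ≤ (nn ^ 2).comap π := Ideal.le_comap_pow π 2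
    exact this hf
  have hQ : Q = ⊤ := by
    rw [eq_top_iff, ← htop]
    refine sup_le (sup_le ?_ ?_) ?_
    · refine Submodule.span_le.2 ?_
      rintro _ ⟨f, hf, rfl⟩
      have := hsq _ (taylor x _ hxm f)
      rw [hxJ f hf, map_zero, sub_zero, map_sub, hJ f hf, zero_sub, neg_mem_iff] at this
      exact this
    · rw [Submodule.span_singleton_le_iff_mem]
      change π (∑ l, C ((Pi.single i 1 : Fin (n+1) → k) l) * (X l - C (x l))) ∈ Ideal.span {z} ⊔ nn ^ 2
      have : ∑ l, C ((Pi.single i 1 : Fin (n+1) → k) l) * (X l - C (x l)) = X i - C (x i) := by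
        rw [Finset.sum_eq_single i]
        · simp
        · intro l _ hl; simp [hl]
        · simp
      rw [this, hxi, C_1, map_sub, hi, map_one, sub_self]; exact Ideal.zero_mem _
    · rw [Submodule.span_singleton_le_iff_mem]
      change π (∑ l, C ((Pi.single u 1 : Fin (n+1) → k) l) * (X l - C (x l))) ∈ Ideal.span {z} ⊔ nn ^ 2
      have : ∑ l, C ((Pi.single u 1 : Fin (n+1) → k) l) * (X l - C (x l)) = X u - C (x u) := by
        rw [Finset.sum_eq_single u]
        · simp
        · intro l _ hl; simp [hl]
        · simp
      rw [this]; exact Ideal.mem_sup_left (Ideal.mem_span_singleton_self _)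
  intro a ha
  obtain ⟨f, rfl⟩ := hπ a
  have h1 := hsq _ (taylor x _ hxm f)
  rw [(hx' f).1 ha, map_zero, sub_zero, map_sub] at h1
  have h2 : (fun l => eval x (pderiv l f)) ∈ Q := by rw [hQ]; trivial
  have := (Ideal.span {z} ⊔ nn ^ 2).add_mem h1 h2
  simpa using this
end poly


section prim
variable {k : Type*} [Field k] [IsAlgClosed k] {n : ℕ} {J : Ideal (MvPolynomial (Fin (n+1)) k)}

theorem isHomog_induct {J : Ideal (MvPolynomial (Fin (n+1)) k)} (hhom : IsHomog J)
    {A : Type*} [CommRing A] (π : MvPolynomial (Fin (n+1)) k →+* A)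
    (h : ∀ f ∈ J, ∀ d, f.IsHomogeneous d → π f = 0) (f : MvPolynomial (Fin (n+1)) k) (hf : f ∈ J) :
    π f = 0 := by
  rw [← sum_homogeneousComponent f, map_sum]
  exact Finset.sum_eq_zero fun d _ => h _ (hhom f hf d) d (homogeneousComponent_isHomogeneous d f)

theorem exists_homogenize (s : MvPolynomial (Fin (n+1)) k) (i : Fin (n+1)) :
    ∃ (s' : MvPolynomial (Fin (n+1)) k) (D : ℕ), s'.IsHomogeneous D ∧
      ∀ {A : Type*} [CommRing A] (φ : MvPolynomial (Fin (n+1)) k →+* A), φ (X i) = 1 → φ s' = φ s := by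
  refine ⟨∑ t ∈ Finset.range (s.totalDegree + 1), homogeneousComponent t s * X i ^ (s.totalDegree - t),
    s.totalDegree, ?_, ?_⟩
  · apply IsHomogeneous.sum
    intro t ht
    have := (homogeneousComponent_isHomogeneous t s).mul ((isHomogeneous_X_pow (R := k) i (s.totalDegree - t)))
    rwa [Nat.add_sub_cancel' (by rw [Finset.mem_range] at ht; omega)] at this
  · intro A _ φ hφ
    conv_rhs => rw [← sum_homogeneousComponent s]
    simp [map_sum, hφ]

theorem local_domain1 (hn : 1 ≤ n) (hhom : IsHomog J) (hrad : J.IsRadical)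
    (hJac : ∀ x ∈ projZeros J, jacobianRank J x = n - 1)
    {F G : MvPolynomial (Fin (n+1)) k} {d e : ℕ} (hF : F.IsHomogeneous d) (hG : G.IsHomogeneous e)
    (hFG : F * G ∈ J) {x : Fin (n+1) → k} (hx : x ∈ projZeros J) (i : Fin (n+1)) (hxi : x i = 1) :
    (∃ s t, s.IsHomogeneous t ∧ eval x s ≠ 0 ∧ s * F ∈ J) ∨
    (∃ s t, s.IsHomogeneous t ∧ eval x s ≠ 0 ∧ s * G ∈ J) := by
  classical
  let B := MvPolynomial (Fin (n+1)) k ⧸ J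
  let Λ := Localization.Away (Ideal.Quotient.mk J (X i))
  let c : Λ := IsLocalization.Away.invSelf (Ideal.Quotient.mk J (X i))
  let ι : B →ₐ[k] Λ := IsScalarTower.toAlgHom k B Λ
  have hredB : IsReduced B := (Ideal.isRadical_iff_quotient_reduced J).1 hrad
  have hredΛ : IsReduced Λ :=
    inferInstanceAs (IsReduced (Localization (Submonoid.powers (Ideal.Quotient.mk J (X i)))))
  let ψ : MvPolynomial (Fin (n+1)) k →ₐ[k] Λ := aeval fun l => c * ι (Ideal.Quotient.mk J (X l))
  have hψ : ∀ {F : MvPolynomial (Fin (n+1)) k} {d : ℕ}, F.IsHomogeneous d →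
      ψ F = c ^ d * ι (Ideal.Quotient.mk J F) := by
    intro F d hF
    change aeval _ F = _
    rw [hom_scale hF c]
    congr 1
    have : (ι.comp (Ideal.Quotient.mkₐ k J)) = aeval fun l => ι (Ideal.Quotient.mk J (X l)) := by
      ext l; simp only [AlgHom.comp_apply, aeval_X]; rfl
    rw [← this]; rfl
  have hc : c * ι (Ideal.Quotient.mk J (X i)) = 1 := by
    rw [mul_comm]
    exact IsLocalization.Away.mul_invSelf _
  have hψi : ψ (X i) = 1 := by
    rw [hψ (isHomogeneous_X k i), pow_one, hc]
  have hψJ : ∀ f ∈ J, ψ f = 0 := by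
    refine isHomog_induct hhom ψ.toRingHom ?_
    intro f hf d hd
    change ψ f = 0
    rw [hψ hd, Ideal.Quotient.eq_zero_iff_mem.2 hf, map_zero, mul_zero]
  let I := RingHom.ker ψ
  let A := MvPolynomial (Fin (n+1)) k ⧸ I
  let π : MvPolynomial (Fin (n+1)) k →+* A := Ideal.Quotient.mk I
  have hπ0 : ∀ f, π f = 0 ↔ ψ f = 0 := fun f => Ideal.Quotient.eq_zero_iff_mem
  have hredA : IsReduced A := by
    refine (Ideal.isRadical_iff_quotient_reduced I).1 ?_
    rintro f ⟨N, hN⟩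
    rw [RingHom.mem_ker, map_pow] at hN
    rw [RingHom.mem_ker]
    exact (pow_eq_zero_iff (n := N) (by
      rintro rfl; 
      rw [pow_zero] at hN
      have h1 : (1 : Λ) ≠ 0 := by
        intro h1
        have h2 : algebraMap B Λ 1 = 0 := by rw [map_one, h1]
        rw [IsLocalization.map_eq_zero_iff (Submonoid.powers (Ideal.Quotient.mk J (X i)))] at h2
        obtain ⟨⟨_, N, rfl⟩, h3⟩ := h2
        simp only [mul_one] at h3
        rw [← map_pow, Ideal.Quotient.eq_zero_iff_mem] at h3
        have := hx.2 _ h3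
        simp [hxi] at this
      exact h1 (by simpa using hN))).1 hN
  -- the evaluation
  let ev : B →+* k := Ideal.Quotient.lift J (eval x) hx.2
  have hevu : IsUnit (ev (Ideal.Quotient.mk J (X i))) := by
    have : ev (Ideal.Quotient.mk J (X i)) = 1 := by
      change eval x (X i) = 1
      simp [hxi]
    rw [this]; exact isUnit_one
  let evΛ : Λ →+* k := IsLocalization.Away.lift (Ideal.Quotient.mk J (X i)) hevu
  have hevΛ : ∀ b, evΛ (ι b) = ev b := fun b => IsLocalization.Away.lift_eq _ hevu b
  have hevc : evΛ c = 1 := by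
    have := congrArg evΛ hc
    rw [map_mul, hevΛ, map_one] at this
    have h2 : ev (Ideal.Quotient.mk J (X i)) = 1 := by
      change eval x (X i) = 1
      simp [hxi]
    rwa [h2, mul_one] at this
  have hevψ : ∀ f, evΛ (ψ f) = eval x f := by
    intro f
    conv_lhs => rw [← sum_homogeneousComponent f]
    conv_rhs => rw [← sum_homogeneousComponent f]
    simp only [map_sum]
    refine Finset.sum_congr rfl fun t _ => ?_
    rw [hψ (homogeneousComponent_isHomogeneous t f), map_mul, map_pow, hevc, one_pow, one_mul, hevΛ]
    rfl
  let evA : A →+* k := Ideal.Quotient.lift I (eval x) (fun f hf => by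
    rw [← hevψ f, (RingHom.mem_ker).1 hf, map_zero])
  have hevA : ∀ f, evA (π f) = eval x f := fun f => rfl
  let nn : Ideal A := RingHom.ker evA
  have hmax : nn.IsMaximal := RingHom.ker_isMaximal_of_surjective evA (fun c => ⟨π (C c), by rw [hevA]; simp⟩)
  obtain ⟨z, hzn, hz⟩ := sm0 hn hhom hJac π Ideal.Quotient.mk_surjective
    (fun f hf => (hπ0 f).2 (hψJ f hf)) i (by
      rw [← sub_eq_zero, ← map_one π, ← map_sub, hπ0, map_sub, hψi, map_one, sub_self]) nn
  have hfin : ∀ {F : MvPolynomial (Fin (n+1)) k} {d : ℕ}, F.IsHomogeneous d →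
      (∃ a, a ∉ nn ∧ a * π F = 0) → ∃ s t, s.IsHomogeneous t ∧ eval x s ≠ 0 ∧ s * F ∈ J := by
    rintro F d hF ⟨a, ha, ha0⟩
    obtain ⟨s, rfl⟩ := Ideal.Quotient.mk_surjective a
    have hs : eval x s ≠ 0 := fun h => ha (RingHom.mem_ker.2 h)
    have ha0 : ψ (s * F) = 0 := by rw [← hπ0, map_mul]; exact ha0
    obtain ⟨s', D, hs', hs2⟩ := exists_homogenize s i
    have hs3 : ψ s' = ψ s := hs2 ψ.toRingHom hψi
    have hs4 : eval x s' = eval x s := hs2 (eval x) (by simp [hxi])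
    have h1 : ι (Ideal.Quotient.mk J (s' * F)) = 0 := by
      have h2 : ψ (s' * F) = 0 := by rw [map_mul, hs3, ← map_mul, ha0]
      rw [hψ (hs'.mul hF)] at h2
      calc ι (Ideal.Quotient.mk J (s' * F)) = (c * ι (Ideal.Quotient.mk J (X i))) ^ (D + d) *
          ι (Ideal.Quotient.mk J (s' * F)) := by rw [hc]; simp
        _ = ι (Ideal.Quotient.mk J (X i)) ^ (D + d) * (c ^ (D + d) * ι (Ideal.Quotient.mk J (s' * F))) := by
          rw [mul_pow]; ring
        _ = 0 := by rw [h2, mul_zero]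
    have h1 : algebraMap B Λ (Ideal.Quotient.mk J (s' * F)) = 0 := h1
    rw [IsLocalization.map_eq_zero_iff (Submonoid.powers (Ideal.Quotient.mk J (X i)))] at h1
    obtain ⟨⟨_, N, rfl⟩, h3⟩ := h1
    simp only at h3
    rw [← map_pow, ← map_mul, Ideal.Quotient.eq_zero_iff_mem] at h3
    refine ⟨X i ^ N * s', _, (isHomogeneous_X_pow i N).mul hs', ?_, by rwa [mul_assoc]⟩
    simp [hxi, hs4, hs]
  rcases loc_dom nn z hz hzn (π F) (π G) (by rw [← map_mul, hπ0]; exact hψJ _ hFG) with h | h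
  · exact Or.inl (hfin hF h)
  · exact Or.inr (hfin hG h)

theorem local_domain (hn : 1 ≤ n) (hhom : IsHomog J) (hrad : J.IsRadical)
    (hJac : ∀ x ∈ projZeros J, jacobianRank J x = n - 1)
    {F G : MvPolynomial (Fin (n+1)) k} {d e : ℕ} (hF : F.IsHomogeneous d) (hG : G.IsHomogeneous e)
    (hFG : F * G ∈ J) {x : Fin (n+1) → k} (hx : x ∈ projZeros J) :
    (∃ s, eval x s ≠ 0 ∧ s * F ∈ J) ∨ (∃ s, eval x s ≠ 0 ∧ s * G ∈ J) := by
  obtain ⟨i, hi⟩ := Function.ne_iff.1 hx.1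
  simp only [Pi.zero_apply] at hi
  have hsc : ∀ {f : MvPolynomial (Fin (n+1)) k} {d : ℕ}, f.IsHomogeneous d →
      eval (fun l => (x i)⁻¹ * x l) f = ((x i)⁻¹) ^ d * eval x f := by
    intro f d hf
    have := hom_scale hf (x i)⁻¹ x
    simpa only [aeval_eq_eval] using this
  have hy : (fun l => (x i)⁻¹ * x l) ∈ projZeros J := by
    refine ⟨?_, ?_⟩
    · intro h
      have := congrFun h i
      simp [hi] at this
    · refine isHomog_induct hhom (eval (fun l => (x i)⁻¹ * x l)) ?_
      intro f hf d hd
      rw [hsc hd, hx.2 f hf, mul_zero]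
  have := local_domain1 hn hhom hrad hJac hF hG hFG hy i (by simp [hi])
  rcases this with ⟨s, t, hs, h1, h2⟩ | ⟨s, t, hs, h1, h2⟩
  · left
    rw [hsc hs] at h1
    exact ⟨s, right_ne_zero_of_mul h1, h2⟩
  · right
    rw [hsc hs] at h1
    exact ⟨s, right_ne_zero_of_mul h1, h2⟩

theorem nullst (hrad : J.IsRadical) (hne : (projZeros J).Nonempty)
    {G : MvPolynomial (Fin (n+1)) k} {e : ℕ} (hG : G.IsHomogeneous e)
    (h : ∀ x ∈ projZeros J, eval x G = 0) : G ∈ J := by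
  rw [← hrad.radical, ← vanishingIdeal_zeroLocus_eq_radical (K := k), mem_vanishingIdeal_iff]
  intro x hx
  rw [aeval_eq_eval]
  by_cases hx0 : x = 0
  · obtain ⟨y, hy⟩ := hne
    have := h y hy
    rcases Nat.eq_zero_or_pos e with he | he
    · subst he
      have h2 := hom_scale hG 0 y
      simp only [aeval_eq_eval, pow_zero, one_mul, this] at h2
      rw [hx0, ← h2]
      congr 2
      ext l; simp
    · have h2 := hom_scale hG 0 y
      simp only [aeval_eq_eval, this, mul_zero] at h2
      rw [hx0, ← h2]
      congr 2
      ext l; simp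
  · exact h x ⟨hx0, fun f hf => by have := hx f hf; rwa [aeval_eq_eval] at this⟩

theorem J_prime (hn : 1 ≤ n) (hhom : IsHomog J) (hrad : J.IsRadical)
    (hJac : ∀ x ∈ projZeros J, jacobianRank J x = n - 1) (hconn : IsConnectedProjVariety J) :
    J.IsPrime := by
  classical
  let _ := MvPolynomial.gradedAlgebra (σ := Fin (n+1)) (R := k)
  have hJtop : J ≠ ⊤ := by
    obtain ⟨x, hx⟩ := hconn.1
    intro h
    have := hx.2 1 (h ▸ trivial)
    simp at this
  have hJh : J.IsHomogeneous (homogeneousSubmodule (Fin (n+1)) k) := by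
    intro t f hf
    have := hhom f hf t
    rwa [← decomposition.decompose'_apply] at this
  refine hJh.isPrime_of_homogeneous_mem_or_mem hJtop ?_
  rintro F G ⟨d, hF⟩ ⟨e, hG⟩ hFG
  have hF : F.IsHomogeneous d := hF
  have hG : G.IsHomogeneous e := hG
  let J1 : Ideal (MvPolynomial (Fin (n+1)) k) :=
    { carrier := {a | a * F ∈ J}
      add_mem' := fun {a b} ha hb => by
        have := J.add_mem ha hb
        rwa [← add_mul] at this
      zero_mem' := by simp
      smul_mem' := fun c a ha => by
        have := J.mul_mem_left c ha
        rwa [← mul_assoc] at this }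
  have hJ1 : ∀ a, a ∈ J1 ↔ a * F ∈ J := fun a => Iff.rfl
  let J2 : Ideal (MvPolynomial (Fin (n+1)) k) :=
    { carrier := {b | ∀ a ∈ J1, b * a ∈ J}
      add_mem' := fun {b c} hb hc a ha => by
        have := J.add_mem (hb a ha) (hc a ha)
        rwa [← add_mul] at this
      zero_mem' := by simp
      smul_mem' := fun c b hb a ha => by
        have := J.mul_mem_left c (hb a ha)
        rwa [← mul_assoc] at this }
  have hJ2 : ∀ b, b ∈ J2 ↔ ∀ a ∈ J1, b * a ∈ J := fun a => Iff.rfl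
  have h1 : IsHomog J1 := by
    intro a ha t
    rw [hJ1, ← hc_mul hF]
    exact hhom _ ha _
  have h2 : IsHomog J2 := by
    intro b hb t
    rw [hJ2]
    intro a ha
    rw [← sum_homogeneousComponent a, Finset.mul_sum]
    apply Ideal.sum_mem
    intro u _
    rw [← hc_mul (homogeneousComponent_isHomogeneous u a)]
    exact hhom _ (hb _ (h1 a ha u)) _
  have h3 : projZeros J ⊆ projZeros J1 ∪ projZeros J2 := by
    intro x hx
    by_contra hcon
    rw [Set.mem_union, not_or] at hcon
    obtain ⟨hc1, hc2⟩ := hcon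
    have hc1 : ∃ a ∈ J1, eval x a ≠ 0 := by
      by_contra h; push Not at h; exact hc1 ⟨hx.1, h⟩
    have hc2 : ∃ a ∈ J2, eval x a ≠ 0 := by
      by_contra h; push Not at h; exact hc2 ⟨hx.1, h⟩
    obtain ⟨a, ha, ha'⟩ := hc1
    obtain ⟨b, hb, hb'⟩ := hc2
    have := hx.2 _ (hb a ha)
    rw [map_mul] at this
    exact mul_ne_zero hb' ha' this
  have h4 : projZeros J ∩ (projZeros J1 ∩ projZeros J2) = ∅ := by
    rw [Set.eq_empty_iff_forall_notMem]
    rintro x ⟨hx, hx1, hx2⟩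
    have hF1 : ¬ ∃ s, eval x s ≠ 0 ∧ s * F ∈ J := by
      rintro ⟨s, hs, hs'⟩
      exact hs (hx1.2 s hs')
    let N : Ideal (MvPolynomial (Fin (n+1)) k) :=
      { carrier := {b | ∃ s, eval x s ≠ 0 ∧ s * b ∈ J}
        add_mem' := by
          rintro a b ⟨s, hs, hs'⟩ ⟨t, ht, ht'⟩
          refine ⟨s * t, by rw [map_mul]; exact mul_ne_zero hs ht, ?_⟩
          rw [show s * t * (a + b) = t * (s * a) + s * (t * b) by ring]
          exact J.add_mem (J.mul_mem_left _ hs') (J.mul_mem_left _ ht')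
        zero_mem' := ⟨1, by simp, by simp⟩
        smul_mem' := by
          rintro c a ⟨s, hs, hs'⟩
          refine ⟨s, hs, ?_⟩
          rw [smul_eq_mul, mul_left_comm]
          exact J.mul_mem_left _ hs' }
    have hN : J1 ≤ N := by
      intro a ha
      rw [← sum_homogeneousComponent a]
      apply Ideal.sum_mem
      intro u _
      have := local_domain hn hhom hrad hJac (homogeneousComponent_isHomogeneous u a) hF (h1 a ha u) hx
      exact this.resolve_right hF1
    obtain ⟨S, hS⟩ := IsNoetherian.noetherian J1
    have hSN : ∀ a ∈ S, ∃ s, eval x s ≠ 0 ∧ s * a ∈ J := fun a ha =>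
      hN (hS ▸ Submodule.subset_span ha)
    choose! s hs hs' using hSN
    have hprod : ∏ a ∈ S, s a ∈ J2 := by
      intro a ha
      rw [← hS] at ha
      refine Submodule.span_induction (p := fun a _ => (∏ a ∈ S, s a) * a ∈ J) ?_ ?_ ?_ ?_ ha
      · intro a ha
        rw [← Finset.mul_prod_erase S s ha, mul_right_comm]
        exact J.mul_mem_right _ (hs' a ha)
      · simp
      · intro a b _ _ h1 h2; rw [mul_add]; exact J.add_mem h1 h2
      · intro c a _ h1; rw [smul_eq_mul, mul_left_comm]; exact J.mul_mem_left _ h1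
    have := hx2.2 _ hprod
    rw [map_prod] at this
    exact Finset.prod_ne_zero_iff.2 hs this
  rcases hconn.2 J1 J2 h1 h2 h3 h4 with h | h
  · right
    refine nullst hrad hconn.1 hG fun x hx => (h hx).2 G ?_
    rw [hJ1, mul_comm]; exact hFG
  · left
    refine nullst hrad hconn.1 hF fun x hx => (h hx).2 F ?_
    rw [hJ2]; intro a ha; rw [mul_comm]; exact ha
end prim


/-- coordinate ring of the chart `i`. -/
noncomputable def OO {k : Type*} [Field k] {n : ℕ} {L : Type*} [Field L] [Algebra k L]
    (ξ : Fin (n+1) → L) (i : Fin (n+1)) : Subalgebra k L :=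
  (aeval (fun l => ξ l / ξ i) : MvPolynomial (Fin (n+1)) k →ₐ[k] L).range

/-- function field data. -/
structure FF {k : Type*} [Field k] {n : ℕ} (J : Ideal (MvPolynomial (Fin (n+1)) k))
    (L : Type*) [Field L] [Algebra k L] (ξ : Fin (n+1) → L) : Prop where
  ne : ∀ i, ξ i ≠ 0
  mem : ∀ (F : MvPolynomial (Fin (n+1)) k) (d : ℕ), F.IsHomogeneous d → (aeval ξ F = 0 ↔ F ∈ J)
  frac : ∀ i (a : L), ∃ b c : L, b ∈ OO (k := k) ξ i ∧ c ∈ OO (k := k) ξ i ∧ c ≠ 0 ∧ a = b / c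

section FFc
theorem exists_FF.{u} {k : Type u} [Field k] {n : ℕ} {J : Ideal (MvPolynomial (Fin (n+1)) k)} [IsAlgClosed k]
    (hJ : J.IsPrime) (hX : ∀ l, (X l : MvPolynomial (Fin (n+1)) k) ∉ J) :
    ∃ (L : Type u) (_ : Field L) (_ : Algebra k L) (ξ : Fin (n+1) → L), FF J L ξ := by
  let E := FractionRing (MvPolynomial (Fin (n+1)) k ⧸ J)
  let x : Fin (n+1) → E := fun l => algebraMap (MvPolynomial (Fin (n+1)) k ⧸ J) E (Ideal.Quotient.mk J (X l))
  have hx0 : ∀ l, x l ≠ 0 := by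
    intro l h
    have := (IsFractionRing.injective (MvPolynomial (Fin (n+1)) k ⧸ J) E) (h.trans (map_zero _).symm)
    exact hX l (Ideal.Quotient.eq_zero_iff_mem.1 this)
  have hxF : ∀ F : MvPolynomial (Fin (n+1)) k, aeval x F = algebraMap (MvPolynomial (Fin (n+1)) k ⧸ J) E (Ideal.Quotient.mk J F) := by
    intro F
    have : aeval x = (IsScalarTower.toAlgHom k (MvPolynomial (Fin (n+1)) k ⧸ J) E).comp (Ideal.Quotient.mkₐ k J) := by
      apply MvPolynomial.algHom_ext
      intro i
      simp [x]
    rw [this]; rfl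
  let y : Fin (n+1) → E := fun l => x l / x 0
  let L := IntermediateField.adjoin k (Set.range y)
  let ξ : Fin (n+1) → L := fun l => ⟨y l, IntermediateField.subset_adjoin _ _ ⟨l, rfl⟩⟩
  have hyF : ∀ F : MvPolynomial (Fin (n+1)) k, ((aeval ξ F : L) : E) = aeval y F := by
    intro F
    have h2 := MvPolynomial.aeval_algebraMap_apply (B := E) ξ F
    exact h2.symm
  have hξ0 : ξ 0 = 1 := by
    apply Subtype.ext
    exact div_self (hx0 0)
  have hne : ∀ i, ξ i ≠ 0 := by
    intro i h
    have := congrArg (Subtype.val) h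
    exact div_ne_zero (hx0 i) (hx0 0) this
  refine ⟨L, inferInstance, inferInstance, ξ, hne, ?_, ?_⟩
  · intro F d hF
    have h1 : aeval y F = (x 0)⁻¹ ^ d * aeval x F := by
      rw [← hom_scale hF]
      congr 2
      funext l
      simp only [y]; rw [div_eq_mul_inv, mul_comm]
    rw [← ZeroMemClass.coe_eq_zero, hyF, h1, hxF, mul_eq_zero]
    simp [hx0, Ideal.Quotient.eq_zero_iff_mem]
  · intro i a
    obtain ⟨r, s, hrs⟩ := (IntermediateField.mem_adjoin_range_iff k y a.1).1 a.2
    obtain ⟨r', D, hr', hr⟩ := exists_homogenize r 0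
    obtain ⟨s', D', hs', hs⟩ := exists_homogenize s 0
    have ha : a = aeval ξ r' / aeval ξ s' := by
      apply Subtype.ext
      rw [hrs]
      have e1 : aeval ξ r' = aeval ξ r := hr (aeval ξ : _ →ₐ[k] L).toRingHom (by simp [hξ0])
      have e2 : aeval ξ s' = aeval ξ s := hs (aeval ξ : _ →ₐ[k] L).toRingHom (by simp [hξ0])
      rw [e1, e2, IntermediateField.coe_div, hyF, hyF]
    by_cases h0 : aeval ξ s' = 0
    · exact ⟨0, 1, zero_mem _, one_mem _, one_ne_zero, by simp [ha, h0]⟩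
    have hc : (ξ 0 / ξ i) ∈ OO (k := k) ξ i := ⟨X 0, by simp⟩
    have sc : ∀ (F : MvPolynomial (Fin (n+1)) k) (d : ℕ), F.IsHomogeneous d →
        aeval (fun l => ξ l / ξ i) F = (ξ 0 / ξ i)^d * aeval ξ F := by
      intro F d hF
      rw [← hom_scale hF]
      congr 2
      funext l
      rw [hξ0]; ring
    have hne' : ξ 0 / ξ i ≠ 0 := div_ne_zero (hne _) (hne _)
    refine ⟨aeval (fun l => ξ l / ξ i) r' * (ξ 0 / ξ i)^D', aeval (fun l => ξ l / ξ i) s' * (ξ 0 / ξ i)^D,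
      mul_mem ⟨_, rfl⟩ (pow_mem hc _), mul_mem ⟨_, rfl⟩ (pow_mem hc _), ?_, ?_⟩
    · rw [sc _ _ hs']
      exact mul_ne_zero (mul_ne_zero (pow_ne_zero _ hne') h0) (pow_ne_zero _ hne')
    · rw [sc _ _ hs', sc _ _ hr', ha]
      field_simp
end FFc


/-- smooth affine curve chart. -/
structure Chart {k L : Type*} [Field k] [Field L] [Algebra k L] (A : Subalgebra k L) : Prop where
  noeth : IsNoetherianRing A
  frac : ∀ a : L, ∃ b c : A, (c : L) ≠ 0 ∧ a = b / c
  sm : ∀ nn : Ideal A, nn.IsMaximal → ∃ z ∈ nn, nn ≤ Ideal.span {z} ⊔ nn ^ 2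

section chart
variable {k L : Type*} [Field k] [Field L] [Algebra k L] {A : Subalgebra k L}

theorem FF.chart [IsAlgClosed k] {n : ℕ} {J : Ideal (MvPolynomial (Fin (n+1)) k)} {ξ : Fin (n+1) → L}
    (ff : FF J L ξ) (hn : 1 ≤ n) (hhom : IsHomog J)
    (hJac : ∀ x ∈ projZeros J, jacobianRank J x = n - 1) (i : Fin (n+1)) : Chart (OO (k := k) ξ i) := by
  have hsurj : Function.Surjective ((aeval (fun l => ξ l / ξ i) : MvPolynomial (Fin (n+1)) k →ₐ[k] L).rangeRestrict) :=
    AlgHom.rangeRestrict_surjective _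
  refine ⟨?_, ?_, ?_⟩
  · exact isNoetherianRing_of_surjective _ _ ((aeval (fun l => ξ l / ξ i) : MvPolynomial (Fin (n+1)) k →ₐ[k] L).rangeRestrict).toRingHom hsurj
  · intro a
    obtain ⟨b, c, hb, hc, h0, h⟩ := ff.frac i a
    exact ⟨⟨b, hb⟩, ⟨c, hc⟩, h0, h⟩
  · intro nn hnn
    refine sm0 (A := OO (k := k) ξ i) hn hhom hJac ((aeval (fun l => ξ l / ξ i) : MvPolynomial (Fin (n+1)) k →ₐ[k] L).rangeRestrict).toRingHom hsurj ?_ i ?_ nn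
    · refine isHomog_induct hhom _ ?_
      intro f hf d hd
      apply Subtype.ext
      change aeval (fun l => ξ l / ξ i) f = 0
      have : (fun l => ξ l / ξ i) = fun l => (ξ i)⁻¹ * ξ l := by funext l; rw [div_eq_mul_inv, mul_comm]
      rw [this, hom_scale hd, (ff.mem f d hd).2 hf, mul_zero]
    · apply Subtype.ext
      change aeval (fun l => ξ l / ξ i) (X i : MvPolynomial (Fin (n+1)) k) = 1
      simp [ff.ne]

theorem Chart.unif (hA : Chart A) (nn : Ideal A) [hm : nn.IsMaximal] :
    ∃ z ∈ nn, ∀ a : A, a ≠ 0 → ∃ (e : ℕ) (c d : A), c ∉ nn ∧ d ∉ nn ∧ d * a = c * z ^ e := by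
  have := hA.noeth
  obtain ⟨z, hz, hz2⟩ := hA.sm nn hm
  refine ⟨z, hz, fun a ha => ?_⟩
  rcases loc_unif nn z hz2 hz a with ⟨d, hd, hda⟩ | h
  · rcases mul_eq_zero.1 hda with h | h
    · exact absurd (h ▸ nn.zero_mem) hd
    · exact absurd h ha
  · exact h

theorem Chart.maxl (hA : Chart A) (p : Ideal A) [hp : p.IsPrime] (h0 : p ≠ ⊥) : p.IsMaximal := by
  obtain ⟨nn, hnn, hpn⟩ := Ideal.exists_le_maximal p hp.ne_top
  obtain ⟨z, hz, hu⟩ := hA.unif nn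
  obtain ⟨a, hap, ha0⟩ := Submodule.exists_mem_ne_zero_of_ne_bot h0
  have hzp : z ∈ p := by
    obtain ⟨e, c, d, hc, hd, h⟩ := hu a ha0
    have : c * z ^ e ∈ p := h ▸ p.mul_mem_left d hap
    rcases hp.mem_or_mem this with h | h
    · exact absurd (hpn h) hc
    · exact hp.mem_of_pow_mem _ h
  have : nn ≤ p := by
    intro b hb
    by_cases hb0 : b = 0
    · rw [hb0]; exact p.zero_mem
    obtain ⟨e, c, d, hc, hd, h⟩ := hu b hb0
    have he : e ≠ 0 := by
      rintro rfl
      rw [pow_zero, mul_one] at h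
      exact hc (h ▸ nn.mul_mem_left _ hb)
    have : d * b ∈ p := h ▸ p.mul_mem_left _ (Ideal.pow_mem_of_mem p hzp e (Nat.pos_of_ne_zero he))
    exact (hp.mem_or_mem this).resolve_left fun h => hd (hpn h)
  rwa [le_antisymm hpn this]

theorem Chart.zp (hA : Chart A) (p : Ideal A) [hp : p.IsPrime] (h0 : p ≠ ⊥) :
    ∃ z ∈ p, z ≠ 0 ∧ ∀ x : L, x ≠ 0 → ∃ (e : ℤ) (c d : A), c ∉ p ∧ d ∉ p ∧ x = c / d * (z : L) ^ e := by
  have := hA.maxl p h0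
  obtain ⟨z, hz, hu⟩ := hA.unif p
  have hz0 : z ≠ 0 := by
    rintro rfl
    obtain ⟨a, hap, ha0⟩ := Submodule.exists_mem_ne_zero_of_ne_bot h0
    obtain ⟨e, c, d, hc, hd, h⟩ := hu a ha0
    rcases e with _ | e
    · rw [pow_zero, mul_one] at h
      exact hc (h ▸ p.mul_mem_left _ hap)
    · rw [pow_succ, mul_zero, mul_zero] at h
      rcases mul_eq_zero.1 h with h | h
      · exact hd (h ▸ p.zero_mem)
      · exact ha0 h
  have hz0' : (z : L) ≠ 0 := by simpa using hz0
  refine ⟨z, hz, hz0, fun x hx => ?_⟩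
  obtain ⟨a, b, hb0, hab⟩ := hA.frac x
  have ha0 : a ≠ 0 := by rintro rfl; simp at hab; exact hx hab
  obtain ⟨e, c, d, hc, hd, h⟩ := hu a ha0
  obtain ⟨e', c', d', hc', hd', h'⟩ := hu b (by simpa using hb0)
  have nz : ∀ u : A, u ∉ p → (u : L) ≠ 0 := by
    intro u hu h
    have : u = 0 := by simpa using h
    exact hu (this ▸ p.zero_mem)
  refine ⟨e - e', c * d', d * c', fun h => ?_, fun h => ?_, ?_⟩
  · exact (hp.mem_or_mem h).elim hc hd'
  · exact (hp.mem_or_mem h).elim hd hc'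
  · have h1 : (d : L) * a = c * (z : L)^e := by exact_mod_cast congrArg Subtype.val h
    have h2 : (d' : L) * b = c' * (z : L)^e' := by exact_mod_cast congrArg Subtype.val h'
    have n1 := nz _ hc
    have n2 := nz _ hd
    have n3 := nz _ hc'
    have n4 := nz _ hd'
    have ea : (a : L) = c * (z : L)^e / d := by rw [← h1]; field_simp
    have eb : (b : L) = c' * (z : L)^e' / d' := by rw [← h2]; field_simp
    rw [hab, ea, eb, zpow_sub₀ hz0', zpow_natCast, zpow_natCast]
    push_cast
    field_simp

/-- centre of a valuation ring. -/
def centre (A : Subalgebra k L) (V : ValuationSubring L) (h : ∀ a : A, (a : L) ∈ V) : Ideal A where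
  carrier := {a | (a : L) ∈ V.nonunits}
  add_mem' := by
    intro a b ha hb
    simp only [Set.mem_ofPred_eq, ValuationSubring.mem_nonunits_iff] at *
    exact lt_of_le_of_lt (V.valuation.map_add _ _) (max_lt ha hb)
  zero_mem' := by simp [ValuationSubring.mem_nonunits_iff]
  smul_mem' := by
    intro c a ha
    simp only [Set.mem_ofPred_eq, ValuationSubring.mem_nonunits_iff] at *
    have hc := (V.valuation_le_one_iff _).2 (h c)
    simp only [smul_eq_mul, MulMemClass.coe_mul, map_mul]
    exact mul_lt_one_of_nonneg_of_lt_one_right hc zero_le ha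

theorem mem_centre {V : ValuationSubring L} (h : ∀ a : A, (a : L) ∈ V) (a : A) :
    a ∈ centre A V h ↔ (a : L) ∈ V.nonunits := Iff.rfl

theorem centre_prime {V : ValuationSubring L} (h : ∀ a : A, (a : L) ∈ V) : (centre A V h).IsPrime where
  ne_top' := by
    rw [Ideal.ne_top_iff_one, mem_centre, ValuationSubring.mem_nonunits_iff]; simp
  mem_or_mem' := by
    intro a b hab
    simp only [mem_centre, ValuationSubring.mem_nonunits_iff] at *
    by_contra hcon
    push Not at hcon
    rw [MulMemClass.coe_mul, map_mul] at hab
    exact absurd hab (not_lt.2 (one_le_mul_of_one_le_of_one_le hcon.1 hcon.2))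

theorem val_one {V : ValuationSubring L} (h : ∀ a : A, (a : L) ∈ V) {a : A} (ha : a ∉ centre A V h) :
    V.valuation a = 1 := by
  rw [mem_centre, ValuationSubring.mem_nonunits_iff, not_lt] at ha
  exact le_antisymm ((V.valuation_le_one_iff _).2 (h a)) ha

theorem centre_ne_bot (hA : Chart A) {V : ValuationSubring L} (h : ∀ a : A, (a : L) ∈ V) {f : L} (hf : f ∉ V) :
    centre A V h ≠ ⊥ := by
  intro hb
  obtain ⟨b, c, hc, rfl⟩ := hA.frac f
  apply hf
  rw [← V.valuation_le_one_iff, map_div₀, val_one h (a := c), div_one, V.valuation_le_one_iff]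
  · exact h b
  · rw [hb, Ideal.mem_bot]; simpa using hc

theorem val_zpow {V : ValuationSubring L} (h : ∀ a : A, (a : L) ∈ V) {z : A} {x : L} {e : ℤ} {c d : A}
    (hc : c ∉ centre A V h) (hd : d ∉ centre A V h) (hx : x = c / d * (z : L) ^ e) :
    V.valuation x = V.valuation (z : L) ^ e := by
  rw [hx, map_mul, map_div₀, val_one h hc, val_one h hd, map_zpow₀]; simp

theorem zpow_le_one_iff' {Γ₀ : Type*} [LinearOrderedCommGroupWithZero Γ₀] {v : Γ₀} (h0 : v ≠ 0) (h1 : v < 1) (e : ℤ) :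
    v ^ e ≤ 1 ↔ 0 ≤ e := by
  constructor
  · intro h
    by_contra hc
    have : 1 < v ^ e := by
      rw [← zpow_zero v]
      exact zpow_lt_zpow_right_of_lt_one₀ (zero_lt_iff.2 h0) h1 (by omega)
    exact absurd h (not_le.2 this)
  · intro h
    lift e to ℕ using h
    rw [zpow_natCast]; exact pow_le_one' h1.le e

theorem zpow_lt_one_iff' {Γ₀ : Type*} [LinearOrderedCommGroupWithZero Γ₀] {v : Γ₀} (h0 : v ≠ 0) (h1 : v < 1) (e : ℤ) :
    v ^ e < 1 ↔ 0 < e := by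
  have := zpow_le_one_iff' h0 h1 (-e)
  rw [zpow_neg, inv_le_one₀ (zpow_pos (zero_lt_iff.2 h0) e)] at this
  rw [← not_le, this]; omega

theorem chart_ext (hA : Chart A) {V V' : ValuationSubring L} (h : ∀ a : A, (a : L) ∈ V)
    (h' : ∀ a : A, (a : L) ∈ V') (hc : centre A V h = centre A V' h') (h0 : centre A V h ≠ ⊥) : V = V' := by
  have := centre_prime h
  obtain ⟨z, hz, hz0, hu⟩ := hA.zp (centre A V h) h0
  have hz' : (z : L) ≠ 0 := by simpa using hz0
  ext x
  by_cases hx : x = 0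
  · subst hx; exact ⟨fun _ => zero_mem _, fun _ => zero_mem _⟩
  obtain ⟨e, c, d, hc', hd', hx'⟩ := hu x hx
  rw [← V.valuation_le_one_iff, ← V'.valuation_le_one_iff, val_zpow h hc' hd' hx', val_zpow h' (hc ▸ hc') (hc ▸ hd') hx',
    zpow_le_one_iff', zpow_le_one_iff']
  · simpa using hz'
  · rw [hc] at hz; exact V'.mem_nonunits_iff.1 hz
  · simpa using hz'
  · exact V.mem_nonunits_iff.1 hz

theorem chart_ord (hA : Chart A) {V : ValuationSubring L} (h : ∀ a : A, (a : L) ∈ V) {f : L} (hf : f ∉ V) :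
    ∃ ord : L → ℤ, (∀ x y, x ≠ 0 → y ≠ 0 → ord (x * y) = ord x + ord y) ∧ (∀ x, x ≠ 0 → (x ∈ V ↔ 0 ≤ ord x)) ∧
      ∀ x, x ≠ 0 → (x ∈ V.nonunits ↔ 0 < ord x) := by
  have := centre_prime h
  obtain ⟨z, hz, hz0, hu⟩ := hA.zp (centre A V h) (centre_ne_bot hA h hf)
  have hz' : V.valuation (z : L) ≠ 0 := by simpa using hz0
  have hz1 : V.valuation (z : L) < 1 := V.mem_nonunits_iff.1 hz
  have : ∀ x : L, ∃ e : ℤ, x ≠ 0 → V.valuation x = V.valuation (z : L) ^ e := by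
    intro x
    by_cases hx : x = 0
    · exact ⟨0, fun h => absurd hx h⟩
    · obtain ⟨e, c, d, hc', hd', hx'⟩ := hu x hx
      exact ⟨e, fun _ => val_zpow h hc' hd' hx'⟩
  choose ord hord using this
  refine ⟨ord, fun x y hx hy => ?_, fun x hx => ?_, fun x hx => ?_⟩
  · have := hord (x * y) (mul_ne_zero hx hy)
    rw [map_mul, hord x hx, hord y hy, ← zpow_add₀ hz'] at this
    exact (zpow_right_injective₀ (zero_lt_iff.2 hz') hz1.ne this).symm
  · rw [← V.valuation_le_one_iff, hord x hx, zpow_le_one_iff' hz' hz1]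
  · rw [V.mem_nonunits_iff, hord x hx, zpow_lt_one_iff' hz' hz1]

theorem chart_fin (hA : Chart A) {f : L} (hf : f ≠ 0) :
    {V : ValuationSubring L | (∀ a : A, (a : L) ∈ V) ∧ f ∈ V.nonunits}.Finite := by
  have := hA.noeth
  obtain ⟨b, c, hc, hfbc⟩ := hA.frac f
  have hb0 : b ≠ 0 := by rintro rfl; simp at hfbc; exact hf hfbc
  have hfin := Ideal.finite_minimalPrimes_of_isNoetherianRing A (Ideal.span {b})
  have hbc : ∀ (V : ValuationSubring L) (h : ∀ a : A, (a : L) ∈ V), f ∈ V.nonunits → b ∈ centre A V h := by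
    intro V h hV
    rw [mem_centre]
    have : (b : L) = c * f := by rw [hfbc]; field_simp
    rw [this, V.mem_nonunits_iff, map_mul]
    exact mul_lt_one_of_nonneg_of_lt_one_right ((V.valuation_le_one_iff _).2 (h c)) zero_le (V.mem_nonunits_iff.1 hV)
  classical
  refine Set.Finite.of_injOn (f := fun V => if h : ∀ a : A, (a : L) ∈ V then centre A V h else ⊥) (t := (Ideal.span {b}).minimalPrimes) ?_ ?_ hfin
  · rintro V ⟨h, hV⟩
    simp only [h, implies_true, dif_pos]
    have hp := centre_prime h
    refine ⟨⟨hp, ?_⟩, ?_⟩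
    · rw [Ideal.span_singleton_le_iff_mem]; exact hbc V h hV
    · rintro q ⟨hq, hq2⟩ hqp
      have : q ≠ ⊥ := by
        rintro rfl
        exact hb0 (by simpa using hq2 (Ideal.mem_span_singleton_self b))
      have hqm := hA.maxl q this
      exact (hqm.eq_of_le hp.ne_top hqp).ge
  · rintro V ⟨h, hV⟩ V' ⟨h', hV'⟩ hVV
    simp only [h, h', implies_true, dif_pos] at hVV
    refine chart_ext hA h h' hVV ?_
    intro hbot
    have := hbc V h hV
    rw [hbot] at this
    exact hb0 (by simpa using this)

theorem chart_ic (hA : Chart A) {x : L} (hx : ∀ V : ValuationSubring L, (∀ a : A, (a : L) ∈ V) → x ∈ V) : x ∈ A := by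
  by_cases hx0 : x = 0
  · subst hx0; exact zero_mem _
  let I : Ideal A :=
    { carrier := {d | (d : L) * x ∈ A}
      add_mem' := by
        intro a b ha hb
        simp only [Set.mem_ofPred_eq] at *
        push_cast; rw [add_mul]; exact add_mem ha hb
      zero_mem' := by simp
      smul_mem' := by
        intro c a ha
        simp only [Set.mem_ofPred_eq] at *
        rw [smul_eq_mul, MulMemClass.coe_mul, mul_assoc]; exact mul_mem c.2 ha }
  by_contra hcon
  have hI : I ≠ ⊤ := by
    rw [Ideal.ne_top_iff_one]
    intro h
    have : ((1 : A) : L) * x ∈ A := h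
    simp at this
    exact hcon this
  obtain ⟨nn, hnn, hIn⟩ := Ideal.exists_le_maximal I hI
  have hn0 : nn ≠ ⊥ := by
    rintro rfl
    obtain ⟨b, c, hc, hx'⟩ := hA.frac x
    have : c ∈ I := by
      change (c : L) * x ∈ A
      rw [hx', mul_div_cancel₀ _ hc]; exact b.2
    have := hIn this
    exact hc (by simpa using this)
  obtain ⟨V, hV1, hV2⟩ := Ideal.image_subset_nonunits_valuationSubring (A := A.toSubring) nn hnn.ne_top
  have h : ∀ a : A, (a : L) ∈ V := fun a => hV1 a.2
  have hcen : nn = centre A V h := by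
    refine hnn.eq_of_le (centre_prime h).ne_top ?_
    intro a ha
    rw [mem_centre]
    exact hV2 ⟨a, ha, rfl⟩
  subst hcen
  have := centre_prime h
  obtain ⟨z, hz, hz0, hu⟩ := hA.zp _ hn0
  obtain ⟨e, c, d, hc, hd, hxe⟩ := hu x hx0
  have hxV := hx V h
  rw [← V.valuation_le_one_iff, val_zpow h hc hd hxe, zpow_le_one_iff' (by simpa using hz0) (V.mem_nonunits_iff.1 hz)] at hxV
  lift e to ℕ using hxV
  apply hd
  apply hIn
  change (d : L) * x ∈ A
  have hd0 : (d : L) ≠ 0 := by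
    intro h'
    have : d = 0 := by simpa using h'
    exact hd (this ▸ Ideal.zero_mem _)
  rw [hxe, zpow_natCast]
  have : (d : L) * (c / d * (z : L) ^ e) = (c * z ^ e : A) := by push_cast; field_simp
  rw [this]; exact Subtype.prop _
end chart


section val
open Algebra in
theorem val_int {L : Type*} [Field L] (B : Subring L) (m : Ideal B) (hm : m ≠ ⊤) (x : L)
    (hx : ∀ V : ValuationSubring L, (∀ a : B, (a : L) ∈ V) → (∀ a ∈ m, (a : L) ∈ V.nonunits) → x ∈ V) :
    ∃ s : B, s ∉ m ∧ IsIntegral B ((s : L) * x) := by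
  by_cases hx0 : x = 0
  · subst hx0
    exact ⟨1, fun h => hm ((Ideal.eq_top_iff_one _).2 h), by simpa using isIntegral_zero⟩
  let hi := invertibleOfNonzero (inv_ne_zero hx0)
  let B' := Algebra.adjoin B {x⁻¹}
  by_cases eq : m.map (algebraMap B B') ⊔ .span {⟨x⁻¹, subset_adjoin rfl⟩} = ⊤
  · obtain ⟨p, hp, hpx⟩ := exists_aeval_invOf_eq_zero_of_idealMap_adjoin_sup_span_eq_top x⁻¹ m hm eq
    rw [invOf_eq_inv, inv_inv] at hpx
    refine ⟨p.leadingCoeff, fun h => hm ((Ideal.eq_top_iff_one _).2 ?_), ?_⟩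
    · have := m.sub_mem h hp
      simpa using this
    · exact isIntegral_leadingCoeff_smul p x hpx
  · exfalso
    obtain ⟨V, hV1, hV2⟩ := Ideal.image_subset_nonunits_valuationSubring (A := B'.toSubring) _ eq
    have h1 : x⁻¹ ∈ V.nonunits := hV2 ⟨⟨x⁻¹, subset_adjoin rfl⟩, Ideal.mem_sup_right (Ideal.subset_span rfl), rfl⟩
    have h2 := (V.inv_mem_nonunits_iff.mp h1).resolve_left hx0
    refine h2 (hx V (fun a => hV1 (B'.algebraMap_mem a)) fun a ha => ?_)
    exact hV2 ⟨algebraMap B B' a, Ideal.mem_sup_left (Ideal.mem_map_of_mem _ ha), rfl⟩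

variable {k L : Type*} [Field k] [Field L] [Algebra k L] {n : ℕ} {ξ : Fin (n+1) → L}

theorem val_contains (hne : ∀ i, ξ i ≠ 0) (V : ValuationSubring L) (hk : ∀ c : k, algebraMap k L c ∈ V) :
    ∃ i, ∀ a : OO (k := k) ξ i, (a : L) ∈ V := by
  obtain ⟨i, hi⟩ := Finite.exists_max (fun l => V.valuation (ξ l))
  refine ⟨i, ?_⟩
  rintro ⟨_, F, rfl⟩
  have hl : ∀ l, ξ l / ξ i ∈ V := by
    intro l
    rw [← V.valuation_le_one_iff, map_div₀]
    exact div_le_one_of_le₀ (hi l) zero_le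
  change aeval (fun l => ξ l / ξ i) F ∈ V
  induction F using MvPolynomial.induction_on with
  | C a => rw [aeval_C]; exact hk a
  | add p q hp hq => rw [map_add]; exact add_mem hp hq
  | mul_X p l hp => rw [map_mul, aeval_X]; exact mul_mem hp (hl l)

theorem exists_ord (hne : ∀ i, ξ i ≠ 0) (hch : ∀ i, Chart (OO (k := k) ξ i)) (V : ValuationSubring L)
    (hk : ∀ c : k, algebraMap k L c ∈ V) {f : L} (hf : f ∉ V) :
    ∃ ord : L → ℤ, (∀ x y, x ≠ 0 → y ≠ 0 → ord (x * y) = ord x + ord y) ∧ (∀ x, x ≠ 0 → (x ∈ V ↔ 0 ≤ ord x)) ∧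
      ∀ x, x ≠ 0 → (x ∈ V.nonunits ↔ 0 < ord x) := by
  obtain ⟨i, hi⟩ := val_contains hne V hk
  exact chart_ord (hch i) hi hf

theorem val_finite (hne : ∀ i, ξ i ≠ 0) (hch : ∀ i, Chart (OO (k := k) ξ i)) {f : L} (hf : f ≠ 0) :
    {V : ValuationSubring L | (∀ c : k, algebraMap k L c ∈ V) ∧ f ∈ V.nonunits}.Finite := by
  refine (Set.finite_iUnion fun i => chart_fin (hch i) hf).subset ?_
  rintro V ⟨h1, h2⟩
  obtain ⟨i, hi⟩ := val_contains hne V h1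
  exact Set.mem_iUnion.2 ⟨i, hi, h2⟩
end val


section fil
variable {k L : Type*} [Field k] [Field L] [Algebra k L] {n : ℕ}

/-- `h` is represented by a form of degree `d` and weight at most `d w_j + r`. -/
def WRep (k : Type*) [Field k] {L : Type*} [Field L] [Algebra k L] {n : ℕ} (w : Fin (n+1) → ℕ) (ξ : Fin (n+1) → L)
    (j : Fin (n+1)) (r : ℤ) (d : ℕ) (h : L) : Prop :=
  ∃ F : MvPolynomial (Fin (n+1)) k, F.IsHomogeneous d ∧
    (∀ b ∈ F.support, (Finsupp.weight w b : ℤ) ≤ d * w j + r) ∧ aeval ξ F = h * ξ j ^ d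

/-- filtration. -/
def Fil (k : Type*) [Field k] {L : Type*} [Field L] [Algebra k L] {n : ℕ} (w : Fin (n+1) → ℕ) (ξ : Fin (n+1) → L)
    (j : Fin (n+1)) (r : ℤ) (h : L) : Prop := ∃ d, WRep k w ξ j r d h

variable {w : Fin (n+1) → ℕ} {ξ : Fin (n+1) → L} {j : Fin (n+1)}

theorem wt_mul {F G : MvPolynomial (Fin (n+1)) k} {s t : ℤ}
    (hF : ∀ b ∈ F.support, (Finsupp.weight w b : ℤ) ≤ s) (hG : ∀ b ∈ G.support, (Finsupp.weight w b : ℤ) ≤ t) :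
    ∀ b ∈ (F * G).support, (Finsupp.weight w b : ℤ) ≤ s + t := by
  classical
  intro b hb
  obtain ⟨b1, h1, b2, h2, rfl⟩ := Finset.mem_add.1 (support_mul F G hb)
  rw [map_add]
  push_cast
  exact add_le_add (hF _ h1) (hG _ h2)

theorem wt_add {F G : MvPolynomial (Fin (n+1)) k} {s : ℤ}
    (hF : ∀ b ∈ F.support, (Finsupp.weight w b : ℤ) ≤ s) (hG : ∀ b ∈ G.support, (Finsupp.weight w b : ℤ) ≤ s) :
    ∀ b ∈ (F + G).support, (Finsupp.weight w b : ℤ) ≤ s := by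
  classical
  intro b hb
  rcases Finset.mem_union.1 (support_add hb) with h | h
  · exact hF _ h
  · exact hG _ h

theorem wt_Xpow (l : Fin (n+1)) (e : ℕ) : ∀ b ∈ (X l ^ e : MvPolynomial (Fin (n+1)) k).support,
    (Finsupp.weight w b : ℤ) ≤ e * w l := by
  intro b hb
  rw [X_pow_eq_monomial] at hb
  have := support_monomial_subset hb
  rw [Finset.mem_singleton] at this
  subst this
  simp [Finsupp.weight_single]

theorem wt_mono {F : MvPolynomial (Fin (n+1)) k} {s t : ℤ} (hst : s ≤ t)
    (hF : ∀ b ∈ F.support, (Finsupp.weight w b : ℤ) ≤ s) : ∀ b ∈ F.support, (Finsupp.weight w b : ℤ) ≤ t :=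
  fun b hb => (hF b hb).trans hst

theorem WRep.raise {r : ℤ} {d : ℕ} {h : L} (H : WRep k w ξ j r d h) (e : ℕ) : WRep k w ξ j r (d + e) h := by
  obtain ⟨F, h1, h2, h3⟩ := H
  refine ⟨F * X j ^ e, h1.mul (isHomogeneous_X_pow j e), wt_mono ?_ (wt_mul h2 (wt_Xpow j e)), ?_⟩
  · push_cast; linarith
  · rw [map_mul, h3, map_pow, aeval_X, pow_add]; ring

theorem WRep.mono {r s : ℤ} {d : ℕ} {h : L} (hrs : r ≤ s) (H : WRep k w ξ j r d h) : WRep k w ξ j s d h := by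
  obtain ⟨F, h1, h2, h3⟩ := H
  exact ⟨F, h1, wt_mono (by linarith) h2, h3⟩

theorem WRep.mul {r s : ℤ} {d e : ℕ} {h h' : L} (H : WRep k w ξ j r d h) (H' : WRep k w ξ j s e h') :
    WRep k w ξ j (r + s) (d + e) (h * h') := by
  obtain ⟨F, h1, h2, h3⟩ := H
  obtain ⟨F', h1', h2', h3'⟩ := H'
  refine ⟨F * F', h1.mul h1', wt_mono ?_ (wt_mul h2 h2'), ?_⟩
  · push_cast; linarith
  · rw [map_mul, h3, h3', pow_add]; ring

theorem WRep.add {r : ℤ} {d : ℕ} {h h' : L} (H : WRep k w ξ j r d h) (H' : WRep k w ξ j r d h') :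
    WRep k w ξ j r d (h + h') := by
  obtain ⟨F, h1, h2, h3⟩ := H
  obtain ⟨F', h1', h2', h3'⟩ := H'
  exact ⟨F + F', h1.add h1', wt_add h2 h2', by rw [map_add, h3, h3', add_mul]⟩

theorem Fil.mono {r s : ℤ} {h : L} (hrs : r ≤ s) (H : Fil k w ξ j r h) : Fil k w ξ j s h :=
  H.imp fun _ => WRep.mono hrs

theorem Fil.mul {r s : ℤ} {h h' : L} (H : Fil k w ξ j r h) (H' : Fil k w ξ j s h') :
    Fil k w ξ j (r + s) (h * h') := by
  obtain ⟨d, H⟩ := H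
  obtain ⟨e, H'⟩ := H'
  exact ⟨_, H.mul H'⟩

theorem Fil.add {r : ℤ} {h h' : L} (H : Fil k w ξ j r h) (H' : Fil k w ξ j r h') :
    Fil k w ξ j r (h + h') := by
  obtain ⟨d, H⟩ := H
  obtain ⟨e, H'⟩ := H'
  exact ⟨d + e, (H.raise e).add (add_comm e d ▸ H'.raise d)⟩

theorem Fil.zero (r : ℤ) : Fil k w ξ j r (0 : L) := ⟨0, 0, isHomogeneous_zero _ _ _, by simp, by simp⟩

theorem Fil.const (c : k) : Fil k w ξ j 0 (algebraMap k L c) := by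
  refine ⟨0, C c, isHomogeneous_C _ _, ?_, by simp⟩
  intro b hb
  have : b = 0 := by
    have := support_monomial_subset (s := 0) (a := c) hb
    simpa using this
  subst this; simp

theorem Fil.one : Fil k w ξ j 0 (1 : L) := by simpa using Fil.const (k := k) (L := L) (w := w) (ξ := ξ) (j := j) 1

theorem Fil.neg {r : ℤ} {h : L} (H : Fil k w ξ j r h) : Fil k w ξ j r (-h) := by
  have := (Fil.const (w := w) (ξ := ξ) (j := j) (-1 : k)).mul H
  simpa using this

theorem Fil.sum {ι : Type*} (s : Finset ι) {r : ℤ} (h : ι → L) (H : ∀ i ∈ s, Fil k w ξ j r (h i)) :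
    Fil k w ξ j r (∑ i ∈ s, h i) :=
  Finset.sum_induction _ (fun x => Fil k w ξ j r x) (fun _ _ => Fil.add) (Fil.zero r) H

theorem Fil.pow {r : ℤ} {h : L} (H : Fil k w ξ j r h) (N : ℕ) : Fil k w ξ j (N * r) (h ^ N) := by
  induction N with
  | zero => simpa using Fil.one
  | succ N ih =>
    rw [pow_succ]
    have := ih.mul H
    convert this using 1
    push_cast; ring

theorem Fil.coord (hne : ∀ i, ξ i ≠ 0) (l : Fin (n+1)) : Fil k w ξ j ((w l : ℤ) - w j) (ξ l / ξ j) := by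
  refine ⟨1, X l, isHomogeneous_X _ _, ?_, ?_⟩
  · have := wt_Xpow (k := k) (w := w) l 1
    rw [pow_one] at this
    refine wt_mono ?_ this
    push_cast; linarith
  · rw [aeval_X, pow_one, div_mul_cancel₀ _ (hne j)]

theorem aeval_ratio (hne : ∀ i, ξ i ≠ 0) {F : MvPolynomial (Fin (n+1)) k} {d : ℕ} (hF : F.IsHomogeneous d) :
    aeval ξ F = aeval (fun l => ξ l / ξ j) F * ξ j ^ d := by
  rw [mul_comm, ← hom_scale hF]
  congr 2
  funext l
  rw [mul_div_cancel₀ _ (hne j)]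

theorem Fil.mem_OO (hne : ∀ i, ξ i ≠ 0) {r : ℤ} {h : L} (H : Fil k w ξ j r h) : h ∈ OO (k := k) ξ j := by
  obtain ⟨d, F, h1, h2, h3⟩ := H
  rw [aeval_ratio hne (j := j) h1] at h3
  exact ⟨F, mul_right_cancel₀ (pow_ne_zero d (hne j)) h3⟩

theorem Fil.of_OO (hne : ∀ i, ξ i ≠ 0) {h : L} (H : h ∈ OO (k := k) ξ j) : ∃ r : ℕ, Fil k w ξ j r h := by
  obtain ⟨F, rfl⟩ := H
  change ∃ r : ℕ, Fil k w ξ j r (aeval (fun l => ξ l / ξ j) F)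
  induction F using MvPolynomial.induction_on with
  | C a => exact ⟨0, by rw [aeval_C]; exact Fil.const a⟩
  | add p q hp hq =>
    obtain ⟨r, hr⟩ := hp
    obtain ⟨s, hs⟩ := hq
    refine ⟨r + s, ?_⟩
    rw [map_add]
    exact (hr.mono (by push_cast; linarith [Int.natCast_nonneg s])).add (hs.mono (by push_cast; linarith [Int.natCast_nonneg r]))
  | mul_X p l hp =>
    obtain ⟨r, hr⟩ := hp
    refine ⟨r + w l, ?_⟩
    rw [map_mul, aeval_X]
    exact (hr.mul (Fil.coord hne l)).mono (by push_cast; linarith [Int.natCast_nonneg (w j)])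

/-- the ring of functions of filtration degree 0. -/
def filB (k : Type*) [Field k] {L : Type*} [Field L] [Algebra k L] {n : ℕ} (w : Fin (n+1) → ℕ) (ξ : Fin (n+1) → L)
    (j : Fin (n+1)) : Subring L where
  carrier := {h | Fil k w ξ j 0 h}
  mul_mem' := fun {a b} ha hb => by simpa using Fil.mul (show Fil k w ξ j 0 a from ha) (show Fil k w ξ j 0 b from hb)
  one_mem' := Fil.one
  add_mem' := fun {a b} ha hb => Fil.add (show Fil k w ξ j 0 a from ha) (show Fil k w ξ j 0 b from hb)
  zero_mem' := Fil.zero 0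
  neg_mem' := fun {a} ha => Fil.neg (show Fil k w ξ j 0 a from ha)

theorem mem_filB {h : L} : h ∈ filB k w ξ j ↔ Fil k w ξ j 0 h := Iff.rfl

/-- its ideal. -/
def filM (k : Type*) [Field k] {L : Type*} [Field L] [Algebra k L] {n : ℕ} (w : Fin (n+1) → ℕ) (ξ : Fin (n+1) → L)
    (j : Fin (n+1)) : Ideal (filB k w ξ j) where
  carrier := {h | Fil k w ξ j (-1) (h : L)}
  add_mem' := fun {a b} ha hb => Fil.add (show Fil k w ξ j (-1) (a : L) from ha) (show Fil k w ξ j (-1) (b : L) from hb)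
  zero_mem' := Fil.zero (-1)
  smul_mem' := fun c a ha => by simpa using Fil.mul (show Fil k w ξ j 0 (c : L) from c.2) (show Fil k w ξ j (-1) (a : L) from ha)

theorem mem_filM {h : filB k w ξ j} : h ∈ filM k w ξ j ↔ Fil k w ξ j (-1) (h : L) := Iff.rfl

end fil


section um
variable {k : Type*} [Field k] {σ : Type*}

/-- unique maximum. -/
def UM (φ : (σ →₀ ℕ) →+ ℕ) (F : MvPolynomial σ k) (b : σ →₀ ℕ) : Prop :=
  ∀ b' ∈ F.support, b' ≠ b → φ b' < φ b

theorem UM.le {φ : (σ →₀ ℕ) →+ ℕ} {F : MvPolynomial σ k} {b : σ →₀ ℕ} (h : UM φ F b) {b'} (hb : b' ∈ F.support) : φ b' ≤ φ b := by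
  by_cases h' : b' = b
  · rw [h']
  · exact (h b' hb h').le

theorem UM.coeff_mul {φ : (σ →₀ ℕ) →+ ℕ} {F G : MvPolynomial σ k} {b c : σ →₀ ℕ} (hF : UM φ F b) (hG : UM φ G c) :
    coeff (b + c) (F * G) = coeff b F * coeff c G := by
  classical
  rw [MvPolynomial.coeff_mul, Finset.sum_eq_single (b, c)]
  · rintro ⟨b', c'⟩ hbc hne
    rw [Finset.HasAntidiagonal.mem_antidiagonal] at hbc
    simp only at hbc ⊢
    by_contra h0
    have h1 : b' ∈ F.support := by rw [mem_support_iff]; exact left_ne_zero_of_mul h0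
    have h2 : c' ∈ G.support := by rw [mem_support_iff]; exact right_ne_zero_of_mul h0
    have h3 := congrArg φ hbc
    rw [map_add, map_add] at h3
    have e1 : b' = b := by
      by_contra h
      have := hF b' h1 h
      have := hG.le h2
      omega
    have e2 : c' = c := by
      by_contra h
      have := hF.le h1
      have := hG c' h2 h
      omega
    exact hne (by rw [e1, e2])
  · intro h; exact absurd (by rw [Finset.HasAntidiagonal.mem_antidiagonal]) h

theorem UM.mul {φ : (σ →₀ ℕ) →+ ℕ} {F G : MvPolynomial σ k} {b c : σ →₀ ℕ} (hF : UM φ F b) (hG : UM φ G c) :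
    UM φ (F * G) (b + c) := by
  classical
  intro d hd hne
  obtain ⟨b', h1, c', h2, rfl⟩ := Finset.mem_add.1 (support_mul F G hd)
  rw [map_add, map_add]
  have := hF.le h1
  have := hG.le h2
  by_cases e1 : b' = b
  · have e2 : c' ≠ c := by rintro rfl; exact hne (by rw [e1])
    have := hG c' h2 e2
    omega
  · have := hF b' h1 e1
    omega

theorem UM.monomial {φ : (σ →₀ ℕ) →+ ℕ} (b : σ →₀ ℕ) (a : k) : UM φ (MvPolynomial.monomial b a) b := by
  intro b' hb' hne
  have := support_monomial_subset hb'
  exact absurd (Finset.mem_singleton.1 this) hne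

theorem UM.pow {φ : (σ →₀ ℕ) →+ ℕ} {F : MvPolynomial σ k} {b : σ →₀ ℕ} (hF : UM φ F b) (N : ℕ) :
    UM φ (F ^ N) (N • b) ∧ coeff (N • b) (F ^ N) = coeff b F ^ N := by
  induction N with
  | zero =>
    rw [zero_smul, pow_zero, pow_zero]
    exact ⟨UM.monomial 0 1, by simp⟩
  | succ N ih =>
    rw [pow_succ, succ_nsmul, pow_succ, ih.1.coeff_mul hF, ih.2]
    exact ⟨ih.1.mul hF, rfl⟩
end um

section nf
variable {k L : Type*} [Field k] [Field L] [Algebra k L] {n : ℕ}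
variable {Γ : SComplex n} {J : Ideal (MvPolynomial (Fin (n+1)) k)} {w : Fin (n+1) → ℕ} {ξ : Fin (n+1) → L} {j : Fin (n+1)}

theorem FF.sub_mem {F G : MvPolynomial (Fin (n+1)) k} (ff : FF J L ξ) {d : ℕ} (hF : F.IsHomogeneous d)
    (hG : G.IsHomogeneous d) (h : aeval ξ F = aeval ξ G) : F - G ∈ J := by
  rw [← ff.mem _ d (hF.sub hG), map_sub, h, sub_self]

theorem wrep_nf (g : GData Γ J w) (ff : FF J L ξ) {r : ℤ} {d : ℕ} {h : L} (H : WRep k w ξ j r d h) :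
    ∃ F : MvPolynomial (Fin (n+1)) k, F.IsHomogeneous (d+1) ∧
    (∀ b ∈ F.support, (Finsupp.weight w b : ℤ) ≤ (d + 1 : ℕ) * w j + r) ∧ aeval ξ F = h * ξ j ^ (d+1) ∧
    (∀ b ∈ F.support, b.support ∈ Γ.faces) ∧
    ∀ b ∈ F.support, (Finsupp.weight w b : ℤ) = (d + 1 : ℕ) * w j + r → b j ≠ 0 := by
  obtain ⟨F, h1, h2, h3⟩ := H
  by_cases hT : (d * w j + r : ℤ) < 0
  · have hF : F = 0 := by
      rw [← support_eq_empty, Finset.eq_empty_iff_forall_notMem]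
      intro b hb
      have := h2 b hb
      have := Int.natCast_nonneg (Finsupp.weight w b)
      linarith
    subst hF
    refine ⟨0, isHomogeneous_zero _ _ _, by simp, ?_, by simp, by simp⟩
    have h0 : h = 0 := by
      rw [map_zero] at h3
      exact (mul_eq_zero.1 h3.symm).resolve_right (pow_ne_zero _ (ff.ne j))
    simp [h0]
  push Not at hT
  obtain ⟨T, hT'⟩ := Int.eq_ofNat_of_zero_le hT
  obtain ⟨G, g1, g2, g3, g4, g5⟩ := g.nf d T F h1 (fun b hb => by have := h2 b hb; rw [hT'] at this; exact_mod_cast this)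
  have g6 : ∀ b ∈ (G * X j ^ 1).support, (Finsupp.weight w b : ℤ) ≤ T + (1 : ℕ) * w j :=
    wt_mul (fun b hb => by exact_mod_cast g4 b hb) (wt_Xpow j 1)
  rw [pow_one] at g6
  obtain ⟨G', k1, k2, k3, k4, k5⟩ := g.nf (d+1) (T + w j) (G * X j) (g1.mul (isHomogeneous_X k j))
    (fun b hb => by have := g6 b hb; push_cast at this; rw [one_mul] at this; exact_mod_cast this)
  have e1 : aeval ξ F = aeval ξ G := by
    have := (ff.mem _ d (h1.sub g1)).2 g2
    rwa [map_sub, sub_eq_zero] at this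
  have e2 : aeval ξ (G * X j) = aeval ξ G' := by
    have := (ff.mem _ (d+1) ((g1.mul (isHomogeneous_X k j)).sub k1)).2 k2
    rwa [map_sub, sub_eq_zero] at this
  have eT : ((d + 1 : ℕ) * w j + r : ℤ) = ((T + w j : ℕ) : ℤ) := by
    push_cast; push_cast at hT'; linarith
  refine ⟨G', k1, ?_, ?_, k3, ?_⟩
  · intro b hb
    rw [eT]; exact_mod_cast k4 b hb
  · rw [← e2, map_mul, aeval_X, ← e1, h3]; ring
  · intro b hb hbT hj
    rw [eT] at hbT
    have := k5 b (k3 b hb) (by exact_mod_cast hbT)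
    rw [mem_support_iff] at hb
    apply hb
    rw [this, coeff_mul_X', if_neg]
    simpa using hj

theorem top_form (hgraph : Γ.IsGraph) {b : Fin (n+1) →₀ ℕ} {D : ℕ} (hb : b.support ∈ Γ.faces) (hj : b j ≠ 0)
    (hD : b.degree = D) : ∃ (i : Fin (n+1)), i ≠ j ∧ b i + b j = D ∧ b = Finsupp.single i (b i) + Finsupp.single j (b j) ∧
      (b i ≠ 0 → {i, j} ∈ Γ.faces) ∨ b = Finsupp.single j D := by
  classical
  by_cases h : ∃ i, i ≠ j ∧ b i ≠ 0
  · obtain ⟨i, hij, hi⟩ := h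
    have hs : b.support = {i, j} := by
      symm
      apply Finset.eq_of_subset_of_card_le
      · intro l hl
        simp only [Finset.mem_insert, Finset.mem_singleton] at hl
        rcases hl with rfl | rfl <;> simpa
      · rw [Finset.card_pair hij]; exact hgraph.1 _ hb
    have hb2 : b = Finsupp.single i (b i) + Finsupp.single j (b j) := by
      ext l
      by_cases h1 : l = i
      · subst h1; simp [hij.symm, Finsupp.single_apply]
      by_cases h2 : l = j
      · subst h2; simp [hij, Finsupp.single_apply]
      have : l ∉ b.support := by rw [hs]; simp [h1, h2]
      simp only [Finsupp.mem_support_iff, not_not] at this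
      simp [this, Finsupp.single_apply, Ne.symm h1, Ne.symm h2]
    refine ⟨i, Or.inl ⟨hij, ?_, hb2, fun _ => hs ▸ hb⟩⟩
    rw [← hD]; conv_rhs => rw [hb2]
    simp [Finsupp.degree_single]
  · push Not at h
    have hb2 : b = Finsupp.single j (b j) := by
      ext l
      by_cases h2 : l = j
      · subst h2; simp
      · simp [h l h2, Finsupp.single_apply, Ne.symm h2]
    refine ⟨j, Or.inr ?_⟩
    rw [← hD]; conv_rhs => rw [hb2]
    simpa [Finsupp.degree_single] using hb2

theorem isHom_deg {F : MvPolynomial (Fin (n+1)) k} {d : ℕ} (hF : F.IsHomogeneous d) {b : Fin (n+1) →₀ ℕ}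
    (hb : b ∈ F.support) : b.degree = d := by
  by_contra h
  exact mem_support_iff.1 hb (hF.coeff_eq_zero h)

theorem top_edge (hgraph : Γ.IsGraph) (winj : Function.Injective w) {b : Fin (n+1) →₀ ℕ} {D : ℕ} {r : ℤ}
    (hb : b.support ∈ Γ.faces) (hj : b j ≠ 0)
    (hD : b.degree = D) (hw : (Finsupp.weight w b : ℤ) = D * w j + r) :
    (r = 0 ∧ b = Finsupp.single j D) ∨ (r ≠ 0 ∧ ∃ i, i ≠ j ∧ {i, j} ∈ Γ.faces ∧ b i ≠ 0 ∧
      b = Finsupp.single i (b i) + Finsupp.single j (b j) ∧ (b i : ℤ) * ((w i : ℤ) - w j) = r ∧ b i + b j = D) := by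
  have key : b = Finsupp.single j D → r = 0 := by
    intro h
    rw [h, Finsupp.weight_single] at hw
    simp at hw
    exact hw
  obtain ⟨i, h | h⟩ := top_form hgraph hb hj hD
  · obtain ⟨hij, hs, hb2, hf⟩ := h
    by_cases hi : b i = 0
    · have : b = Finsupp.single j D := by
        have h2 : b j = D := by omega
        rw [hb2, hi, h2]; simp
      exact Or.inl ⟨key this, this⟩
    · right
      have hr : (b i : ℤ) * ((w i : ℤ) - w j) = r := by
        have h1 : Finsupp.weight w b = b i * w i + b j * w j := by
          conv_lhs => rw [hb2]
          simp [Finsupp.weight_single]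
        rw [h1, ← hs] at hw
        push_cast at hw
        linarith
      refine ⟨?_, i, hij, hf hi, hi, hb2, hr, hs⟩
      rw [← hr]
      refine mul_ne_zero (by exact_mod_cast hi) (sub_ne_zero.2 ?_)
      exact fun h => hij (winj (by exact_mod_cast h))
  · exact Or.inl ⟨key h, h⟩
end nf


section root
variable {k L : Type*} [Field k] [Field L] [Algebra k L] {n : ℕ}
variable {Γ : SComplex n} {J : Ideal (MvPolynomial (Fin (n+1)) k)} {w : Fin (n+1) → ℕ} {ξ : Fin (n+1) → L} {j : Fin (n+1)}

theorem wt_pow {F : MvPolynomial (Fin (n+1)) k} {s : ℤ}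
    (hF : ∀ b ∈ F.support, (Finsupp.weight w b : ℤ) ≤ s) (N : ℕ) :
    ∀ b ∈ (F ^ N).support, (Finsupp.weight w b : ℤ) ≤ N * s := by
  induction N with
  | zero =>
    intro b hb
    rw [pow_zero] at hb
    have : b = 0 := by
      have := support_monomial_subset (R := k) (s := 0) (a := 1) hb
      simpa using this
    subst this; simp
  | succ N ih =>
    rw [pow_succ]
    refine wt_mono ?_ (wt_mul ih hF)
    push_cast; linarith

theorem wt_sub {F G : MvPolynomial (Fin (n+1)) k} {s : ℤ}
    (hF : ∀ b ∈ F.support, (Finsupp.weight w b : ℤ) ≤ s) (hG : ∀ b ∈ G.support, (Finsupp.weight w b : ℤ) ≤ s) :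
    ∀ b ∈ (F - G).support, (Finsupp.weight w b : ℤ) ≤ s := by
  rw [sub_eq_add_neg]
  refine wt_add hF ?_
  rwa [support_neg]

theorem face_pair {i : Fin (n+1)} (hf : {i, j} ∈ Γ.faces) {x : Fin (n+1) →₀ ℕ} (hx : ∀ l, l ≠ i → l ≠ j → x l = 0) :
    x.support ∈ Γ.faces := by
  classical
  refine Γ.down_closed hf ?_
  intro l hl
  rw [Finset.mem_insert, Finset.mem_singleton]
  by_contra h
  push Not at h
  exact (Finsupp.mem_support_iff.1 hl) (hx l h.1 h.2)

theorem fil_root (g : GData Γ J w) (ff : FF J L ξ) (hgraph : Γ.IsGraph) {r : ℤ} (hr : 1 ≤ r) {N : ℕ}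
    {h : L} (H : Fil k w ξ j r h) (H' : Fil k w ξ j (N * r - 1) (h ^ N)) : Fil k w ξ j (r - 1) h := by
  obtain ⟨d, H⟩ := H
  obtain ⟨F, f1, f2, f3, f4, f5⟩ := wrep_nf g ff H
  set D := d + 1
  by_cases htop : ∃ b ∈ F.support, (Finsupp.weight w b : ℤ) = D * w j + r
  swap
  · push Not at htop
    refine ⟨D, F, f1, fun b hb => ?_, f3⟩
    have := f2 b hb
    have := htop b hb
    omega
  exfalso
  obtain ⟨b, hb, hbw⟩ := htop
  rcases top_edge hgraph g.winj (f4 b hb) (f5 b hb hbw) (isHom_deg f1 hb) hbw with ⟨h0, _⟩ | ⟨_, i, hij, hf, hbi, hb2, hbr, hbD⟩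
  · omega
  let φ : (Fin (n+1) →₀ ℕ) →+ ℕ := (D + 1) • (Finsupp.weight w : (Fin (n+1) →₀ ℕ) →+ ℕ) + Finsupp.applyAddHom i
  have hφ : ∀ x, φ x = (D + 1) * Finsupp.weight w x + x i := fun x => by simp [φ]
  have hUM : UM φ F b := by
    intro b' hb' hne
    rw [hφ, hφ]
    have hdeg : b' i ≤ D := by
      rw [← isHom_deg f1 hb']; exact Finsupp.le_degree i b'
    have hle := f2 b' hb'
    rw [← hbw] at hle
    have hle : Finsupp.weight w b' ≤ Finsupp.weight w b := by exact_mod_cast hle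
    rcases hle.lt_or_eq with hlt | heq
    · nlinarith
    · rw [heq]
      have hbw' : (Finsupp.weight w b' : ℤ) = D * w j + r := by rw [heq, hbw]
      rcases top_edge hgraph g.winj (f4 b' hb') (f5 b' hb' hbw') (isHom_deg f1 hb') hbw' with ⟨h0, _⟩ | ⟨_, i', hij', hf', hbi', hb2', hbr', hbD'⟩
      · omega
      by_cases hii : i' = i
      · subst hii
        exfalso
        apply hne
        have hne0 : (w i' : ℤ) - w j ≠ 0 := by
          intro h; rw [h] at hbr; omega
        have e1 : b' i' = b i' := by
          have := mul_right_cancel₀ hne0 (hbr'.trans hbr.symm)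
          exact_mod_cast this
        have e2 : b' j = b j := by omega
        rw [hb2', hb2, e1, e2]
      · have : b' i = 0 := by
          rw [hb2']; simp [Ne.symm hii, hij.symm, hij, hii]
        omega
  obtain ⟨E, F', e1, e2, e3⟩ := H'
  have hXj : UM φ (X j ^ E : MvPolynomial (Fin (n+1)) k) (Finsupp.single j E) := by
    rw [X_pow_eq_monomial]; exact UM.monomial _ _
  obtain ⟨p1, p2⟩ := hUM.pow N
  set x := N • b + Finsupp.single j E with hx
  have hc1 : coeff x (F ^ N * X j ^ E) = coeff b F ^ N := by
    rw [hx, p1.coeff_mul hXj, p2, X_pow_eq_monomial, coeff_monomial]; simp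
  have hwx : (Finsupp.weight w x : ℤ) = N * (D * w j + r) + E * w j := by
    rw [hx, map_add, map_nsmul, Finsupp.weight_single]
    push_cast
    rw [← hbw]; simp
  have hw1 := wt_mul (wt_pow f2 N) (wt_Xpow (k := k) (w := w) j E)
  have hw2 := wt_mul e2 (wt_Xpow (k := k) (w := w) j (D * N))
  have hc2 : coeff x (F' * X j ^ (D * N)) = 0 := by
    by_contra hne
    have := hw2 x (mem_support_iff.2 hne)
    rw [hwx] at this
    push_cast at this
    nlinarith
  have hh1 : (F ^ N * X j ^ E).IsHomogeneous (D * N + E) := (f1.pow N).mul (isHomogeneous_X_pow j E)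
  have hh2 : (F' * X j ^ (D * N)).IsHomogeneous (D * N + E) := by
    rw [add_comm (D * N) E]; exact e1.mul (isHomogeneous_X_pow j _)
  have hJ : F ^ N * X j ^ E - F' * X j ^ (D * N) ∈ J := by
    refine ff.sub_mem hh1 hh2 ?_
    simp only [map_mul, map_pow, aeval_X, f3, e3]
    ring
  have hsupp : x.support ∈ Γ.faces := by
    refine face_pair hf fun l h1 h2 => ?_
    have : b l = 0 := by rw [hb2]; simp [h1, h2]
    rw [hx]
    simp [this, h2]
  have := g.top0 hJ (hh1.sub hh2) (T := Finsupp.weight w x) (fun b' hb' => ?_) hsupp rfl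
  · rw [coeff_sub, hc1, hc2, sub_zero] at this
    exact pow_ne_zero N (mem_support_iff.1 hb) this
  · have h3 := wt_sub hw1 (wt_mono (by push_cast; nlinarith) hw2) b' hb'
    have : (Finsupp.weight w b' : ℤ) ≤ Finsupp.weight w x := by
      rw [hwx]; exact h3
    exact_mod_cast this

theorem fil_ic (g : GData Γ J w) (ff : FF J L ξ) (hgraph : Γ.IsGraph) {h : L} (hO : h ∈ OO (k := k) ξ j)
    (hint : IsIntegral (filB k w ξ j) h) : Fil k w ξ j 0 h := by
  classical
  have hex := Fil.of_OO (w := w) ff.ne hO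
  have hmin := Nat.find_spec hex
  have hmin' := fun m => Nat.find_min hex (m := m)
  set r := Nat.find hex
  by_cases hr0 : r = 0
  · rw [hr0] at hmin; simpa using hmin
  exfalso
  obtain ⟨p, hp, hp0⟩ := hint
  have key : Fil k w ξ j (p.natDegree * r - 1) (h ^ p.natDegree) := by
    have : h ^ p.natDegree = - ∑ i ∈ Finset.range p.natDegree, (p.coeff i : L) * h ^ i := by
      rw [Polynomial.eval₂_eq_sum_range, Finset.sum_range_succ, hp.coeff_natDegree] at hp0
      simp only [map_one, one_mul] at hp0
      rw [eq_neg_iff_add_eq_zero, add_comm]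
      exact hp0
    rw [this]
    refine Fil.neg (Fil.sum _ _ fun i hi => ?_)
    have hi : i < p.natDegree := Finset.mem_range.1 hi
    have h1 : Fil k w ξ j 0 (p.coeff i : L) := (p.coeff i).2
    refine (h1.mul (hmin.pow i)).mono ?_
    have : (i + 1) * r ≤ p.natDegree * r := Nat.mul_le_mul_right _ hi
    have : ((i : ℤ) + 1) * r ≤ p.natDegree * r := by exact_mod_cast this
    have : 1 ≤ (r : ℤ) := by omega
    nlinarith
  have := fil_root g ff hgraph (r := r) (by omega) hmin key
  refine hmin' (r - 1) (by omega) ?_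
  rwa [Nat.cast_sub (by omega), Nat.cast_one]

theorem one_not_fil (g : GData Γ J w) (ff : FF J L ξ) (hvert : ∀ i, {i} ∈ Γ.faces) :
    ¬ Fil k w ξ j (-1) (1 : L) := by
  rintro ⟨d, F, h1, h2, h3⟩
  have hJ : X j ^ d - F ∈ J := ff.sub_mem (isHomogeneous_X_pow j d) h1 (by rw [h3, map_pow, aeval_X, one_mul])
  have hw : Finsupp.weight w (Finsupp.single j d) = d * w j := by simp [Finsupp.weight_single]
  have hc : coeff (Finsupp.single j d) F = 0 := by
    by_contra hne
    have := h2 _ (mem_support_iff.2 hne)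
    rw [hw] at this
    push_cast at this
    linarith
  have := g.top0 hJ ((isHomogeneous_X_pow j d).sub h1) (T := d * w j) (fun b hb => ?_) (b := Finsupp.single j d) ?_ hw
  · rw [coeff_sub, hc, X_pow_eq_monomial, coeff_monomial] at this
    simp at this
  · have := wt_sub (wt_Xpow j d) (wt_mono (by linarith) h2) b hb
    exact_mod_cast this
  · exact Γ.down_closed (hvert j) Finsupp.support_single_subset
end root


section uniq
variable {k L : Type*} [Field k] [Field L] [Algebra k L] {n : ℕ}
variable {Γ : SComplex n} {J : Ideal (MvPolynomial (Fin (n+1)) k)} {w : Fin (n+1) → ℕ} {ξ : Fin (n+1) → L} {j : Fin (n+1)}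

/-- the valuation rings centred at the point `j`. -/
def TT (k : Type*) [Field k] {L : Type*} [Field L] [Algebra k L] {n : ℕ} (w : Fin (n+1) → ℕ) (ξ : Fin (n+1) → L)
    (j : Fin (n+1)) : Set (ValuationSubring L) :=
  {V | (∀ a : L, Fil k w ξ j 0 a → a ∈ V) ∧ ∀ a : L, Fil k w ξ j (-1) a → a ∈ V.nonunits}

theorem filM_ne_top (g : GData Γ J w) (ff : FF J L ξ) (hvert : ∀ i, {i} ∈ Γ.faces) : filM k w ξ j ≠ ⊤ := by
  rw [Ideal.ne_top_iff_one, mem_filM]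
  exact one_not_fil g ff hvert

theorem mem_TT {V : ValuationSubring L} (h1 : ∀ a : filB k w ξ j, (a : L) ∈ V)
    (h2 : ∀ a ∈ filM k w ξ j, (a : L) ∈ V.nonunits) : V ∈ TT k w ξ j :=
  ⟨fun a ha => h1 ⟨a, ha⟩, fun a ha => h2 ⟨a, ha.mono (by norm_num)⟩ ha⟩

theorem TT_nonempty (g : GData Γ J w) (ff : FF J L ξ) (hvert : ∀ i, {i} ∈ Γ.faces) : (TT k w ξ j).Nonempty := by
  obtain ⟨V, h1, h2⟩ := Ideal.image_subset_nonunits_valuationSubring _ (filM_ne_top (j := j) g ff hvert)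
  exact ⟨V, mem_TT (fun a => h1 a.2) fun a ha => h2 ⟨a, ha, rfl⟩⟩

theorem TT_k {V : ValuationSubring L} (hV : V ∈ TT k w ξ j) (c : k) : algebraMap k L c ∈ V := hV.1 _ (Fil.const c)

theorem TT_unit {V : ValuationSubring L} (hV : V ∈ TT k w ξ j) {c : k} (hc : c ≠ 0) : V.valuation (algebraMap k L c) = 1 := by
  refine le_antisymm ((V.valuation_le_one_iff _).2 (TT_k hV c)) ?_
  have := (V.valuation_le_one_iff _).2 (TT_k hV c⁻¹)
  rw [map_inv₀, map_inv₀] at this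
  rwa [inv_le_one₀ (by rw [zero_lt_iff]; simpa using hc)] at this

theorem exists_mult (g : GData Γ J w) (ff : FF J L ξ) (hgraph : Γ.IsGraph) (hvert : ∀ i, {i} ∈ Γ.faces)
    (hch : ∀ i, Chart (OO (k := k) ξ i)) {h : L} (hh : ∀ V ∈ TT k w ξ j, h ∈ V) :
    ∃ s : L, Fil k w ξ j 0 s ∧ ¬ Fil k w ξ j (-1) s ∧ Fil k w ξ j 0 (s * h) := by
  obtain ⟨s, hs, hint⟩ := val_int (filB k w ξ j) (filM k w ξ j) (filM_ne_top g ff hvert) h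
    (fun V h1 h2 => hh V (mem_TT h1 h2))
  refine ⟨s, s.2, hs, fil_ic g ff hgraph ?_ hint⟩
  refine chart_ic (hch j) fun V hV => ?_
  obtain ⟨p, hp, hp0⟩ := hint
  have hle : filB k w ξ j ≤ V.toSubring := fun a ha => hV ⟨a, Fil.mem_OO ff.ne ha⟩
  have : IsIntegral V ((s : L) * h) := by
    refine ⟨p.map (Subring.inclusion hle), hp.map _, ?_⟩
    rw [Polynomial.eval₂_map]
    exact hp0
  obtain ⟨y, hy⟩ := IsIntegrallyClosed.isIntegral_iff.1 this
  rw [← hy]; exact y.2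

theorem unit_rep (g : GData Γ J w) (ff : FF J L ξ) (hgraph : Γ.IsGraph) {s : L} (h0 : Fil k w ξ j 0 s)
    (h1 : ¬ Fil k w ξ j (-1) s) : ∃ (D : ℕ) (F : MvPolynomial (Fin (n+1)) k), F.IsHomogeneous D ∧
      (∀ b ∈ F.support, (Finsupp.weight w b : ℤ) ≤ D * w j) ∧ aeval ξ F = s * ξ j ^ D ∧
      coeff (Finsupp.single j D) F ≠ 0 ∧ ∀ b ∈ F.support, b ≠ Finsupp.single j D → (Finsupp.weight w b : ℤ) < D * w j := by
  obtain ⟨d, H⟩ := h0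
  obtain ⟨F, f1, f2, f3, f4, f5⟩ := wrep_nf g ff H
  have key : ∀ b ∈ F.support, b ≠ Finsupp.single j (d+1) → (Finsupp.weight w b : ℤ) < (d + 1 : ℕ) * w j := by
    intro b hb hne
    have h2 := f2 b hb
    rw [add_zero] at h2
    refine lt_of_le_of_ne h2 fun heq => ?_
    have heq' : (Finsupp.weight w b : ℤ) = (d + 1 : ℕ) * w j + 0 := by rw [add_zero]; exact heq
    rcases top_edge hgraph g.winj (f4 b hb) (f5 b hb heq') (isHom_deg f1 hb) heq' with ⟨_, h⟩ | ⟨h, _⟩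
    · exact hne h
    · exact h rfl
  refine ⟨d + 1, F, f1, by simpa using f2, f3, fun hc => h1 ⟨d + 1, F, f1, fun b hb => ?_, f3⟩, key⟩
  have hne : b ≠ Finsupp.single j (d+1) := by
    rintro rfl; exact mem_support_iff.1 hb hc
  have := key b hb hne
  omega

theorem TT_val_one (g : GData Γ J w) (ff : FF J L ξ) (hgraph : Γ.IsGraph) {s : L} (h0 : Fil k w ξ j 0 s)
    (h1 : ¬ Fil k w ξ j (-1) s) {V : ValuationSubring L} (hV : V ∈ TT k w ξ j) : V.valuation s = 1 := by
  obtain ⟨D, F, f1, f2, f3, f4, f5⟩ := unit_rep g ff hgraph h0 h1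
  set c := coeff (Finsupp.single j D) F with hc
  have hm : Fil k w ξ j (-1) (s - algebraMap k L c) := by
    refine ⟨D, F - monomial (Finsupp.single j D) c, f1.sub (isHomogeneous_monomial _ (by simp [Finsupp.degree_single])), ?_, ?_⟩
    · intro b hb
      have hne : b ≠ Finsupp.single j D := by
        rintro rfl
        rw [mem_support_iff, coeff_sub, coeff_monomial, if_pos rfl, ← hc, sub_self] at hb
        exact hb rfl
      have hbF : b ∈ F.support := by
        rw [mem_support_iff, coeff_sub, coeff_monomial, if_neg hne.symm, sub_zero] at hb
        exact mem_support_iff.2 hb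
      have := f5 b hbF hne
      omega
    · rw [map_sub, f3, aeval_monomial, Finsupp.prod_single_index (by simp)]; ring
  have h2 := V.mem_nonunits_iff.1 (hV.2 _ hm)
  have h3 := TT_unit hV f4
  have : s = algebraMap k L c + (s - algebraMap k L c) := by ring
  rw [this, V.valuation.map_add_eq_of_lt_left (by rw [h3]; exact h2), h3]

theorem rel_contra (g : GData Γ J w) (ff : FF J L ξ) (hgraph : Γ.IsGraph) {i i' : Fin (n+1)} (hij : i ≠ j)
    (hij' : i' ≠ j) (hii : i ≠ i') (hf : {i, j} ∈ Γ.faces) (hf' : {i', j} ∈ Γ.faces) {p q : ℕ} (hp : p ≠ 0) (hq : q ≠ 0)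
    {s s' : L} (h0 : Fil k w ξ j 0 s) (h1 : ¬ Fil k w ξ j (-1) s) (h0' : Fil k w ξ j 0 s') (h1' : ¬ Fil k w ξ j (-1) s')
    (hrel : s * (ξ i / ξ j) ^ p = s' * (ξ i' / ξ j) ^ q)
    (hpq : (q : ℤ) * ((w i' : ℤ) - w j) ≤ p * ((w i : ℤ) - w j)) : False := by
  obtain ⟨D, F, f1, f2, f3, f4, f5⟩ := unit_rep g ff hgraph h0 h1
  obtain ⟨D', F', f1', f2', f3', f4', f5'⟩ := unit_rep g ff hgraph h0' h1'
  set N := D + p + (q + D')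
  have hh1 : (F * X i ^ p * X j ^ (q + D')).IsHomogeneous N :=
    (f1.mul (isHomogeneous_X_pow i p)).mul (isHomogeneous_X_pow j _)
  have hh2 : (F' * X i' ^ q * X j ^ (p + D)).IsHomogeneous N := by
    have : N = D' + q + (p + D) := by omega
    rw [this]
    exact (f1'.mul (isHomogeneous_X_pow i' q)).mul (isHomogeneous_X_pow j _)
  have hJ : F * X i ^ p * X j ^ (q + D') - F' * X i' ^ q * X j ^ (p + D) ∈ J := by
    refine ff.sub_mem hh1 hh2 ?_
    simp only [map_mul, map_pow, aeval_X, f3, f3']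
    have hj0 := ff.ne j
    have hrel2 : s * ξ i ^ p * ξ j ^ q = s' * ξ i' ^ q * ξ j ^ p := by
      rw [div_pow, div_pow] at hrel
      field_simp at hrel
      linear_combination hrel
    rw [pow_add, pow_add]
    linear_combination ξ j ^ D * ξ j ^ D' * hrel2
  set x := Finsupp.single j D + (Finsupp.single i p + Finsupp.single j (q + D')) with hx
  have hc1 : coeff x (F * X i ^ p * X j ^ (q + D')) = coeff (Finsupp.single j D) F := by
    rw [X_pow_eq_monomial, X_pow_eq_monomial, mul_assoc, monomial_mul, hx, coeff_mul_monomial]; simp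
  have hc2 : coeff x (F' * X i' ^ q * X j ^ (p + D)) = 0 := by
    rw [X_pow_eq_monomial, X_pow_eq_monomial, mul_assoc, monomial_mul, coeff_mul_monomial', if_neg]
    intro hle
    have := hle i'
    simp [hx, hij', hii, Ne.symm hii, Ne.symm hij'] at this
    exact hq this
  have hw1 := wt_mul (wt_mul f2 (wt_Xpow (k := k) (w := w) i p)) (wt_Xpow (k := k) (w := w) j (q + D'))
  have hw2 := wt_mul (wt_mul f2' (wt_Xpow (k := k) (w := w) i' q)) (wt_Xpow (k := k) (w := w) j (p + D))
  have hwx : (Finsupp.weight w x : ℤ) = D * w j + p * w i + (q + D' : ℕ) * w j := by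
    rw [hx]; simp [Finsupp.weight_single]; ring
  have hsupp : x.support ∈ Γ.faces := by
    refine face_pair hf fun l h1 h2 => ?_
    rw [hx]
    simp [h1, h2]
  have := g.top0 hJ (hh1.sub hh2) (T := Finsupp.weight w x) (fun b' hb' => ?_) hsupp rfl
  · rw [coeff_sub, hc1, hc2, sub_zero] at this
    exact f4 this
  · have h3 := wt_sub hw1 (wt_mono (by push_cast; nlinarith) hw2) b' hb'
    have : (Finsupp.weight w b' : ℤ) ≤ Finsupp.weight w x := by
      rw [hwx]; exact h3
    exact_mod_cast this

theorem ord_pow {ord : L → ℤ} (h : ∀ x y, x ≠ 0 → y ≠ 0 → ord (x * y) = ord x + ord y) {x : L} (hx : x ≠ 0) (N : ℕ) :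
    ord (x ^ N) = N * ord x := by
  induction N with
  | zero =>
    have := h 1 1 one_ne_zero one_ne_zero
    rw [mul_one] at this
    simp; omega
  | succ N ih => rw [pow_succ, h _ _ (pow_ne_zero _ hx) hx, ih]; push_cast; ring

theorem fil_uniq (g : GData Γ J w) (ff : FF J L ξ) (hgraph : Γ.IsGraph) (hvert : ∀ i, {i} ∈ Γ.faces)
    (hch : ∀ i, Chart (OO (k := k) ξ i)) {i i' : Fin (n+1)} (hij : w i < w j)
    (hij' : w i' < w j) (hf : {i, j} ∈ Γ.faces) (hf' : {i', j} ∈ Γ.faces) : i = i' := by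
  by_contra hii
  have hi : i ≠ j := by rintro rfl; omega
  have hi' : i' ≠ j := by rintro rfl; omega
  set f := ξ i / ξ j with hfdef
  set f' := ξ i' / ξ j with hfdef'
  have hf0 : f ≠ 0 := div_ne_zero (ff.ne _) (ff.ne _)
  have hf0' : f' ≠ 0 := div_ne_zero (ff.ne _) (ff.ne _)
  have hm : Fil k w ξ j (-1) f := (Fil.coord ff.ne i).mono (by omega)
  have hm' : Fil k w ξ j (-1) f' := (Fil.coord ff.ne i').mono (by omega)
  have hfin : (TT k w ξ j).Finite := (val_finite ff.ne hch hf0).subset fun V hV => ⟨TT_k hV, hV.2 _ hm⟩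
  have hord : ∀ V : ValuationSubring L, ∃ ord : L → ℤ, V ∈ TT k w ξ j → (∀ x y, x ≠ 0 → y ≠ 0 → ord (x * y) = ord x + ord y) ∧ (∀ x, x ≠ 0 → (x ∈ V ↔ 0 ≤ ord x)) ∧
      ∀ x, x ≠ 0 → (x ∈ V.nonunits ↔ 0 < ord x) := by
    intro V
    by_cases hV : V ∈ TT k w ξ j
    · obtain ⟨ord, h⟩ := exists_ord ff.ne hch V (TT_k hV) (f := f⁻¹)
        ((V.mem_nonunits_iff_or.1 (hV.2 _ hm)).resolve_left hf0)
      exact ⟨ord, fun _ => h⟩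
    · exact ⟨0, fun h => absurd h hV⟩
  choose ord hord using hord
  obtain ⟨V0, hV0, hmax⟩ := Set.exists_max_image (TT k w ξ j) (fun V => (ord V f' : ℚ) / ord V f) hfin (TT_nonempty g ff hvert)
  have pos : ∀ V ∈ TT k w ξ j, 0 < ord V f ∧ 0 < ord V f' := fun V hV =>
    ⟨((hord V hV).2.2 f hf0).1 (hV.2 _ hm), ((hord V hV).2.2 f' hf0').1 (hV.2 _ hm')⟩
  obtain ⟨p, hp⟩ := Int.eq_ofNat_of_zero_le (pos V0 hV0).2.le
  obtain ⟨q, hq⟩ := Int.eq_ofNat_of_zero_le (pos V0 hV0).1.le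
  have hp0 : p ≠ 0 := by have := (pos V0 hV0).2; omega
  have hq0 : q ≠ 0 := by have := (pos V0 hV0).1; omega
  have hh0 : f ^ p / f' ^ q ≠ 0 := div_ne_zero (pow_ne_zero _ hf0) (pow_ne_zero _ hf0')
  have hordh : ∀ V ∈ TT k w ξ j, ord V (f ^ p / f' ^ q) = p * ord V f - q * ord V f' := by
    intro V hV
    have h1 := (hord V hV).1 _ _ hh0 (pow_ne_zero q hf0')
    rw [div_mul_cancel₀ _ (pow_ne_zero _ hf0'), ord_pow (hord V hV).1 hf0, ord_pow (hord V hV).1 hf0'] at h1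
    linarith
  have hmem : ∀ V ∈ TT k w ξ j, f ^ p / f' ^ q ∈ V := by
    intro V hV
    rw [(hord V hV).2.1 _ hh0, hordh V hV]
    have h1 := hmax V hV
    have h2 : (0 : ℚ) < ord V f := by exact_mod_cast (pos V hV).1
    have h3 : (0 : ℚ) < ord V0 f := by exact_mod_cast (pos V0 hV0).1
    rw [div_le_div_iff₀ h2 h3] at h1
    have h4 : ord V f' * ord V0 f ≤ ord V0 f' * ord V f := by exact_mod_cast h1
    rw [hp, hq] at h4
    linarith
  obtain ⟨s, hs, hs1, hs2⟩ := exists_mult g ff hgraph hvert hch hmem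
  have hs3 : ¬ Fil k w ξ j (-1) (s * (f ^ p / f' ^ q)) := by
    intro hcon
    have h1 := V0.mem_nonunits_iff.1 (hV0.2 _ hcon)
    rw [map_mul, TT_val_one g ff hgraph hs hs1 hV0, one_mul] at h1
    have h2 := ((hord V0 hV0).2.2 _ hh0).1 (V0.mem_nonunits_iff.2 h1)
    rw [hordh V0 hV0, hp, hq] at h2
    have : (p : ℤ) * Int.ofNat q - q * Int.ofNat p = 0 := by simp; ring
    linarith
  have hrel : s * f ^ p = s * (f ^ p / f' ^ q) * f' ^ q := by field_simp
  rcases le_total ((q : ℤ) * ((w i' : ℤ) - w j)) (p * ((w i : ℤ) - w j)) with h | h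
  · exact rel_contra g ff hgraph hi hi' hii hf hf' hp0 hq0 hs hs1 hs2 hs3 hrel h
  · exact rel_contra g ff hgraph hi' hi (Ne.symm hii) hf' hf hq0 hp0 hs2 hs3 hs hs1 hrel.symm h
end uniq


section exist
variable {k L : Type*} [Field k] [Field L] [Algebra k L] {n : ℕ}
variable {Γ : SComplex n} {J : Ideal (MvPolynomial (Fin (n+1)) k)} {w : Fin (n+1) → ℕ} {ξ : Fin (n+1) → L} {j : Fin (n+1)}

theorem fil_step (g : GData Γ J w) (ff : FF J L ξ) (hgraph : Γ.IsGraph)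
    (hno : ∀ i, {i, j} ∈ Γ.faces → ¬ w i < w j) {r : ℤ} (hr : r ≤ -1) {h : L} (H : Fil k w ξ j r h) :
    Fil k w ξ j (r - 1) h := by
  obtain ⟨d, H⟩ := H
  obtain ⟨F, f1, f2, f3, f4, f5⟩ := wrep_nf g ff H
  refine ⟨d + 1, F, f1, fun b hb => ?_, f3⟩
  have h1 := f2 b hb
  have h2 : (Finsupp.weight w b : ℤ) ≠ (d + 1 : ℕ) * w j + r := by
    intro heq
    rcases top_edge hgraph g.winj (f4 b hb) (f5 b hb heq) (isHom_deg f1 hb) heq with ⟨h0, _⟩ | ⟨_, i, hij, hf, hbi, hb2, hbr, hbD⟩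
    · omega
    · have h3 := hno i hf
      have : (0 : ℤ) ≤ (w i : ℤ) - w j := by omega
      have := mul_nonneg (Int.natCast_nonneg (b i)) this
      omega
  omega

theorem fil_exists (g : GData Γ J w) (ff : FF J L ξ) (hgraph : Γ.IsGraph) (hvert : ∀ i, {i} ∈ Γ.faces)
    (hch : ∀ i, Chart (OO (k := k) ξ i)) {i0 : Fin (n+1)} (hi0 : w i0 < w j) :
    ∃ i, {i, j} ∈ Γ.faces ∧ w i < w j := by
  by_contra hno
  push Not at hno
  have hno' : ∀ i, {i, j} ∈ Γ.faces → ¬ w i < w j := fun i hi => not_lt.2 (hno i hi)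
  let e : Fin (n+1) → L := fun l => ξ l / ξ j
  have he : ∀ l, e l ≠ 0 := fun l => div_ne_zero (ff.ne _) (ff.ne _)
  let E : (Fin (n+1) →₀ ℕ) → L := fun b => b.prod fun l q => e l ^ q
  have hE0 : ∀ b, E b ≠ 0 := fun b => Finset.prod_ne_zero_iff.2 fun l _ => pow_ne_zero _ (he l)
  have hEadd : ∀ b c, E (b + c) = E b * E c := fun b c =>
    Finsupp.prod_add_index' (fun _ => pow_zero _) (fun _ _ _ => pow_add _ _ _)
  let δ : (Fin (n+1) →₀ ℕ) → ℤ := fun b => (Finsupp.weight w b : ℤ) - b.degree * w j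
  have hδ : ∀ b c, δ (b + c) = δ b + δ c := by
    intro b c
    simp only [δ, map_add]; push_cast; ring
  have hEm : ∀ c, δ c ≤ -1 → Fil k w ξ j (-1) (E c) := by
    intro c hc
    have hh : (monomial c (1 : k)).IsHomogeneous c.degree := isHomogeneous_monomial _ rfl
    refine ⟨c.degree, monomial c 1, hh, ?_, ?_⟩
    · intro b hb
      have := Finset.mem_singleton.1 (support_monomial_subset hb)
      subst this
      simp only [δ] at hc; linarith
    · rw [aeval_ratio ff.ne (j := j) hh, aeval_monomial, map_one, one_mul]
  have hf0 := he i0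
  have hfm : ∀ M : ℕ, Fil k w ξ j (-1 - M) (e i0) := by
    intro M
    induction M with
    | zero => exact (Fil.coord ff.ne i0).mono (by push_cast; omega)
    | succ M ih =>
      have := fil_step g ff hgraph hno' (by omega) ih
      convert this using 1
      push_cast; ring
  obtain ⟨V, hV⟩ := TT_nonempty (j := j) g ff hvert
  have hfnon : e i0 ∈ V.nonunits := hV.2 _ ((hfm 0).mono (by simp))
  obtain ⟨ord, o1, o2, o3⟩ := exists_ord ff.ne hch V (TT_k hV) (f := (e i0)⁻¹)
        ((V.mem_nonunits_iff_or.1 hfnon).resolve_left hf0)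
  have hbM : ∀ M : ℕ, ∃ b, δ b ≤ -M ∧ ord (E b) ≤ ord (e i0) := by
    intro M
    obtain ⟨d, F, f1, f2, f3⟩ := hfm M
    rw [aeval_ratio ff.ne (j := j) f1] at f3
    have f4 := mul_right_cancel₀ (pow_ne_zero d (ff.ne j)) f3
    have : ∃ b ∈ F.support, V.valuation (e i0) ≤ V.valuation (E b) := by
      by_contra hcon
      push Not at hcon
      have hlt : V.valuation (∑ b ∈ F.support, algebraMap k L (coeff b F) * E b) < V.valuation (e i0) := by
        refine V.valuation.map_sum_lt (by simpa using hf0) fun b hb => ?_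
        rw [map_mul]
        refine lt_of_le_of_lt ?_ (hcon b hb)
        exact mul_le_of_le_one_left' ((V.valuation_le_one_iff _).2 (TT_k hV _))
      have heq : ∑ b ∈ F.support, algebraMap k L (coeff b F) * E b = e i0 := by
        rw [← f4, aeval_def, eval₂_eq]; rfl
      rw [heq] at hlt
      exact lt_irrefl _ hlt
    obtain ⟨b, hb, hle⟩ := this
    refine ⟨b, ?_, ?_⟩
    · have := f2 b hb
      simp only [δ]; rw [isHom_deg f1 hb]; linarith
    · have hdiv : e i0 / E b ∈ V := by
        rw [← V.valuation_le_one_iff, map_div₀]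
        exact div_le_one_of_le₀ hle zero_le
      have h1 := (o2 _ (div_ne_zero hf0 (hE0 b))).1 hdiv
      have h2 := o1 _ _ (div_ne_zero hf0 (hE0 b)) (hE0 b)
      rw [div_mul_cancel₀ _ (hE0 b)] at h2
      linarith
  choose b hb1 hb2 using hbM
  obtain ⟨s, hs⟩ := (wellQuasiOrdered_le (α := Fin (n+1) →₀ ℕ)).exists_monotone_subseq b
  have key : ∀ t : ℕ, ∃ m, ord (E (b (s 0))) + t ≤ ord (E (b (s m))) := by
    intro t
    induction t with
    | zero => exact ⟨0, by simp⟩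
    | succ t ih =>
      obtain ⟨m, hm⟩ := ih
      set m' := max m ((-δ (b (s m))).toNat + 1)
      have hle := hs m m' (le_max_left _ _)
      refine ⟨m', ?_⟩
      obtain ⟨c, hc⟩ := exists_add_of_le hle
      have h1 : δ (b (s m')) < δ (b (s m)) := by
        have h2 := hb1 (s m')
        have h3 : m' ≤ s m' := s.strictMono.le_apply
        have h4 : (-δ (b (s m))).toNat + 1 ≤ m' := le_max_right _ _
        omega
      rw [hc, hδ] at h1
      have h5 := (o3 _ (hE0 c)).1 (hV.2 _ (hEm c (by omega)))
      rw [hc, hEadd, o1 _ _ (hE0 _) (hE0 _)]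
      push_cast
      omega
  obtain ⟨m, hm⟩ := key ((ord (e i0) - ord (E (b (s 0)))).toNat + 1)
  have := hb2 (s m)
  push_cast at hm
  omega
end exist

theorem tree_of_parent {n : ℕ} (G : SimpleGraph (Fin (n+1))) (w : Fin (n+1) → ℕ) (winj : Function.Injective w)
    (hex : ∀ j i0, w i0 < w j → ∃ i, G.Adj i j ∧ w i < w j)
    (huniq : ∀ j i i', G.Adj i j → w i < w j → G.Adj i' j → w i' < w j → i = i') : G.IsTree := by
  obtain ⟨i0, hi0⟩ := Finite.exists_min w
  have hlt : ∀ v, v ≠ i0 → w i0 < w v := fun v hv => lt_of_le_of_ne (hi0 v) fun h => hv (winj h.symm)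
  have hconn : ∀ m v, w v = m → G.Reachable i0 v := by
    intro m
    induction m using Nat.strong_induction_on with
    | _ m ih =>
      intro v hv
      by_cases h : v = i0
      · rw [h]
      · obtain ⟨i, h1, h2⟩ := hex v i0 (hlt v h)
        exact (ih (w i) (hv ▸ h2) i rfl).trans h1.reachable
  rw [SimpleGraph.isTree_iff_connected_and_card]
  refine ⟨⟨fun u v => (hconn _ u rfl).symm.trans (hconn _ v rfl)⟩, ?_⟩
  have : ∀ v : {v // v ≠ i0}, ∃ i, G.Adj i v.1 ∧ w i < w v.1 := fun v => hex v.1 i0 (hlt v.1 v.2)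
  choose par p1 p2 using this
  have hbij : Function.Bijective (fun v : {v // v ≠ i0} => (⟨s(par v, v.1), p1 v⟩ : G.edgeSet)) := by
    constructor
    · intro u v huv
      have h := congrArg Subtype.val huv
      simp only [Sym2.eq_iff] at h
      rcases h with h | h
      · exact Subtype.ext h.2
      · exfalso
        have h1 := p2 u
        have h2 := p2 v
        rw [h.1] at h1
        rw [← h.2] at h2
        omega
    · rintro ⟨x, hx⟩
      induction x using Sym2.ind with
      | _ a b =>
        have hab : G.Adj a b := hx
        rcases lt_or_gt_of_ne (fun h => hab.ne (winj h) : w a ≠ w b) with h | h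
        · have hb : b ≠ i0 := by rintro rfl; exact absurd (hi0 a) (not_le.2 h)
          refine ⟨⟨b, hb⟩, Subtype.ext ?_⟩
          simp only
          rw [huniq b _ _ (p1 ⟨b, hb⟩) (p2 ⟨b, hb⟩) hab h]
        · have hb : a ≠ i0 := by rintro rfl; exact absurd (hi0 b) (not_le.2 h)
          refine ⟨⟨a, hb⟩, Subtype.ext ?_⟩
          simp only
          rw [huniq a _ _ (p1 ⟨a, hb⟩) (p2 ⟨a, hb⟩) hab.symm h, Sym2.eq_swap]
  rw [← Nat.card_congr (Equiv.ofBijective _ hbij), ← Nat.card_congr (Equiv.optionSubtypeNe i0), Finite.card_option]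

/-- **Statement 2.** If a graph `Γ` on `{0, …, n}` is Gröbner smoothable over some field `K`,
then `Γ` is a tree. -/
theorem tree_of_groebnerSmoothable {K : Type*} [Field K] {n : ℕ}
    (Γ : SComplex n) (hgraph : Γ.IsGraph)
    (hvert : ∀ i : Fin (n + 1), ({i} : Finset (Fin (n + 1))) ∈ Γ.faces)
    (h : GroebnerSmoothable K Γ) :
    Γ.graph.IsTree := by
  obtain ⟨J, hhom, m, hin, hconn, hJac⟩ := h
  obtain ⟨w, g⟩ := exists_gdata (k := AlgebraicClosure K) hhom hvert m hin
  set J' := J.map (MvPolynomial.map (algebraMap K (AlgebraicClosure K)))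
  have hn : 1 ≤ n := by
    obtain ⟨s, _, hs⟩ := hgraph.2
    have := Finset.card_le_univ s
    rw [hs, Fintype.card_fin] at this
    omega
  have hprime := J_prime hn g.hom g.rad hJac hconn
  have hX : ∀ l, (X l : MvPolynomial (Fin (n+1)) (AlgebraicClosure K)) ∉ J' := by
    intro l hl
    refine X_ne_zero (R := AlgebraicClosure K) l (g.std0 _ hl fun b hb => ?_)
    have := Finset.mem_singleton.1 (support_monomial_subset (R := AlgebraicClosure K) (s := Finsupp.single l 1) (a := 1) hb)
    subst this
    exact Γ.down_closed (hvert l) Finsupp.support_single_subset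
  obtain ⟨L, _, _, ξ, ff⟩ := exists_FF hprime hX
  have hch := fun i => ff.chart hn g.hom hJac i
  have hadj : ∀ i j, Γ.graph.Adj i j ↔ i ≠ j ∧ {i, j} ∈ Γ.faces := by
    intro i j
    rw [SComplex.graph, SimpleGraph.fromRel_adj, Finset.pair_comm j i, or_self]
  refine tree_of_parent _ w g.winj ?_ ?_
  · intro j i0 hlt
    obtain ⟨i, h1, h2⟩ := fil_exists g ff hgraph hvert hch hlt
    exact ⟨i, (hadj i j).2 ⟨by rintro rfl; exact lt_irrefl _ h2, h1⟩, h2⟩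
  · intro j i i' h1 h2 h3 h4
    exact fil_uniq g ff hgraph hvert hch h2 h4 ((hadj _ _).1 h1).2 ((hadj _ _).1 h3).2
end

section
/- Let S = K[X_0,…,X_n], < a monomial order with X_0 > ⋯ > X_n, and I ⊆ S a homogeneous ideal with in_<(I) = I_Δ squarefree. Suppose v ∈ {0,…,n} satisfies {v} ∉ Δ, so X_v ∈ in_<(I) and there is a linear form ℓ = X_v + Σ_{i>v} λ_i X_i ∈ I with λ_i ∈ K. Then the image of any Gröbner basis of I under the substitution X_v ↦ −Σ_{i>v} λ_i X_i is a Gröbner basis of the image ideal I' = I/ℓS ⊆ S' = K[X_j : j ∈ {0,…,n} \ {v}] with respect to the restricted monomial order <', and in_{<'}(I') = I_Δ, where Δ is now regarded as a simplicial complex on the vertex set {0,…,n} \ {v}. -/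
open MvPolynomial

/-- `G` is a Gröbner basis of `I` w.r.t. `m`: a set of nonzero elements of `I` whose leading
monomials generate the initial ideal of `I`. -/
def IsGroebnerBasis {σ : Type*} {K : Type*} [Field K] (m : MonomialOrder σ)
    (I : Ideal (MvPolynomial σ K)) (G : Set (MvPolynomial σ K)) : Prop :=
  G ⊆ (I : Set (MvPolynomial σ K)) ∧ (0 : MvPolynomial σ K) ∉ G ∧
    initialIdeal m I = Ideal.span ((fun g => monomial (m.mdeg g) (1 : K)) '' G)

/-- A monomial order on `X_0, …, X_n` satisfies `X_0 > X_1 > ⋯ > X_n`. -/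
def MonomialOrder.Descending {n : ℕ} (m : MonomialOrder (Fin (n + 1))) : Prop :=
  ∀ i j : Fin (n + 1), i < j →
    m.toSyn (Finsupp.single j 1) < m.toSyn (Finsupp.single i 1)

/-- The Stanley–Reisner ideal of `Δ`, regarded as a simplicial complex on the smaller vertex
set `{0, …, n} \ {v}`, inside the smaller polynomial ring. -/
noncomputable def srIdealAway {n : ℕ} (K : Type*) [Field K] (Δ : SComplex n) (v : Fin (n + 1)) :
    Ideal (MvPolynomial {i : Fin (n + 1) // i ≠ v} K) :=
  Ideal.span {g | ∃ s : Finset {i : Fin (n + 1) // i ≠ v},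
    s.map (Function.Embedding.subtype fun i => i ≠ v) ∉ Δ.faces ∧ g = ∏ i ∈ s, X i}

/-- The substitution `X_v ↦ -∑_{i > v} λ_i X_i` (and `X_j ↦ X_j` for `j ≠ v`), as an algebra
map onto the polynomial ring `K[X_j : j ≠ v]`; it realizes the quotient `S → S/ℓS`. -/
noncomputable def substMap {n : ℕ} {K : Type*} [Field K] (v : Fin (n + 1))
    (lam : Fin (n + 1) → K) :
    MvPolynomial (Fin (n + 1)) K →ₐ[K] MvPolynomial {i : Fin (n + 1) // i ≠ v} K :=
  aeval fun i =>
    if h : i = v then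
      -(∑ j : Fin (n + 1), if hj : v < j then
          C (lam j) * X (⟨j, (ne_of_lt hj).symm⟩ : {i : Fin (n + 1) // i ≠ v}) else 0)
    else X (⟨i, h⟩ : {i : Fin (n + 1) // i ≠ v})

open scoped MonomialOrder in
lemma aux_fix {n : ℕ} {K : Type*} [Field K] (v : Fin (n + 1))
    (ψ : MvPolynomial (Fin (n + 1)) K →ₐ[K] MvPolynomial (Fin (n + 1)) K)
    (h1 : ∀ i, i ≠ v → ψ (X i) = X i) (d : Fin (n + 1) →₀ ℕ) (a : K) (hd : d v = 0) :
    ψ (monomial d a) = monomial d a := by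
  rw [monomial_eq, map_mul, map_finsuppProd, show ψ (C a) = C a from ψ.commutes a]
  congr 1
  refine Finsupp.prod_congr fun i hi => ?_
  have : i ≠ v := by
    rintro rfl
    simp [hd] at hi
  rw [map_pow, h1 i this]

lemma aux_lt {n : ℕ} {K : Type*} [Field K] (m : MonomialOrder (Fin (n + 1))) (v : Fin (n + 1))
    (ψ : MvPolynomial (Fin (n + 1)) K →ₐ[K] MvPolynomial (Fin (n + 1)) K)
    (h1 : ∀ i, i ≠ v → ψ (X i) = X i)
    (h2 : m.toSyn (m.degree (ψ (X v))) < m.toSyn (Finsupp.single v 1))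
    (d : Fin (n + 1) →₀ ℕ) (a : K) :
    m.toSyn (m.degree (ψ (monomial d a))) ≤ m.toSyn d := by
  have hs : (monomial d a : MvPolynomial (Fin (n + 1)) K) =
      monomial (d.erase v) a * X v ^ (d v) := by
    rw [X_pow_eq_monomial, monomial_mul, mul_one, Finsupp.erase_add_single]
  have hd : m.toSyn d = m.toSyn (d.erase v) + d v • m.toSyn (Finsupp.single v 1) := by
    rw [← map_nsmul, ← map_add]
    congr 1
    rw [Finsupp.smul_single, smul_eq_mul, mul_one, Finsupp.erase_add_single]
  rw [hs, map_mul, map_pow, aux_fix v ψ h1 _ _ (by simp), hd]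
  refine le_trans m.toSyn_degree_mul_le ?_
  refine add_le_add (m.degree_monomial_le a) ?_
  refine le_trans (m.degree_pow_le _) ?_
  rw [map_nsmul]
  exact nsmul_le_nsmul_right h2.le _

lemma aux_key {n : ℕ} {K : Type*} [Field K] (m : MonomialOrder (Fin (n + 1))) (v : Fin (n + 1))
    (ψ : MvPolynomial (Fin (n + 1)) K →ₐ[K] MvPolynomial (Fin (n + 1)) K)
    (h1 : ∀ i, i ≠ v → ψ (X i) = X i)
    (h2 : m.toSyn (m.degree (ψ (X v))) < m.toSyn (Finsupp.single v 1))
    (f : MvPolynomial (Fin (n + 1)) K) (hf : f ≠ 0) (hv : m.degree f v = 0) :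
    ψ f ≠ 0 ∧ m.degree (ψ f) = m.degree f := by
  have hsum : ψ f = ∑ d ∈ f.support, ψ (monomial d (coeff d f)) := by
    conv_lhs => rw [f.as_sum]
    rw [map_sum]
  have hc : coeff (m.degree f) (ψ f) = coeff (m.degree f) f := by
    rw [hsum, coeff_sum, Finset.sum_eq_single (m.degree f)]
    · rw [aux_fix v ψ h1 _ _ hv, coeff_monomial, if_pos rfl]
    · intro d hd hne
      apply m.coeff_eq_zero_of_lt
      refine lt_of_le_of_lt (aux_lt m v ψ h1 h2 d _) ?_
      exact lt_of_le_of_ne (m.le_degree hd) fun h => hne (m.toSyn.injective h)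
    · intro h
      exact absurd (m.degree_mem_support hf) h
  have hc0 : coeff (m.degree f) (ψ f) ≠ 0 := by
    rw [hc]; exact m.coeff_degree_ne_zero_iff.2 hf
  refine ⟨fun h => hc0 (by simp [h]), m.toSyn.injective (le_antisymm ?_ ?_)⟩
  · rw [hsum]
    refine le_trans m.degree_sum_le ?_
    refine Finset.sup_le fun d hd => ?_
    exact (aux_lt m v ψ h1 h2 d _).trans (m.le_degree hd)
  · exact m.le_degree (mem_support_iff.2 hc0)

lemma aux_span_le {σ K : Type*} [Field K] {A B : Set (σ →₀ ℕ)} (h : ∀ a ∈ A, ∃ b ∈ B, b ≤ a) :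
    Ideal.span ((fun s => monomial s (1 : K)) '' A) ≤
      Ideal.span ((fun s => monomial s (1 : K)) '' B) := by
  rw [Ideal.span_le]
  rintro _ ⟨a, ha, rfl⟩
  simp only [SetLike.mem_coe]
  rw [mem_ideal_span_monomial_image]
  intro c hc
  have := support_monomial_subset hc
  simp only [Finset.mem_singleton] at this
  exact this ▸ h a ha

lemma aux_mem {σ K : Type*} [Field K] {A : Set (σ →₀ ℕ)} {c : σ →₀ ℕ} :
    monomial c (1 : K) ∈ Ideal.span ((fun s => monomial s (1 : K)) '' A) ↔
      ∃ a ∈ A, a ≤ c := by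
  classical
  rw [mem_ideal_span_monomial_image]
  simp [support_monomial]

lemma aux_initial {σ K : Type*} [Field K] (m : MonomialOrder σ)
    (I : Ideal (MvPolynomial σ K)) :
    initialIdeal m I = Ideal.span ((fun s => monomial s (1 : K)) ''
      {c | ∃ f ∈ I, f ≠ 0 ∧ c = m.degree f}) := by
  unfold initialIdeal
  congr 1
  ext g
  constructor
  · rintro ⟨f, hf, h0, rfl⟩
    exact ⟨_, ⟨f, hf, h0, rfl⟩, rfl⟩
  · rintro ⟨_, ⟨f, hf, h0, rfl⟩, rfl⟩
    exact ⟨f, hf, h0, rfl⟩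

lemma aux_prod {σ K : Type*} [Field K] (s : Finset σ) :
    (∏ i ∈ s, X i : MvPolynomial σ K) = monomial (∑ i ∈ s, Finsupp.single i 1) 1 := by
  rw [monomial_sum_one]; rfl

lemma aux_sr {n : ℕ} (K : Type*) [Field K] (Δ : SComplex n) :
    Δ.srIdeal K = Ideal.span ((fun s => monomial s (1 : K)) ''
      {c | ∃ s : Finset (Fin (n + 1)), s ∉ Δ.faces ∧ c = ∑ i ∈ s, Finsupp.single i 1}) := by
  unfold SComplex.srIdeal
  congr 1
  ext g
  constructor
  · rintro ⟨s, hs, rfl⟩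
    exact ⟨_, ⟨s, hs, rfl⟩, (aux_prod s).symm⟩
  · rintro ⟨_, ⟨s, hs, rfl⟩, rfl⟩
    exact ⟨s, hs, (aux_prod s).symm⟩

lemma aux_sra {n : ℕ} (K : Type*) [Field K] (Δ : SComplex n) (v : Fin (n + 1)) :
    srIdealAway K Δ v = Ideal.span ((fun s => monomial s (1 : K)) ''
      {c | ∃ s : Finset {i : Fin (n + 1) // i ≠ v},
        s.map (Function.Embedding.subtype fun i => i ≠ v) ∉ Δ.faces ∧
          c = ∑ i ∈ s, Finsupp.single i 1}) := by
  unfold srIdealAway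
  congr 1
  ext g
  constructor
  · rintro ⟨s, hs, rfl⟩
    exact ⟨_, ⟨s, hs, rfl⟩, (aux_prod s).symm⟩
  · rintro ⟨_, ⟨s, hs, rfl⟩, rfl⟩
    exact ⟨s, hs, (aux_prod s).symm⟩

lemma aux_le {σ τ : Type*} (e : σ ↪ τ) {c d : σ →₀ ℕ}
    (h : Finsupp.embDomain e c ≤ Finsupp.embDomain e d) : c ≤ d := by
  intro i
  have := h (e i)
  rwa [Finsupp.embDomain_apply_self, Finsupp.embDomain_apply_self] at this

lemma aux_sum {σ τ : Type*} (e : σ ↪ τ) (s : Finset σ) :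
    Finsupp.embDomain e (∑ i ∈ s, Finsupp.single i 1 : σ →₀ ℕ) =
      ∑ i ∈ s.map e, Finsupp.single i 1 := by
  rw [Finsupp.embDomain_eq_mapDomain, Finsupp.mapDomain_finsetSum, Finset.sum_map]
  simp

lemma aux_rename {σ τ K : Type*} [Field K] (e : σ ↪ τ) (m : MonomialOrder τ)
    (m' : MonomialOrder σ) (hm' : ∀ c d : σ →₀ ℕ, m'.toSyn c ≤ m'.toSyn d ↔
      m.toSyn (Finsupp.embDomain e c) ≤ m.toSyn (Finsupp.embDomain e d))
    (q : MvPolynomial σ K) (hq : q ≠ 0) :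
    m.degree (rename e q) = Finsupp.embDomain e (m'.degree q) := by
  classical
  apply m.toSyn.injective
  apply le_antisymm
  · rw [m.degree_le_iff]
    intro c hc
    rw [support_rename_of_injective e.injective, Finset.mem_image] at hc
    obtain ⟨b, hb, rfl⟩ := hc
    rw [← Finsupp.embDomain_eq_mapDomain, ← hm']
    exact m'.le_degree hb
  · apply m.le_degree
    rw [support_rename_of_injective e.injective, Finset.mem_image]
    exact ⟨_, m'.degree_mem_support hq, (Finsupp.embDomain_eq_mapDomain _ _).symm⟩

/-- **Statement 5.** Suppose `in_<(I) = I_Δ` with `X_0 > ⋯ > X_n` and `{v} ∉ Δ`, so that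
`X_v ∈ in_<(I)` and `I` contains a linear form `ℓ = X_v + ∑_{i > v} λ_i X_i`.  Then the image
of any Gröbner basis of `I` under the substitution `X_v ↦ -∑_{i > v} λ_i X_i` is a Gröbner
basis of the image ideal `I' = I/ℓS ⊆ S' = K[X_j : j ≠ v]` with respect to the restricted
monomial order `<'`, and `in_{<'}(I') = I_Δ` with `Δ` regarded on the vertex set
`{0, …, n} \ {v}`. -/
theorem substMap_groebner_basis {K : Type*} [Field K] {n : ℕ}
    (m : MonomialOrder (Fin (n + 1))) (hm : m.Descending)
    (Δ : SComplex n)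
    (I : Ideal (MvPolynomial (Fin (n + 1)) K)) (hI : IsHomog I)
    (hin : initialIdeal m I = Δ.srIdeal K)
    (v : Fin (n + 1)) (hv : ({v} : Finset (Fin (n + 1))) ∉ Δ.faces)
    (lam : Fin (n + 1) → K)
    (hl : X v + (∑ j : Fin (n + 1), if v < j then C (lam j) * X j else 0) ∈ I)
    (G : Set (MvPolynomial (Fin (n + 1)) K)) (hG : IsGroebnerBasis m I G)
    -- `<'`, the restriction of `<` to the variables `X_j`, `j ≠ v`:
    (m' : MonomialOrder {i : Fin (n + 1) // i ≠ v})
    (hm' : ∀ c d : {i : Fin (n + 1) // i ≠ v} →₀ ℕ,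
      m'.toSyn c ≤ m'.toSyn d ↔
        m.toSyn (Finsupp.embDomain (Function.Embedding.subtype fun i => i ≠ v) c) ≤
          m.toSyn (Finsupp.embDomain (Function.Embedding.subtype fun i => i ≠ v) d)) :
    -- the image of `G` is a Gröbner basis of `I' = I/ℓS`:
    ((∀ g ∈ G, substMap v lam g ∈ I.map (substMap v lam)) ∧
      initialIdeal m' (I.map (substMap v lam)) =
        Ideal.span ((fun q => monomial (m'.mdeg q) (1 : K)) ''
          {q | ∃ g ∈ G, q = substMap v lam g ∧ q ≠ 0})) ∧
    -- and `in_{<'}(I') = I_Δ` on the vertex set `{0, …, n} \ {v}`: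
    initialIdeal m' (I.map (substMap v lam)) = srIdealAway K Δ v := by
  classical
  have mdeg' : ∀ q : MvPolynomial {i : Fin (n + 1) // i ≠ v} K, m'.mdeg q = m'.degree q :=
    fun _ => rfl
  set e := Function.Embedding.subtype fun i : Fin (n + 1) => i ≠ v with he
  set φ := substMap v lam with hφ
  let ψ : MvPolynomial (Fin (n + 1)) K →ₐ[K] MvPolynomial (Fin (n + 1)) K :=
    (rename e).comp φ
  have hψ : ∀ f, ψ f = rename e (φ f) := fun _ => rfl
  have hX : ∀ i : {i : Fin (n + 1) // i ≠ v}, φ (X i) = X i := by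
    intro i
    rw [hφ, substMap, aeval_X, dif_neg i.2]
  have h1 : ∀ i, i ≠ v → ψ (X i) = X i := by
    intro i hi
    rw [hψ, hX ⟨i, hi⟩, rename_X]
    rfl
  have hXv : ψ (X v) = - ∑ j : Fin (n + 1), if v < j then C (lam j) * X j else 0 := by
    rw [hψ, hφ, substMap, aeval_X, dif_pos rfl, map_neg, map_sum]
    congr 1
    refine Finset.sum_congr rfl fun j _ => ?_
    split_ifs with h
    · rw [map_mul, rename_C, rename_X]
      rfl
    · exact map_zero _
  have hpos : 0 < m.toSyn (Finsupp.single v 1) := by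
    rw [m.toSyn_lt_iff_ne_zero, Ne, m.toSyn_eq_zero_iff]
    simp
  have h2 : m.toSyn (m.degree (ψ (X v))) < m.toSyn (Finsupp.single v 1) := by
    rw [hXv, m.degree_neg]
    refine lt_of_le_of_lt m.degree_sum_le ?_
    rw [Finset.sup_lt_iff (by simpa using hpos)]
    intro j _
    split_ifs with h
    · rw [C_mul_X_eq_monomial]
      exact lt_of_le_of_lt (m.degree_monomial_le _) (hm v j h)
    · simpa using hpos
  have hsurj : Function.Surjective φ := by
    intro q
    refine ⟨rename e q, ?_⟩
    have : (φ.comp (rename e)) = AlgHom.id K _ := by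
      apply algHom_ext
      intro i
      rw [AlgHom.comp_apply, rename_X]
      exact hX i
    exact DFunLike.congr_fun this q
  have hmod : ∀ f, ψ f - f ∈ I := by
    intro f
    have : (Ideal.Quotient.mkₐ K I).comp ψ = Ideal.Quotient.mkₐ K I := by
      apply algHom_ext
      intro i
      rw [AlgHom.comp_apply]
      by_cases hi : i = v
      · subst hi
        rw [hXv, Ideal.Quotient.mkₐ_eq_mk, Ideal.Quotient.eq, ← neg_mem_iff]
        convert hl using 1
        ring
      · rw [h1 i hi]
    have h := DFunLike.congr_fun this f
    rw [AlgHom.comp_apply, Ideal.Quotient.mkₐ_eq_mk, Ideal.Quotient.eq] at h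
    exact h
  have hren : ∀ q ∈ I.map φ, rename e q ∈ I := by
    intro q hq
    obtain ⟨f, hf, rfl⟩ := (Ideal.mem_map_iff_of_surjective φ hsurj).1 hq
    have := I.add_mem (hmod f) hf
    rwa [sub_add_cancel, hψ] at this
  obtain ⟨hG1, hG0, hG2⟩ := hG
  have hG2' : initialIdeal m I = Ideal.span ((fun s => monomial s (1 : K)) ''
      {c | ∃ g ∈ G, c = m.degree g}) := by
    rw [hG2]
    congr 1
    ext x
    constructor
    · rintro ⟨g, hg, rfl⟩
      exact ⟨_, ⟨g, hg, rfl⟩, rfl⟩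
    · rintro ⟨_, ⟨g, hg, rfl⟩, rfl⟩
      exact ⟨g, hg, rfl⟩
  have hev : ∀ c : {i : Fin (n + 1) // i ≠ v} →₀ ℕ, Finsupp.embDomain e c v = 0 := by
    intro c
    apply Finsupp.embDomain_of_notMem_range
    rintro ⟨i, hi⟩
    exact i.2 hi
  have hB : Ideal.span ((fun q => monomial (m'.mdeg q) (1 : K)) ''
          {q | ∃ g ∈ G, q = φ g ∧ q ≠ 0}) = Ideal.span ((fun s => monomial s (1 : K)) ''
      {c | ∃ g ∈ G, φ g ≠ 0 ∧ c = m'.degree (φ g)}) := by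
    congr 1
    ext x
    constructor
    · rintro ⟨_, ⟨g, hg, rfl, h0⟩, rfl⟩
      exact ⟨_, ⟨g, hg, h0, rfl⟩, rfl⟩
    · rintro ⟨_, ⟨g, hg, h0, rfl⟩, rfl⟩
      exact ⟨_, ⟨g, hg, rfl, h0⟩, rfl⟩
  have hBA : Ideal.span ((fun q => monomial (m'.mdeg q) (1 : K)) ''
          {q | ∃ g ∈ G, q = φ g ∧ q ≠ 0}) ≤ initialIdeal m' (I.map φ) := by
    rw [hB, aux_initial]
    apply aux_span_le
    rintro _ ⟨g, hg, h0, rfl⟩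
    exact ⟨_, ⟨φ g, Ideal.mem_map_of_mem _ (hG1 hg), h0, rfl⟩, le_rfl⟩
  have hAC : initialIdeal m' (I.map φ) ≤ srIdealAway K Δ v := by
    rw [aux_sra, aux_initial]
    apply aux_span_le
    rintro _ ⟨q, hq, h0, rfl⟩
    have hr0 : rename e q ≠ 0 := fun h =>
      h0 (rename_injective e e.injective (by rw [h, map_zero]))
    have hmem : monomial (m.degree (rename e q)) (1 : K) ∈ initialIdeal m I :=
      Ideal.subset_span ⟨_, hren q hq, hr0, rfl⟩
    rw [hin, aux_sr, aux_mem, aux_rename e m m' hm' q h0] at hmem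
    obtain ⟨_, ⟨s, hs, rfl⟩, hle⟩ := hmem
    have hsv : ∀ i ∈ s, i ≠ v := by
      rintro i hi rfl
      have h3 := hle i
      rw [hev, Finsupp.finsetSum_apply] at h3
      have h4 : (Finsupp.single i 1 : Fin (n + 1) →₀ ℕ) i ≤
          ∑ j ∈ s, (Finsupp.single j 1 : Fin (n + 1) →₀ ℕ) i :=
        Finset.single_le_sum (f := fun j => (Finsupp.single j 1 : Fin (n + 1) →₀ ℕ) i)
          (fun _ _ => Nat.zero_le _) hi
      rw [Finsupp.single_eq_same] at h4
      omega
    have hst : (s.subtype fun i => i ≠ v).map e = s :=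
      Finset.subtype_map_of_mem hsv
    refine ⟨_, ⟨s.subtype fun i => i ≠ v, by rw [hst]; exact hs, rfl⟩, aux_le e ?_⟩
    rw [aux_sum, hst]
    exact hle
  have hCB : srIdealAway K Δ v ≤ Ideal.span ((fun q => monomial (m'.mdeg q) (1 : K)) ''
          {q | ∃ g ∈ G, q = φ g ∧ q ≠ 0}) := by
    rw [hB, aux_sra]
    apply aux_span_le
    rintro _ ⟨t, ht, rfl⟩
    have hmem : monomial (∑ i ∈ t.map e, Finsupp.single i 1) (1 : K) ∈ initialIdeal m I := by
      rw [hin, aux_sr, aux_mem]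
      exact ⟨_, ⟨_, ht, rfl⟩, le_rfl⟩
    rw [hG2', aux_mem, ← aux_sum] at hmem
    obtain ⟨_, ⟨g, hg, rfl⟩, hle⟩ := hmem
    have hgv : m.degree g v = 0 := by
      have := hle v
      rw [hev] at this
      omega
    obtain ⟨hne, hdeg⟩ := aux_key m v ψ h1 h2 g (fun h => hG0 (h ▸ hg)) hgv
    have hne' : φ g ≠ 0 := fun h => hne (by rw [hψ, h, map_zero])
    refine ⟨_, ⟨g, hg, hne', rfl⟩, aux_le e ?_⟩
    rw [← aux_rename e m m' hm' _ hne', ← hψ, hdeg]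
    exact hle
  refine ⟨⟨fun g hg => Ideal.mem_map_of_mem _ (hG1 hg), ?_⟩, ?_⟩
  · exact le_antisymm (hAC.trans hCB) hBA
  · exact le_antisymm hAC (hCB.trans hBA)
end
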